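/- Let s ≥ 1 and t ≥ 4 be integers and set n = 3(2^s − 1) + 2^s(2^{t+1} − 1) = 2^{s+t+1} + 2^{s+1} − 3. Then the dimension over F_2 of the subspace of GL_4(F_2)-invariants of Q_n equals 1 if s ∈ {1, 2} and equals 2 if s ≥ 3. -/

import Mathlib

/-!
Common setup: the polynomial algebra `P_4 = F_2[x_1,x_2,x_3,x_4]` (variables `X 0, ..., X 3`),
the Steenrod action, hit polynomials, the cohit spaces `Q_n`, and the (induced) actions of
`GL_4(F_2)` and of the symmetric group `Σ_4` on `Q_n`.
-/

open MvPolynomial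

noncomputable section

abbrev kk : Type := ZMod 2
abbrev P4 : Type := MvPolynomial (Fin 4) kk

/-- The total Steenrod square: the algebra endomorphism of `P4` with `X i ↦ X i + (X i)^2`.
For `g` homogeneous of degree `d`, `Sq^t g` is the degree-`d+t` homogeneous component
of `sqTotal g`. -/
def sqTotal : P4 →ₐ[kk] P4 := aeval fun i => X i + X i ^ 2

/-- The homogeneous polynomials of degree `n`, i.e. `(P_4)_n`, as a submodule. -/
def homog (n : ℕ) : Submodule kk P4 := homogeneousSubmodule (Fin 4) kk n

/-- The subspace `H_n` of hit polynomials of degree `n`: it is spanned by the elements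
`Sq^{n-d}(g) = (sqTotal g)_n` for `g` homogeneous of degree `d < n`, i.e. by all
`∑_{t>0} Sq^t(f_t)` with `f_t ∈ (P_4)_{n-t}`. -/
def hitSub (n : ℕ) : Submodule kk P4 :=
  Submodule.span kk
    {p | ∃ d, d < n ∧ ∃ g ∈ homog d, p = homogeneousComponent n (sqTotal g)}

/-- The cohit space `Q_n = (P_4)_n / H_n`. -/
abbrev Qn (n : ℕ) :=
  ↥(homog n) ⧸ ((hitSub n).comap (homog n).subtype)

/-- Projection of a polynomial onto its degree-`n` part, landing in `homog n`. -/
def toHomog (n : ℕ) : P4 →ₗ[kk] homog n :=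
  (homogeneousComponent n).codRestrict (homog n) fun f => homogeneousComponent_mem n f

/-- The class in `Q_n` of (the degree-`n` component of) a polynomial.  For `f`
homogeneous of degree `n` this is the class `[f]` of `f`. -/
def Qmk (n : ℕ) : P4 →ₗ[kk] Qn n :=
  ((hitSub n).comap (homog n).subtype).mkQ.comp (toHomog n)

/-- Substitution action of a matrix `M`: the algebra endomorphism `X i ↦ ∑ j M i j • X j`. -/
def substM (M : Matrix (Fin 4) (Fin 4) kk) : P4 →ₐ[kk] P4 :=
  aeval fun i => ∑ j, M i j • X j

/-- The set of invertible `4 × 4` matrices over `F_2`, i.e. `GL_4(F_2)`. -/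
def glSet : Set (Matrix (Fin 4) (Fin 4) kk) := {M | IsUnit M}

/-- The set of permutation matrices, i.e. `Σ_4 ⊆ GL_4(F_2)`. -/
def permSet : Set (Matrix (Fin 4) (Fin 4) kk) :=
  {M | ∃ σ : Equiv.Perm (Fin 4), M = σ.toPEquiv.toMatrix}

/-- Homogeneous polynomials of degree `n` whose class in `Q_n` is invariant under every
element of `G` (the action on classes being induced by `substM`): for every `M ∈ G`,
`M·f - f` is hit. -/
def invPre (n : ℕ) (G : Set (Matrix (Fin 4) (Fin 4) kk)) : Submodule kk P4 :=
  homog n ⊓ ⨅ M ∈ G, (hitSub n).comap ((substM M).toLinearMap - LinearMap.id)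

/-- The subspace `(Q_n)^G` of `G`-invariant classes in `Q_n`. -/
def QInv (n : ℕ) (G : Set (Matrix (Fin 4) (Fin 4) kk)) : Submodule kk (Qn n) :=
  (invPre n G).map (Qmk n)

/-- The `Σ_4`-submodule of `Q_n` generated by the classes of the polynomials in `S`:
the span of the classes of all the permuted polynomials `σ · f`, `σ ∈ Σ_4`, `f ∈ S`. -/
def permSpan (n : ℕ) (S : Set P4) : Submodule kk (Qn n) :=
  Submodule.span kk
    {c | ∃ σ : Equiv.Perm (Fin 4), ∃ f ∈ S, c = Qmk n (rename (⇑σ) f)}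


namespace Pf

section generic
variable {ι : Type*}

def SqT : MvPolynomial ι kk →ₐ[kk] Polynomial (MvPolynomial ι kk) :=
  aeval fun i => Polynomial.C (X i) + Polynomial.X * Polynomial.C (X i ^ 2)

def Sq (k : ℕ) : MvPolynomial ι kk →ₗ[kk] MvPolynomial ι kk :=
  ((Polynomial.lcoeff (MvPolynomial ι kk) k).restrictScalars kk).comp SqT.toLinearMap

theorem Sq_def (k : ℕ) (f : MvPolynomial ι kk) : Sq k f = (SqT f).coeff k := rfl

theorem SqT_X (i : ι) : SqT (X i : MvPolynomial ι kk) =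
    Polynomial.C (X i) + Polynomial.X * Polynomial.C (X i ^ 2) := by
  simp [SqT]

theorem two0 : (2 : MvPolynomial ι kk) = 0 := CharTwo.two_eq_zero

theorem Sq_mul (k : ℕ) (f g : MvPolynomial ι kk) :
    Sq k (f * g) = ∑ p ∈ Finset.HasAntidiagonal.antidiagonal k, Sq p.1 f * Sq p.2 g := by
  simp [Sq_def, Polynomial.coeff_mul]

theorem SqT_sq (f : MvPolynomial ι kk) : SqT (f ^ 2) =
    Polynomial.expand _ 2 ((SqT f).map (frobenius _ 2)) := by
  rw [map_pow, ← Polynomial.map_frobenius_expand 2 (SqT f), Polynomial.map_expand]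

theorem Sq_sq_even (k : ℕ) (f : MvPolynomial ι kk) : Sq (2 * k) (f ^ 2) = (Sq k f) ^ 2 := by
  rw [Sq_def, SqT_sq, mul_comm, Polynomial.coeff_expand_mul (by norm_num)]
  simp [Sq_def, frobenius_def]

theorem Sq_sq_odd (k : ℕ) (f : MvPolynomial ι kk) : Sq (2 * k + 1) (f ^ 2) = 0 := by
  rw [Sq_def, SqT_sq, Polynomial.coeff_expand (by norm_num), if_neg (by omega)]

theorem Sq_zero (f : MvPolynomial ι kk) : Sq 0 f = f := by
  have h : ((Polynomial.aeval (0 : MvPolynomial ι kk)).restrictScalars kk).comp (SqT (ι := ι)) = AlgHom.id kk _ := by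
    ext i : 1
    simp [SqT_X]
  have := congrArg (fun φ => φ f) h
  simpa [Sq_def, Polynomial.coeff_zero_eq_aeval_zero] using this

theorem Sq_X_one (i : ι) : Sq 1 (X i : MvPolynomial ι kk) = X i ^ 2 := by
  simp [Sq_def, SqT_X, Polynomial.coeff_C, -map_pow]

theorem Sq_X_ge (i : ι) (k : ℕ) (h : 2 ≤ k) : Sq k (X i : MvPolynomial ι kk) = 0 := by
  obtain ⟨j, rfl⟩ : ∃ j, k = j + 2 := ⟨k - 2, by omega⟩
  simp [Sq_def, SqT_X, Polynomial.coeff_C, -map_pow]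

/-- Leibniz rule. -/
theorem D_mul (f g : MvPolynomial ι kk) : Sq 1 (f * g) = Sq 1 f * g + f * Sq 1 g := by
  rw [Sq_mul]
  simp [Finset.Nat.antidiagonal_succ, Sq_zero, add_comm]

theorem D_sq (f : MvPolynomial ι kk) : Sq 1 (f ^ 2) = 0 := Sq_sq_odd 0 f

theorem D_pow_even (f : MvPolynomial ι kk) (m : ℕ) : Sq 1 (f ^ (2 * m)) = 0 := by
  rw [mul_comm, pow_mul]; exact D_sq _

theorem D_mul_sq (f g : MvPolynomial ι kk) : Sq 1 (f * g ^ 2) = Sq 1 f * g ^ 2 := by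
  rw [D_mul, D_sq, mul_zero, add_zero]

theorem Sq_X_mul (k : ℕ) (i : ι) (f : MvPolynomial ι kk) :
    Sq (k + 1) (X i * f) = X i * Sq (k + 1) f + X i ^ 2 * Sq k f := by
  have : SqT (X i * f) = Polynomial.C (X i) * SqT f + Polynomial.X * (Polynomial.C (X i ^ 2) * SqT f) := by
    rw [map_mul, SqT_X]; ring
  simp only [Sq_def, this, Polynomial.coeff_add, Polynomial.coeff_X_mul, Polynomial.coeff_C_mul]

theorem SqT_mul_sq_coeff (k : ℕ) (i : ι) (g : MvPolynomial ι kk) (hk : 1 ≤ k) :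
    Sq (2 * k) (X i * g ^ 2) = X i * (Sq k g) ^ 2 := by
  obtain ⟨j, rfl⟩ : ∃ j, k = j + 1 := ⟨k - 1, by omega⟩
  have e : 2 * (j + 1) = (2 * j + 1) + 1 := by ring
  rw [e, Sq_X_mul, ← e, Sq_sq_even, Sq_sq_odd]; simp

/-- homogeneity and the top square -/
def Nice (d : ℕ) (f : MvPolynomial ι kk) : Prop :=
  (∀ k, Sq k f ∈ homogeneousSubmodule ι kk (d + k)) ∧ (SqT f).natDegree ≤ d ∧ Sq d f = f ^ 2

theorem Nice.mul {d e : ℕ} {f g : MvPolynomial ι kk} (hf : Nice d f) (hg : Nice e g) :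
    Nice (d + e) (f * g) := by
  refine ⟨fun k => ?_, ?_, ?_⟩
  · rw [Sq_mul]
    refine Submodule.sum_mem _ fun p hp => ?_
    have hp' := Finset.HasAntidiagonal.mem_antidiagonal.1 hp
    have h1 := hf.1 p.1
    have h2 := hg.1 p.2
    have : d + e + k = (d + p.1) + (e + p.2) := by omega
    rw [this]
    exact IsHomogeneous.mul h1 h2
  · rw [map_mul]; exact Polynomial.natDegree_mul_le_of_le hf.2.1 hg.2.1
  · rw [Sq_def, map_mul, Polynomial.coeff_mul_add_eq_of_natDegree_le hf.2.1 hg.2.1]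
    have h1 := hf.2.2; have h2 := hg.2.2
    rw [Sq_def] at h1 h2
    rw [h1, h2, mul_pow]

theorem Nice.add {d : ℕ} {f g : MvPolynomial ι kk} (hf : Nice d f) (hg : Nice d g) :
    Nice d (f + g) := by
  refine ⟨fun k => ?_, ?_, ?_⟩
  · rw [map_add]; exact Submodule.add_mem _ (hf.1 k) (hg.1 k)
  · rw [map_add]; exact Polynomial.natDegree_add_le_of_degree_le hf.2.1 hg.2.1
  · rw [map_add, hf.2.2, hg.2.2, CharTwo.add_sq]

theorem Nice.zero (d : ℕ) : Nice d (0 : MvPolynomial ι kk) := by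
  refine ⟨fun k => ?_, ?_, ?_⟩ <;> simp

theorem Nice.C (c : kk) : Nice 0 (C c : MvPolynomial ι kk) := by
  have h : SqT (MvPolynomial.C c : MvPolynomial ι kk) = Polynomial.C (MvPolynomial.C c) := by
    rw [← MvPolynomial.algebraMap_eq, AlgHom.commutes]; rfl
  refine ⟨fun k => ?_, ?_, ?_⟩
  · rw [Sq_def, h, Polynomial.coeff_C]
    split_ifs with hk
    · subst hk; simpa using isHomogeneous_C ι c
    · exact Submodule.zero_mem _
  · rw [h]; simp
  · rw [Sq_zero, ← map_pow]
    congr 1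
    clear h; revert c; decide

theorem Nice.X (i : ι) : Nice 1 (X i : MvPolynomial ι kk) := by
  refine ⟨fun k => ?_, ?_, Sq_X_one i⟩
  · rcases k with _ | _ | k
    · rw [Sq_zero]; exact isHomogeneous_X kk i
    · simpa [Sq_X_one] using isHomogeneous_X_pow (R := kk) i 2
    · rw [Sq_X_ge _ _ (by omega)]; exact Submodule.zero_mem _
  · rw [SqT_X]
    compute_degree

theorem Nice.monomial (m : ι →₀ ℕ) (c : kk) : Nice m.degree (monomial m c) := by
  induction m using Finsupp.induction_linear generalizing c with
  | zero => simpa using Nice.C c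
  | add f g hf hg =>
    have h : MvPolynomial.monomial (f + g) c = MvPolynomial.monomial f c * MvPolynomial.monomial g 1 := by
      rw [monomial_mul, mul_one]
    rw [h]
    simpa using (hf c).mul (hg 1)
  | single i n =>
    have h : MvPolynomial.monomial (Finsupp.single i n) c = MvPolynomial.C c * MvPolynomial.X i ^ n := by
      rw [C_mul_X_pow_eq_monomial]
    have h2 : ∀ n, Nice n ((MvPolynomial.X i : MvPolynomial ι kk) ^ n) := by
      intro n
      induction n with
      | zero => simpa using Nice.C (ι := ι) 1
      | succ n ih => rw [pow_succ]; exact ih.mul (Nice.X i)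
    rw [h]
    simpa using (Nice.C c).mul (h2 n)

theorem nice_of_homog {d : ℕ} {f : MvPolynomial ι kk} (hf : f ∈ homogeneousSubmodule ι kk d) : Nice d f := by
  rw [f.as_sum]
  refine Finset.sum_induction _ (Nice d) (fun _ _ => Nice.add) (Nice.zero d) fun m hm => ?_
  have := hf (mem_support_iff.1 hm)
  have e : m.degree = d := by
    rw [← this, Finsupp.degree_eq_weight_one]; rfl
  rw [← e]; exact Nice.monomial m _

end generic
end Pf

namespace Pf

abbrev x (i : Fin 4) : P4 := X i

theorem kk01 (c : kk) : c = 0 ∨ c = 1 := by revert c; decide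

theorem add_self0 (f : P4) : f + f = 0 := CharTwo.add_self_eq_zero f

/-- membership from a sum -/
theorem mem_of_add {W : Submodule kk P4} {a b : P4} (h : a + b ∈ W) (hb : b ∈ W) : a ∈ W := by
  have := W.sub_mem h hb
  simpa using this

theorem mem_add_iff {W : Submodule kk P4} {a b : P4} (h : a + b ∈ W) : a ∈ W ↔ b ∈ W :=
  ⟨fun ha => mem_of_add (by rwa [add_comm]) ha, fun hb => mem_of_add h hb⟩

/-- build a submodule from an additive predicate -/
def mkSub (p : P4 → Prop) (h0 : p 0) (ha : ∀ f g, p f → p g → p (f + g)) : Submodule kk P4 where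
  carrier := {f | p f}
  zero_mem' := h0
  add_mem' := fun {f g} hf hg => ha f g hf hg
  smul_mem' := fun c f hf => by
    rcases kk01 c with rfl | rfl
    · simpa using h0
    · simpa using hf

theorem add_sq' (f g : P4) : (f + g) ^ 2 = f ^ 2 + g ^ 2 := CharTwo.add_sq f g

/-- The linear map `f ↦ a f^2`. -/
def mulSq (a : P4) : P4 →ₗ[kk] P4 where
  toFun f := a * f ^ 2
  map_add' f g := by rw [add_sq', mul_add]
  map_smul' c f := by
    rcases kk01 c with rfl | rfl <;> simp

theorem mulSq_apply (a f : P4) : mulSq a f = a * f ^ 2 := rfl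

/-- total hit submodule -/
def Hit : Submodule kk P4 :=
  Submodule.span kk {p | ∃ k d g, 1 ≤ k ∧ g ∈ homog d ∧ p = Sq k g}

theorem eq_sum_homog (f : P4) : f = ∑ d ∈ Finset.range (f.totalDegree + 1), homogeneousComponent d f :=
  (sum_homogeneousComponent f).symm

theorem comp_mem (d : ℕ) (f : P4) : homogeneousComponent d f ∈ homog d :=
  homogeneousComponent_mem d f

/-- induction through homogeneous components -/
theorem homog_ind {p : P4 → Prop} (h0 : p 0) (ha : ∀ f g, p f → p g → p (f + g))
    (h : ∀ d, ∀ f ∈ homog d, p f) (f : P4) : p f := by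
  rw [eq_sum_homog f]
  exact Finset.sum_induction _ p ha h0 fun d _ => h d _ (comp_mem d f)

theorem Sq_mem_Hit (k : ℕ) (hk : 1 ≤ k) (g : P4) : Sq k g ∈ Hit := by
  refine homog_ind (p := fun g => Sq k g ∈ Hit) (by simp) (fun f g hf hg => ?_) (fun d f hf => ?_) g
  · rw [map_add]; exact Submodule.add_mem _ hf hg
  · exact Submodule.subset_span ⟨k, d, f, hk, hf, rfl⟩

theorem D_mem_Hit (g : P4) : Sq 1 g ∈ Hit := Sq_mem_Hit 1 le_rfl g

/-- induction principle for Hit -/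
theorem Hit_le {W : Submodule kk P4} (h : ∀ k d, 1 ≤ k → ∀ g ∈ homog d, Sq k g ∈ W) : Hit ≤ W := by
  refine Submodule.span_le.2 ?_
  rintro _ ⟨k, d, g, hk, hg, rfl⟩
  exact h k d hk g hg

theorem Hit_map {φ : P4 →ₗ[kk] P4} {W : Submodule kk P4}
    (h : ∀ k d, 1 ≤ k → ∀ g ∈ homog d, φ (Sq k g) ∈ W) {f : P4} (hf : f ∈ Hit) : φ f ∈ W := by
  have : Hit ≤ W.comap φ := Hit_le h
  exact this hf

theorem F1 (i : Fin 4) {f : P4} (hf : f ∈ Hit) : x i * f ^ 2 ∈ Hit := by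
  refine Hit_map (φ := mulSq (x i)) (fun k d hk g _ => ?_) hf
  rw [mulSq_apply, ← SqT_mul_sq_coeff k i g hk]
  exact Sq_mem_Hit _ (by omega) _

theorem Sq_xx (k : ℕ) (i j : Fin 4) (g : P4) (hk : 1 ≤ k) :
    Sq (2 * k) (x i * (x j * g ^ 2)) = x i * x j * (Sq k g) ^ 2 + (x i * (x j * Sq (k - 1) g)) ^ 2 := by
  obtain ⟨l, rfl⟩ : ∃ j, k = j + 1 := ⟨k - 1, by omega⟩
  have e : 2 * (l + 1) = (2 * l + 1) + 1 := by ring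
  rw [e, Sq_X_mul, ← e, SqT_mul_sq_coeff _ _ _ (by omega), Sq_X_mul, Sq_sq_odd, Sq_sq_even]
  simp; ring

theorem sqx_mem (i : Fin 4) (f : P4) : (x i * f) ^ 2 ∈ Hit := by
  have : Sq 1 (x i * f ^ 2) = (x i * f) ^ 2 := by
    rw [D_mul_sq, Sq_X_one]; ring
  rw [← this]; exact D_mem_Hit _

theorem F2 (i j : Fin 4) {f : P4} (hf : f ∈ Hit) : x i * x j * f ^ 2 ∈ Hit := by
  refine Hit_map (φ := mulSq (x i * x j)) (fun k d hk g _ => ?_) hf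
  rw [mulSq_apply]
  refine mem_of_add (b := (x i * (x j * Sq (k - 1) g)) ^ 2) ?_ (sqx_mem _ _)
  rw [← Sq_xx k i j g hk]
  exact Sq_mem_Hit _ (by omega) _

theorem Sq_xxx (k : ℕ) (p q r : Fin 4) (g : P4) (hk : 1 ≤ k) :
    Sq (2 * k) (x p * (x q * (x r * g ^ 2))) = x p * x q * x r * (Sq k g) ^ 2 +
     (x p * (x q * x r * Sq (k-1) g) ^ 2 + x q * (x p * x r * Sq (k-1) g) ^ 2
       + x r * (x p * x q * Sq (k-1) g) ^ 2) := by
  obtain ⟨l, rfl⟩ : ∃ j, k = j + 1 := ⟨k - 1, by omega⟩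
  have e : 2 * (l + 1) = (2 * l + 1) + 1 := by ring
  rw [e, Sq_X_mul, ← e, Sq_xx _ _ _ _ (by omega), Sq_X_mul, Sq_X_mul (2 * l), Sq_sq_odd, Sq_sq_even]
  rcases l with _ | l
  · simp [Sq_zero]; ring
  · rw [SqT_mul_sq_coeff _ _ _ (by omega)]
    simp; ring

/-- Odd/even parts -/
def Od : Submodule kk P4 := mkSub (fun f => ∀ d, Even d → homogeneousComponent d f = 0)
  (by simp) (fun f g hf hg d hd => by simp [hf d hd, hg d hd])

theorem mem_Od {f : P4} : f ∈ Od ↔ ∀ d, Even d → homogeneousComponent d f = 0 := Iff.rfl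

theorem comp_homog {d e : ℕ} {f : P4} (hf : f ∈ homog d) :
    homogeneousComponent e f = if e = d then f else 0 := homogeneousComponent_of_mem hf

theorem mul_homog {d e : ℕ} {f g : P4} (hf : f ∈ homog d) (hg : g ∈ homog e) : f * g ∈ homog (d + e) :=
  IsHomogeneous.mul hf hg

theorem x_homog (i : Fin 4) : x i ∈ homog 1 := isHomogeneous_X kk i

theorem sq_homog {d : ℕ} {f : P4} (hf : f ∈ homog d) : f ^ 2 ∈ homog (2 * d) := by
  rw [mul_comm]; exact IsHomogeneous.pow hf 2

theorem Sq_homog {d : ℕ} {f : P4} (k : ℕ) (hf : f ∈ homog d) : Sq k f ∈ homog (d + k) :=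
  (nice_of_homog hf).1 k

theorem Sq_top {d : ℕ} {f : P4} (hf : f ∈ homog d) : Sq d f = f ^ 2 := (nice_of_homog hf).2.2

theorem Sq_gt {d k : ℕ} {f : P4} (hf : f ∈ homog d) (h : d < k) : Sq k f = 0 :=
  Polynomial.coeff_eq_zero_of_natDegree_lt ((nice_of_homog hf).2.1.trans_lt h)

theorem comp_mulSq {c : ℕ} {a : P4} (ha : a ∈ homog c) (d : ℕ) (f : P4) :
    homogeneousComponent (2 * d + c) (a * f ^ 2) = a * (homogeneousComponent d f) ^ 2 := by
  refine homog_ind (p := fun f => homogeneousComponent (2 * d + c) (a * f ^ 2) = a * (homogeneousComponent d f) ^ 2)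
    (by simp) (fun f g hf hg => ?_) (fun e f hf => ?_) f
  · rw [add_sq', mul_add, map_add, hf, hg, map_add, add_sq', mul_add]
  · rw [comp_homog (mul_homog ha (sq_homog hf)), comp_homog hf]
    by_cases h : d = e
    · subst h; rw [if_pos (by ring), if_pos rfl]
    · rw [if_neg (by omega), if_neg h]; simp

theorem comp_mulSq_odd {c n : ℕ} {a : P4} (ha : a ∈ homog c) (h : ∀ d, n ≠ 2 * d + c) (f : P4) :
    homogeneousComponent n (a * f ^ 2) = 0 := by
  refine homog_ind (p := fun f => homogeneousComponent n (a * f ^ 2) = 0)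
    (by simp) (fun f g hf hg => ?_) (fun e f hf => ?_) f
  · rw [add_sq', mul_add, map_add, hf, hg, add_zero]
  · rw [comp_homog (mul_homog ha (sq_homog hf)), if_neg]
    have := h e; omega

/-- F4 for homogeneous elements -/
theorem F4 (i : Fin 4) {k : ℕ} {y : P4} (hy : y ∈ homog k) (h0 : 0 < k) (he : Even k) :
    x i * y ^ 2 ∈ Hit := by
  have hpow : ∀ j, ∀ m, 0 < m → Sq m (x i ^ 2 ^ j) = if m = 2 ^ j then x i ^ 2 ^ (j + 1) else 0 := by
    intro j
    induction j with
    | zero =>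
      intro m hm
      rcases m with _ | _ | m
      · omega
      · simp [Sq_X_one]
      · simp [Sq_X_ge]
    | succ j ih =>
      intro m hm
      rcases Nat.even_or_odd' m with ⟨c, rfl | rfl⟩
      · rw [pow_succ, pow_mul, Sq_sq_even, ih c (by omega)]
        by_cases hc : c = 2 ^ j
        · rw [if_pos hc, if_pos (by omega), pow_succ 2 (j+1), pow_mul]
        · rw [if_neg hc, if_neg (by omega)]; simp
      · rw [pow_succ, pow_mul, Sq_sq_odd, if_neg (by omega)]
  have key : ∀ j, ∀ m, 2 ^ j ≤ m → Sq m (x i ^ 2 ^ j * y) = x i ^ 2 ^ j * Sq m y +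
      x i ^ 2 ^ (j + 1) * Sq (m - 2 ^ j) y := by
    intro j m hm
    have h2 : 0 < 2 ^ j := by positivity
    rw [Sq_mul]
    rw [← Finset.sum_subset (s₁ := {(0, m), (2 ^ j, m - 2 ^ j)})]
    · rw [Finset.sum_pair (by intro h; simp only [Prod.mk.injEq] at h; omega)]
      rw [Sq_zero, hpow j _ h2, if_pos rfl]
    · intro p hp
      simp only [Finset.mem_insert, Finset.mem_singleton] at hp
      rw [Finset.HasAntidiagonal.mem_antidiagonal]
      rcases hp with rfl | rfl <;> simp <;> omega
    · intro p hp hn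
      rw [Finset.HasAntidiagonal.mem_antidiagonal] at hp
      rcases p with ⟨a, b⟩
      simp only at hp
      simp only [Finset.mem_insert, Finset.mem_singleton, Prod.mk.injEq] at hn
      rw [hpow j a (by by_contra h; apply hn; left; omega), if_neg, zero_mul]
      intro h; apply hn; right; omega
  have step : ∀ j, 2 ^ (j+1) ≤ k + 1 → x i * y ^ 2 + x i ^ 2 ^ (j + 1) * Sq (k + 1 - 2 ^ (j + 1)) y ∈ Hit := by
    intro j
    induction j with
    | zero =>
      intro _
      have h := key 0 k (by simp; omega)
      rw [Sq_top hy] at h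
      have h2 := Sq_mem_Hit k (by omega) (x i ^ 2 ^ 0 * y)
      rw [h] at h2
      simpa using h2
    | succ j ih =>
      intro hj
      have h1 := ih (by rw [pow_succ] at hj; omega)
      have e : (2:ℕ) ^ (j + 1 + 1) = 2 ^ (j + 1) + 2 ^ (j + 1) := by ring
      have h := key (j + 1) (k + 1 - 2 ^ (j + 1)) (by omega)
      have h2 := Sq_mem_Hit (k + 1 - 2 ^ (j + 1)) (by omega) (x i ^ 2 ^ (j + 1) * y)
      rw [h] at h2
      have h3 := Submodule.add_mem _ h1 h2
      have e2 : k + 1 - 2 ^ (j + 1) - 2 ^ (j + 1) = k + 1 - 2 ^ (j + 1 + 1) := by omega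
      rw [e2] at h3
      convert h3 using 1
      linear_combination (- x i ^ 2 ^ (j + 1) * Sq (k + 1 - 2 ^ (j + 1)) y) * (two0 (ι := Fin 4))
  obtain ⟨j, hj1, hj2⟩ : ∃ j, 2 ^ (j+1) ≤ k + 1 ∧ k + 1 < 2 ^ (j + 2) := by
    refine ⟨Nat.log 2 (k + 1) - 1, ?_, ?_⟩
    · have : 1 ≤ Nat.log 2 (k + 1) := Nat.log_pos (by norm_num) (by omega)
      rw [Nat.sub_add_cancel this]; exact Nat.pow_log_le_self 2 (by omega)
    · have : 1 ≤ Nat.log 2 (k + 1) := Nat.log_pos (by norm_num) (by omega)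
      have e : Nat.log 2 (k + 1) - 1 + 2 = Nat.log 2 (k+1) + 1 := by omega
      rw [e]; exact Nat.lt_pow_succ_log_self (by norm_num) _
  have h1 := step j hj1
  refine mem_of_add h1 ?_
  have hne : k + 1 ≠ 2 ^ (j + 1) := by
    intro h
    have : Even (k + 1) := by rw [h, pow_succ]; exact even_two.mul_left _
    rw [Nat.even_add_one] at this; exact this he
  have e : (2:ℕ) ^ (j + 2) = 2 ^ (j + 1) + 2 ^ (j + 1) := by ring
  have h := key (j + 1) (k + 1 - 2 ^ (j + 1))
  have h2 := Sq_mem_Hit (k + 1 - 2 ^ (j + 1)) (by omega) (x i ^ 2 ^ (j + 1) * y)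
  have : Sq (k + 1 - 2 ^ (j + 1)) (x i ^ 2 ^ (j + 1) * y) = x i ^ 2 ^ (j + 1) * Sq (k + 1 - 2 ^ (j + 1)) y := by
    rw [Sq_mul, Finset.sum_eq_single (0, k + 1 - 2 ^ (j + 1))]
    · rw [Sq_zero]
    · rintro ⟨a, b⟩ hp hn
      rw [Finset.HasAntidiagonal.mem_antidiagonal] at hp
      simp only at hp
      rw [hpow (j+1) a (by
        by_contra h; apply hn; ext <;> simp <;> omega), if_neg (by omega), zero_mul]
    · intro h; exact absurd (by rw [Finset.HasAntidiagonal.mem_antidiagonal]; simp) h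
  rwa [this] at h2

end Pf

namespace Pf

def hat (i : Fin 4) : P4 := ∏ j ∈ Finset.univ.erase i, x j

def Dist (i j k l : Fin 4) : Prop := i ≠ j ∧ i ≠ k ∧ i ≠ l ∧ j ≠ k ∧ j ≠ l ∧ k ≠ l

instance (i j k l : Fin 4) : Decidable (Dist i j k l) := by unfold Dist; infer_instance

theorem Dist.rot {i j k l : Fin 4} (h : Dist i j k l) : Dist j k l i := by
  unfold Dist at *; tauto
theorem Dist.sw {i j k l : Fin 4} (h : Dist i j k l) : Dist j i k l := by
  unfold Dist at *; tauto

theorem Dist.p3 {i j k l : Fin 4} (h : Dist i j k l) : Dist k i j l := by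
  unfold Dist at *; tauto
theorem Dist.p4 {i j k l : Fin 4} (h : Dist i j k l) : Dist l i j k := by
  unfold Dist at *; tauto

theorem dist1 (i : Fin 4) : ∃ j k l, Dist i j k l := by revert i; decide
theorem dist2 {i j : Fin 4} (h : i ≠ j) : ∃ k l, Dist i j k l := by revert i j; decide
theorem dist3 {i j k : Fin 4} (h : i ≠ j) (h1 : i ≠ k) (h2 : j ≠ k) : ∃ l, Dist i j k l := by
  revert i j k; decide

theorem erase_eq {i j k l : Fin 4} (h : Dist i j k l) : Finset.univ.erase i = {j, k, l} := by
  revert i j k l; decide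
theorem univ_eq {i j k l : Fin 4} (h : Dist i j k l) : Finset.univ = {i, j, k, l} := by
  revert i j k l; decide

theorem hat_eq {i j k l : Fin 4} (h : Dist i j k l) : hat i = x j * x k * x l := by
  rw [hat, erase_eq h]
  obtain ⟨h1, h2, h3, h4, h5, h6⟩ := h
  rw [Finset.prod_insert (by simp [h4, h5]), Finset.prod_insert (by simp [h6])]
  simp [mul_assoc]

theorem sum_eq {M : Type*} [AddCommMonoid M] {i j k l : Fin 4} (h : Dist i j k l) (F : Fin 4 → M) :
    ∑ a, F a = F i + F j + F k + F l := by
  rw [univ_eq h]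
  obtain ⟨h1, h2, h3, h4, h5, h6⟩ := h
  rw [Finset.sum_insert (by simp [h1, h2, h3]), Finset.sum_insert (by simp [h4, h5]), Finset.sum_insert (by simp [h6])]
  simp [add_assoc]

theorem hat_homog (i : Fin 4) : hat i ∈ homog 3 := by
  obtain ⟨j, k, l, h⟩ := dist1 i
  rw [hat_eq h]
  exact mul_homog (mul_homog (x_homog _) (x_homog _)) (x_homog _)

theorem od_x (i : Fin 4) (f : P4) : x i * f ^ 2 ∈ Od :=
  mem_Od.2 fun d hd => comp_mulSq_odd (x_homog i) (fun e => by rcases hd with ⟨c, rfl⟩; omega) f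

theorem od_hat (i : Fin 4) (f : P4) : hat i * f ^ 2 ∈ Od :=
  mem_Od.2 fun d hd => comp_mulSq_odd (hat_homog i) (fun e => by rcases hd with ⟨c, rfl⟩; omega) f

/-- odd part -/
def po : P4 →ₗ[kk] P4 where
  toFun f := ∑ d ∈ Finset.range (f.totalDegree + 1), if Odd d then homogeneousComponent d f else 0
  map_add' f g := by
    have key : ∀ f : P4, ∀ N, f.totalDegree + 1 ≤ N →
        (∑ d ∈ Finset.range (f.totalDegree + 1), if Odd d then homogeneousComponent d f else 0) =
        ∑ d ∈ Finset.range N, if Odd d then homogeneousComponent d f else 0 := by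
      intro f N hN
      apply Finset.sum_subset (by simpa using hN)
      intro d _ hd
      rw [homogeneousComponent_eq_zero d f (by simp at hd; omega)]; simp
    set N := f.totalDegree + g.totalDegree + (f + g).totalDegree + 1
    rw [key f N (by omega), key g N (by omega), key (f + g) N (by omega), ← Finset.sum_add_distrib]
    apply Finset.sum_congr rfl
    intro d _
    split_ifs <;> simp
  map_smul' c f := by
    rcases kk01 c with rfl | rfl <;> simp

theorem po_homog {d : ℕ} {f : P4} (hf : f ∈ homog d) : po f = if Odd d then f else 0 := by
  change (∑ d ∈ Finset.range (f.totalDegree + 1), if Odd d then homogeneousComponent d f else 0) = _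
  by_cases h0 : f = 0
  · subst h0; simp
  have ht : f.totalDegree = d := IsHomogeneous.totalDegree hf h0
  rw [Finset.sum_eq_single d]
  · rw [comp_homog hf, if_pos rfl]
  · intro e _ he; rw [comp_homog hf, if_neg he]; simp
  · intro h; simp [ht] at h

theorem po_od {f : P4} (hf : f ∈ Od) : po f = f := by
  conv_rhs => rw [eq_sum_homog f]
  change (∑ d ∈ Finset.range (f.totalDegree + 1), if Odd d then homogeneousComponent d f else 0) = _
  apply Finset.sum_congr rfl
  intro d _
  split_ifs with h
  · rfl
  · rw [hf d (Nat.not_odd_iff_even.1 h)]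

theorem F4' (i j : Fin 4) {z : P4} (hz : z ∈ Od) : x j * (x i * z) ^ 2 ∈ Hit := by
  rw [← po_od hz]
  refine homog_ind (p := fun z => x j * (x i * po z) ^ 2 ∈ Hit) (by simp) (fun f g hf hg => ?_) (fun e f hf => ?_) z
  · rw [map_add, mul_add, add_sq', mul_add]; exact Submodule.add_mem _ hf hg
  · rw [po_homog hf]
    split_ifs with h
    · exact F4 j (mul_homog (x_homog i) hf) (by omega) (by rw [add_comm]; exact h.add_one)
    · simp

def HitO : Submodule kk P4 := Hit ⊓ Od

theorem HitO_hit {f : P4} (h : f ∈ HitO) : f ∈ Hit := h.1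

theorem F1o (i : Fin 4) {f : P4} (hf : f ∈ HitO) : x i * f ^ 2 ∈ HitO := ⟨F1 i hf.1, od_x _ _⟩

theorem F3a (i : Fin 4) {k : ℕ} (hk : 1 ≤ k) (g : P4) {W : Submodule kk P4} (hW : Hit ≤ W)
    (h : ∀ p q r, x p * (x q * x r * Sq (k - 1) g) ^ 2 ∈ W) : hat i * (Sq k g) ^ 2 ∈ W := by
  obtain ⟨p, q, r, hd⟩ := dist1 i
  rw [hat_eq hd]
  refine mem_of_add (b := _) (Sq_xxx k p q r g hk ▸ hW (Sq_mem_Hit (2 * k) (by omega) _)) ?_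
  exact W.add_mem (W.add_mem (h _ _ _) (h _ _ _)) (h _ _ _)

theorem F3b (i : Fin 4) {f : P4} (hf : f ∈ HitO) : hat i * f ^ 2 ∈ HitO := by
  refine ⟨?_, od_hat _ _⟩
  rw [← po_od hf.2]
  refine Hit_map (φ := (mulSq (hat i)).comp po) (fun k d hk g hg => ?_) hf.1
  simp only [LinearMap.comp_apply, mulSq_apply]
  rw [po_homog (Sq_homog k hg)]
  split_ifs with h
  · refine F3a i hk g le_rfl fun p q r => ?_
    refine F4 p (mul_homog (mul_homog (x_homog q) (x_homog r)) (Sq_homog (k-1) hg)) (by omega) ?_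
    rw [← Nat.not_odd_iff_even]
    intro h2
    rcases h with ⟨a, ha⟩; rcases h2 with ⟨b, hb⟩; omega
  · simp

inductive IsLow : P4 → Prop
  | hit {f} : f ∈ Hit → IsLow f
  | xs (p) (y : P4) : IsLow (x p * y ^ 2)
  | add {f g} : IsLow f → IsLow g → IsLow (f + g)
  | hat (i) {f} : IsLow f → IsLow (hat i * f ^ 2)

def Low : Submodule kk P4 := mkSub IsLow (.hit (Submodule.zero_mem _)) fun _ _ => .add

theorem Hit_Low : Hit ≤ Low := fun _ h => IsLow.hit h
theorem x_Low (p : Fin 4) (y : P4) : x p * y ^ 2 ∈ Low := IsLow.xs p y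
theorem hat_Low (i : Fin 4) {f : P4} (h : f ∈ Low) : hat i * f ^ 2 ∈ Low := IsLow.hat i h

/-- words -/
def w1 (L : List (Fin 4)) (g : P4) : P4 := L.foldr (fun i f => x i * f ^ 2) g
def w3 (L : List (Fin 4)) (g : P4) : P4 := L.foldr (fun i f => hat i * f ^ 2) g
def w2 (L : List (Fin 4 × Fin 4)) (g : P4) : P4 := L.foldr (fun i f => x i.1 * x i.2 * f ^ 2) g

@[simp] theorem w1_nil (g) : w1 [] g = g := rfl
@[simp] theorem w2_nil (g) : w2 [] g = g := rfl
@[simp] theorem w3_nil (g) : w3 [] g = g := rfl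
theorem w1_cons (i L g) : w1 (i :: L) g = x i * (w1 L g) ^ 2 := rfl
theorem w2_cons (i L g) : w2 (i :: L) g = x i.1 * x i.2 * (w2 L g) ^ 2 := rfl
theorem w3_cons (i L g) : w3 (i :: L) g = hat i * (w3 L g) ^ 2 := rfl
theorem w1_append (L M g) : w1 (L ++ M) g = w1 L (w1 M g) := by simp [w1]
theorem w2_append (L M g) : w2 (L ++ M) g = w2 L (w2 M g) := by simp [w2]
theorem w3_append (L M g) : w3 (L ++ M) g = w3 L (w3 M g) := by simp [w3]
theorem w1_add (L f g) : w1 L (f + g) = w1 L f + w1 L g := by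
  induction L with
  | nil => rfl
  | cons i L ih => simp only [w1_cons, ih, add_sq', mul_add]
theorem w2_add (L f g) : w2 L (f + g) = w2 L f + w2 L g := by
  induction L with
  | nil => rfl
  | cons i L ih => simp only [w2_cons, ih, add_sq', mul_add]
theorem w3_add (L f g) : w3 L (f + g) = w3 L f + w3 L g := by
  induction L with
  | nil => rfl
  | cons i L ih => simp only [w3_cons, ih, add_sq', mul_add]

theorem w1_hit (L) {g} (h : g ∈ Hit) : w1 L g ∈ Hit := by
  induction L with
  | nil => exact h
  | cons i L ih => exact F1 i ih
theorem w1_hitO (L) {g} (h : g ∈ HitO) : w1 L g ∈ HitO := by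
  induction L with
  | nil => exact h
  | cons i L ih => exact F1o i ih
theorem w2_hit (L) {g} (h : g ∈ Hit) : w2 L g ∈ Hit := by
  induction L with
  | nil => exact h
  | cons i L ih => exact F2 _ _ ih
theorem w3_hitO (L) {g} (h : g ∈ HitO) : w3 L g ∈ HitO := by
  induction L with
  | nil => exact h
  | cons i L ih => exact F3b i ih
theorem w3_low (L) {g} (h : g ∈ Low) : w3 L g ∈ Low := by
  induction L with
  | nil => exact h
  | cons i L ih => exact hat_Low i ih

theorem one_homog : (1 : P4) ∈ homog 0 := isHomogeneous_one _ _

theorem X_pow_split (i : Fin 4) (e : ℕ) : x i ^ e = x i ^ (e % 2) * (x i ^ (e / 2)) ^ 2 := by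
  rw [← pow_mul, ← pow_add]
  congr 1; omega

theorem x_pow_homog (i : Fin 4) (e : ℕ) : x i ^ e ∈ homog e := isHomogeneous_X_pow i e

theorem homog_le {n : ℕ} {W : Submodule kk P4}
    (h : ∀ a b c d : ℕ, a + b + c + d = n → x 0 ^ a * x 1 ^ b * x 2 ^ c * x 3 ^ d ∈ W) : homog n ≤ W := by
  intro f hf
  rw [f.as_sum]
  refine Submodule.sum_mem _ fun m hm => ?_
  have hd := hf (mem_support_iff.1 hm)
  have hdeg : m.degree = n := by rw [← hd, Finsupp.degree_eq_weight_one]; rfl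
  rw [← mul_one (coeff m f), ← smul_eq_mul, ← smul_monomial]
  apply Submodule.smul_mem
  have : (monomial m (1 : kk) : P4) = x 0 ^ m 0 * x 1 ^ m 1 * x 2 ^ m 2 * x 3 ^ m 3 := by
    rw [monomial_eq, Finsupp.prod_fintype _ _ (by simp)]
    simp [Fin.prod_univ_four]
  rw [this]
  apply h
  rw [← hdeg, Finsupp.degree_eq_sum, Fin.sum_univ_four]

theorem hat0 : hat 0 = x 1 * x 2 * x 3 := hat_eq (by decide)
theorem hat1 : hat 1 = x 0 * x 2 * x 3 := hat_eq (by decide)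
theorem hat2 : hat 2 = x 0 * x 1 * x 3 := hat_eq (by decide)
theorem hat3 : hat 3 = x 0 * x 1 * x 2 := hat_eq (by decide)

theorem par_gen {n : ℕ} {W : Submodule kk P4}
    (h : ∀ p q r s : ℕ, p < 2 → q < 2 → r < 2 → s < 2 → ∀ d, ∀ y ∈ homog d, p + q + r + s + 2 * d = n →
      x 0 ^ p * x 1 ^ q * x 2 ^ r * x 3 ^ s * y ^ 2 ∈ W) : homog n ≤ W := by
  refine homog_le fun a b c d hn => ?_
  rw [X_pow_split 0 a, X_pow_split 1 b, X_pow_split 2 c, X_pow_split 3 d]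
  have := h (a % 2) (b % 2) (c % 2) (d % 2) (by omega) (by omega) (by omega) (by omega)
    (a / 2 + b / 2 + c / 2 + d / 2) (x 0 ^ (a/2) * x 1 ^ (b/2) * x 2 ^ (c/2) * x 3 ^ (d/2))
    (mul_homog (mul_homog (mul_homog (x_pow_homog _ _) (x_pow_homog _ _)) (x_pow_homog _ _)) (x_pow_homog _ _))
    (by omega)
  convert this using 1
  ring

theorem par_odd {n : ℕ} (hn : Odd n) {W : Submodule kk P4}
    (h1 : ∀ i d, ∀ y ∈ homog d, 1 + 2 * d = n → x i * y ^ 2 ∈ W)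
    (h3 : ∀ i d, ∀ y ∈ homog d, 3 + 2 * d = n → hat i * y ^ 2 ∈ W) : homog n ≤ W := by
  obtain ⟨m, rfl⟩ := hn
  refine par_gen fun p q r s hp hq hr hs d y hy hd => ?_
  have e : p + q + r + s = 1 ∨ p + q + r + s = 3 := by omega
  have c01 : ∀ m, m < 2 → m = 0 ∨ m = 1 := fun m h => by omega
  rcases c01 p hp with rfl | rfl <;> rcases c01 q hq with rfl | rfl <;> rcases c01 r hr with rfl | rfl <;>
    rcases c01 s hs with rfl | rfl <;> first | exact absurd e (by decide) | skip
  all_goals simp only [pow_one, one_mul, mul_one, pow_zero]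
  · exact h1 3 d y hy (by omega)
  · exact h1 2 d y hy (by omega)
  · exact h1 1 d y hy (by omega)
  · rw [← hat0]; exact h3 0 d y hy (by omega)
  · exact h1 0 d y hy (by omega)
  · rw [← hat1]; exact h3 1 d y hy (by omega)
  · rw [← hat2]; exact h3 2 d y hy (by omega)
  · rw [← hat3]; exact h3 3 d y hy (by omega)

theorem par_even {n : ℕ} (hn : Even n) {W : Submodule kk P4}
    (h0 : ∀ d, ∀ y ∈ homog d, 2 * d = n → y ^ 2 ∈ W)
    (h2 : ∀ i j, i ≠ j → ∀ d, ∀ y ∈ homog d, 2 + 2 * d = n → x i * x j * y ^ 2 ∈ W)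
    (h4 : ∀ d, ∀ y ∈ homog d, 4 + 2 * d = n → x 0 * x 1 * x 2 * x 3 * y ^ 2 ∈ W) : homog n ≤ W := by
  obtain ⟨m, rfl⟩ := hn
  refine par_gen fun p q r s hp hq hr hs d y hy hd => ?_
  have e : p + q + r + s = 0 ∨ p + q + r + s = 2 ∨ p + q + r + s = 4 := by omega
  have c01 : ∀ m, m < 2 → m = 0 ∨ m = 1 := fun m h => by omega
  rcases c01 p hp with rfl | rfl <;> rcases c01 q hq with rfl | rfl <;> rcases c01 r hr with rfl | rfl <;>
    rcases c01 s hs with rfl | rfl <;> first | exact absurd e (by decide) | skip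
  all_goals simp only [pow_one, one_mul, mul_one, pow_zero]
  · exact h0 d y hy (by omega)
  · exact h2 2 3 (by decide) d y hy (by omega)
  · exact h2 1 3 (by decide) d y hy (by omega)
  · exact h2 1 2 (by decide) d y hy (by omega)
  · exact h2 0 3 (by decide) d y hy (by omega)
  · exact h2 0 2 (by decide) d y hy (by omega)
  · exact h2 0 1 (by decide) d y hy (by omega)
  · exact h4 d y hy (by omega)

/-- even components of low elements are hit -/
theorem comp_Hit (n : ℕ) {f : P4} (h : f ∈ Hit) : homogeneousComponent n f ∈ Hit := by
  refine Hit_map (φ := homogeneousComponent n) (fun k d hk g hg => ?_) h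
  rw [comp_homog (Sq_homog k hg)]
  split_ifs
  · exact Sq_mem_Hit k hk g
  · exact Submodule.zero_mem _

theorem Low_even {n : ℕ} (hn : Even n) {f : P4} (h : f ∈ Low) : homogeneousComponent n f ∈ Hit := by
  induction h with
  | hit h => exact comp_Hit n h
  | xs p y => rw [od_x p y n hn]; exact Submodule.zero_mem _
  | add _ _ h1 h2 => rw [map_add]; exact Submodule.add_mem _ h1 h2
  | @hat i f _ _ => rw [od_hat i f n hn]; exact Submodule.zero_mem _

theorem hit_hitSub (n : ℕ) {f : P4} (h : f ∈ Hit) : homogeneousComponent n f ∈ hitSub n := by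
  refine Hit_map (φ := homogeneousComponent n) (fun k d hk g hg => ?_) h
  rw [comp_homog (Sq_homog k hg)]
  split_ifs with e
  · refine Submodule.subset_span ⟨d, by omega, g, hg, ?_⟩
    have hs : sqTotal g = ∑ j ∈ Finset.range (d + 1), Sq j g := by
      have h1 : sqTotal = ((Polynomial.aeval (1 : P4)).restrictScalars kk).comp (SqT (ι := Fin 4)) := by
        ext i : 1
        simp [SqT_X, sqTotal]
      rw [h1, AlgHom.comp_apply, AlgHom.restrictScalars_apply, Polynomial.aeval_eq_sum_range' (n := d + 1)
        (Nat.lt_succ_of_le (nice_of_homog hg).2.1)]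
      simp [Sq_def]
    rw [hs, map_sum]
    by_cases hkd : k ≤ d
    · rw [Finset.sum_eq_single k]
      · rw [comp_homog (Sq_homog k hg), if_pos e]
      · intro j _ hj; rw [comp_homog (Sq_homog j hg), if_neg (by omega)]
      · intro h; simp at h; omega
    · rw [Sq_gt hg (by omega), Finset.sum_eq_zero]
      intro j hj
      simp at hj
      rw [comp_homog (Sq_homog j hg), if_neg (by omega)]
  · exact Submodule.zero_mem _

theorem hitSub_hit (n : ℕ) : hitSub n ≤ Hit := by
  refine Submodule.span_le.2 ?_
  rintro _ ⟨d, hd, g, hg, rfl⟩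
  have hs : sqTotal g = ∑ j ∈ Finset.range (d + 1), Sq j g := by
    have h1 : sqTotal = ((Polynomial.aeval (1 : P4)).restrictScalars kk).comp (SqT (ι := Fin 4)) := by
      ext i : 1
      simp [SqT_X, sqTotal]
    rw [h1, AlgHom.comp_apply, AlgHom.restrictScalars_apply, Polynomial.aeval_eq_sum_range' (n := d + 1)
      (Nat.lt_succ_of_le (nice_of_homog hg).2.1)]
    simp [Sq_def]
  rw [hs, map_sum]
  refine Submodule.sum_mem _ fun j hj => ?_
  rw [comp_homog (Sq_homog j hg)]
  split_ifs with e
  · exact Sq_mem_Hit j (by omega) g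
  · exact Submodule.zero_mem _

theorem hitSub_iff {n : ℕ} {f : P4} (hf : f ∈ homog n) : f ∈ hitSub n ↔ f ∈ Hit := by
  refine ⟨fun h => hitSub_hit n h, fun h => ?_⟩
  have := hit_hitSub n h
  rwa [comp_homog hf, if_pos rfl] at this

end Pf

namespace Pf

def Sp1 (k : ℕ) : Submodule kk P4 := Submodule.span kk {p | ∃ D : List (Fin 4), D.length = k ∧ p = w1 D 1}
def V1 (k : ℕ) : Submodule kk P4 := Hit ⊔ Sp1 k

theorem Hit_V1 (k) : Hit ≤ V1 k := le_sup_left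
theorem w1_V1 (D : List (Fin 4)) : w1 D 1 ∈ V1 D.length :=
  (le_sup_right : Sp1 _ ≤ _) (Submodule.subset_span ⟨D, rfl, rfl⟩)

/-- generic: a linear map sends `A ⊔ span S` into `W`. -/
theorem sup_span_map {φ : P4 →ₗ[kk] P4} {A W : Submodule kk P4} {S : Set P4}
    (hA : ∀ f ∈ A, φ f ∈ W) (hS : ∀ f ∈ S, φ f ∈ W) {f : P4} (hf : f ∈ A ⊔ Submodule.span kk S) : φ f ∈ W := by
  have : A ⊔ Submodule.span kk S ≤ W.comap φ := sup_le hA (Submodule.span_le.2 hS)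
  exact this hf

theorem V1_x (i : Fin 4) {k : ℕ} {f : P4} (hf : f ∈ V1 k) : x i * f ^ 2 ∈ V1 (k + 1) := by
  refine sup_span_map (φ := mulSq (x i)) (fun f hf => Hit_V1 _ (F1 i hf)) ?_ hf
  rintro _ ⟨D, rfl, rfl⟩
  exact w1_V1 (i :: D)

/-- congruence version of `mem_of_add` -/
theorem mem_congr {W : Submodule kk P4} {a b c : P4} (h : c ∈ W) (e : c = a + b) (hb : b ∈ W) : a ∈ W :=
  mem_of_add (e ▸ h) hb

theorem D_xx (i j : Fin 4) (h : P4) : Sq 1 (x i * x j * h ^ 2) = x i ^ 2 * x j * h ^ 2 + x i * x j ^ 2 * h ^ 2 := by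
  rw [D_mul_sq, D_mul, Sq_X_one, Sq_X_one]; ring
theorem D_xxx (i j k : Fin 4) (h : P4) : Sq 1 (x i * x j * x k * h ^ 2) =
    x i ^ 2 * x j * x k * h ^ 2 + x i * x j ^ 2 * x k * h ^ 2 + x i * x j * x k ^ 2 * h ^ 2 := by
  rw [D_mul_sq, D_mul, D_mul, Sq_X_one, Sq_X_one, Sq_X_one]; ring
theorem D_xxxx (i j k l : Fin 4) (h : P4) : Sq 1 (x i * x j * x k * x l * h ^ 2) =
    x i ^ 2 * x j * x k * x l * h ^ 2 + x i * x j ^ 2 * x k * x l * h ^ 2 + x i * x j * x k ^ 2 * x l * h ^ 2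
     + x i * x j * x k * x l ^ 2 * h ^ 2 := by
  rw [D_mul_sq, D_mul, D_mul, D_mul, Sq_X_one, Sq_X_one, Sq_X_one, Sq_X_one]; ring

theorem hit_xx (i j : Fin 4) (h : P4) : x i ^ 2 * x j * h ^ 2 + x i * x j ^ 2 * h ^ 2 ∈ Hit :=
  D_xx i j h ▸ D_mem_Hit _
theorem hit_xxx (i j k : Fin 4) (h : P4) :
    x i ^ 2 * x j * x k * h ^ 2 + x i * x j ^ 2 * x k * h ^ 2 + x i * x j * x k ^ 2 * h ^ 2 ∈ Hit :=
  D_xxx i j k h ▸ D_mem_Hit _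
theorem hit_xxxx (i j k l : Fin 4) (h : P4) :
    x i ^ 2 * x j * x k * x l * h ^ 2 + x i * x j ^ 2 * x k * x l * h ^ 2 + x i * x j * x k ^ 2 * x l * h ^ 2
     + x i * x j * x k * x l ^ 2 * h ^ 2 ∈ Hit :=
  D_xxxx i j k l h ▸ D_mem_Hit _

theorem R1 {i a b c : Fin 4} (hd : Dist a i b c) (g : P4) :
    x i * (hat a * g ^ 2) ^ 2 + x b * (x c * (x i * g) ^ 2) ^ 2 ∈ Hit := by
  rw [hat_eq hd]
  convert hit_xx i b (x i * x c * g ^ 2) using 1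
  ring

theorem R2 {a k : Fin 4} (hne : a ≠ k) (g : P4) :
    x a * (hat a * g) ^ 2 + x k * (hat k * g) ^ 2 ∈ Hit := by
  obtain ⟨b, c, hd⟩ := dist2 hne
  rw [hat_eq hd, hat_eq hd.sw]
  convert hit_xx a k (x b * x c * g) using 1
  ring

theorem homog_succ {d : ℕ} {W : Submodule kk P4} (h : ∀ k, ∀ g ∈ homog d, x k * g ∈ W) : homog (d + 1) ≤ W := by
  refine homog_le fun a b c e hn => ?_
  have hm : ∀ a b c e, a + b + c + e = d → x 0 ^ a * x 1 ^ b * x 2 ^ c * x 3 ^ e ∈ homog d := fun a b c e h => by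
    subst h
    exact (mul_homog (mul_homog (mul_homog (x_pow_homog _ _) (x_pow_homog _ _)) (x_pow_homog _ _)) (x_pow_homog _ _))
  rcases a with _ | a
  · rcases b with _ | b
    · rcases c with _ | c
      · rcases e with _ | e
        · omega
        · convert h 3 _ (hm 0 0 0 e (by omega)) using 1; ring
      · convert h 2 _ (hm 0 0 c e (by omega)) using 1; ring
    · convert h 1 _ (hm 0 b c e (by omega)) using 1; ring
  · convert h 0 _ (hm a b c e (by omega)) using 1; ring

theorem homog_zero {W : Submodule kk P4} (h : (1 : P4) ∈ W) : homog 0 ≤ W := by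
  refine homog_le fun a b c e hn => ?_
  obtain ⟨rfl, rfl, rfl, rfl⟩ : a = 0 ∧ b = 0 ∧ c = 0 ∧ e = 0 := by omega
  simpa using h

theorem sq_hit {d : ℕ} (hd : 0 < d) {f : P4} (hf : f ∈ homog d) : f ^ 2 ∈ Hit := by
  obtain ⟨d, rfl⟩ : ∃ e, d = e + 1 := ⟨d - 1, by omega⟩
  have : homog (d + 1) ≤ Hit.comap (mulSq 1) := homog_succ fun k g _ => by
    simpa [mulSq_apply] using sqx_mem k g
  simpa [mulSq_apply] using this hf

theorem par_odd_sq {n : ℕ} (hn : Odd n) (a : P4) {W : Submodule kk P4}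
    (h1 : ∀ i d, ∀ y ∈ homog d, 1 + 2 * d = n → a * (x i * y ^ 2) ^ 2 ∈ W)
    (h3 : ∀ i d, ∀ y ∈ homog d, 3 + 2 * d = n → a * (hat i * y ^ 2) ^ 2 ∈ W)
    {f : P4} (hf : f ∈ homog n) : a * f ^ 2 ∈ W := by
  have : homog n ≤ W.comap (mulSq a) :=
    par_odd hn (fun i d y hy hd => by rw [Submodule.mem_comap, mulSq_apply]; exact h1 i d y hy hd)
      (fun i d y hy hd => by rw [Submodule.mem_comap, mulSq_apply]; exact h3 i d y hy hd)
  have := this hf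
  rwa [Submodule.mem_comap, mulSq_apply] at this

theorem par_even_sq {n : ℕ} (hn : Even n) (a : P4) {W : Submodule kk P4}
    (h0 : ∀ d, ∀ y ∈ homog d, 2 * d = n → a * (y ^ 2) ^ 2 ∈ W)
    (h2 : ∀ i j, i ≠ j → ∀ d, ∀ y ∈ homog d, 2 + 2 * d = n → a * (x i * x j * y ^ 2) ^ 2 ∈ W)
    (h4 : ∀ d, ∀ y ∈ homog d, 4 + 2 * d = n → a * (x 0 * x 1 * x 2 * x 3 * y ^ 2) ^ 2 ∈ W)
    {f : P4} (hf : f ∈ homog n) : a * f ^ 2 ∈ W := by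
  have : homog n ≤ W.comap (mulSq a) :=
    par_even hn (fun d y hy hd => by rw [Submodule.mem_comap, mulSq_apply]; exact h0 d y hy hd)
      (fun i j hij d y hy hd => by rw [Submodule.mem_comap, mulSq_apply]; exact h2 i j hij d y hy hd)
      (fun d y hy hd => by rw [Submodule.mem_comap, mulSq_apply]; exact h4 d y hy hd)
  have := this hf
  rwa [Submodule.mem_comap, mulSq_apply] at this

/-- The `i = a` case reduced to the `i ≠ a` case. -/
theorem Ct_red {d : ℕ} {W : Submodule kk P4} (hW : Hit ≤ W)
    (h : ∀ i a, i ≠ a → ∀ g ∈ homog (d + 1), x i * (hat a * g ^ 2) ^ 2 ∈ W) (i a : Fin 4) (g : P4)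
    (hg : g ∈ homog (d + 1)) : x i * (hat a * g ^ 2) ^ 2 ∈ W := by
  by_cases hia : i = a
  swap
  · exact h i a hia g hg
  subst hia
  have key : homog (d + 1) ≤ W.comap ((mulSq (x i)).comp (mulSq (hat i))) := homog_succ fun k g hg => by
    have hkk : x k * (hat k * (x k * g) ^ 2) ^ 2 ∈ W := by
      obtain ⟨b, c, e, hd⟩ := dist1 k
      have h1 := F1 k (hit_xxxx k b c e g)
      have h2 := h k b hd.1 (x b * g) (by rw [add_comm]; exact mul_homog (x_homog b) hg)
      have h3 := h k c hd.2.1 (x c * g) (by rw [add_comm]; exact mul_homog (x_homog c) hg)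
      have h4 := h k e hd.2.2.1 (x e * g) (by rw [add_comm]; exact mul_homog (x_homog e) hg)
      rw [hat_eq hd.sw] at h2
      rw [hat_eq hd.p3] at h3
      rw [hat_eq hd.p4] at h4
      rw [hat_eq hd]
      refine mem_congr (hW h1) ?_ (W.add_mem (W.add_mem h2 h3) h4)
      simp only [add_sq', mul_add]
      ring
    rw [Submodule.mem_comap, LinearMap.comp_apply, mulSq_apply, mulSq_apply]
    by_cases hik : i = k
    · subst hik; exact hkk
    · exact mem_of_add (hW (R2 hik _)) hkk
  have := key hg
  rwa [Submodule.mem_comap, LinearMap.comp_apply, mulSq_apply, mulSq_apply] at this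

theorem Ct (t : ℕ) (ht : 3 ≤ t) : ∀ (i : Fin 4), ∀ y ∈ homog (2 ^ t - 1), x i * y ^ 2 ∈ V1 (t + 1) := by
  induction t, ht using Nat.le_induction with
  | base =>
    have hz : ∀ i a, ∀ z ∈ homog 3, x i * (x a * z ^ 2) ^ 2 ∈ V1 4 := by
      intro i a z hz
      have : homog 3 ≤ (V1 4).comap ((mulSq (x i)).comp (mulSq (x a))) := by
        refine par_odd (by decide) (fun b d y hy hd => ?_) (fun b d y hy hd => ?_)
        · obtain rfl : d = 1 := by omega
          have : homog (0 + 1) ≤ (V1 4).comap (((mulSq (x i)).comp (mulSq (x a))).comp (mulSq (x b))) := by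
            refine homog_succ fun c g hg => ?_
            have : homog 0 ≤ (V1 4).comap ((((mulSq (x i)).comp (mulSq (x a))).comp (mulSq (x b))).comp (LinearMap.mulLeft kk (x c))) := by
              refine homog_zero ?_
              have h := w1_V1 [i, a, b, c]
              simp only [w1_cons, w1_nil, one_pow] at h
              simp only [Submodule.mem_comap, LinearMap.comp_apply, mulSq_apply, LinearMap.mulLeft_apply]
              exact h
            have := this hg
            simp only [Submodule.mem_comap, LinearMap.comp_apply, LinearMap.mulLeft_apply] at this ⊢
            exact this
          have := this hy
          simp only [Submodule.mem_comap, LinearMap.comp_apply] at this ⊢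
          exact this
        · obtain rfl : d = 0 := by omega
          have : homog 0 ≤ (V1 4).comap (((mulSq (x i)).comp (mulSq (x a))).comp (mulSq (hat b))) := by
            refine homog_zero ?_
            simp only [Submodule.mem_comap, LinearMap.comp_apply, mulSq_apply, one_pow, mul_one]
            by_cases hab : a = b
            · subst hab
              -- choose a ≠ i
              have main : ∀ a, i ≠ a → x i * (x a * hat a ^ 2) ^ 2 ∈ V1 4 := by
                intro a hia
                obtain ⟨b, c, hd⟩ := dist2 hia
                have e1 : x a * hat a ^ 2 + hat a * (x a ^ 2) ^ 2 ∈ Hit := by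
                  have h := Sq_mem_Hit (2 * 1) (by norm_num) (x i * (x b * (x c * (x a) ^ 2)))
                  rw [Sq_xxx 1 i b c _ le_rfl, Sq_X_one, Nat.sub_self, Sq_zero] at h
                  have h1 := R2 (a := a) (k := b) hd.2.2.2.1 1
                  have h2 := R2 (a := a) (k := c) hd.2.2.2.2.1 1
                  have h3 := R2 (a := a) (k := i) hia.symm 1
                  rw [hat_eq hd.sw, hat_eq hd] at h3
                  rw [hat_eq hd.sw, hat_eq hd.p3] at h1
                  rw [hat_eq hd.sw, hat_eq hd.p4] at h2
                  rw [hat_eq hd.sw]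
                  have h4 := Submodule.add_mem _ (Submodule.add_mem _ h1 h2) (Submodule.add_mem _ h3 h)
                  convert h4 using 1
                  linear_combination (-(x a * (x i * x b * x c) ^ 2) - x i * (x a * x b * x c)^2 - x b * (x a * x i * x c) ^ 2
                    - x c * (x a * x i * x b) ^ 2) * two0 (ι := Fin 4)
                have e2 := F1 i e1
                have e3 := R1 hd.sw (x a ^ 2)
                have e4 := w1_V1 [b, c, i, a]
                rw [add_sq', mul_add] at e2
                have e5 : x b * (x c * (x i * x a ^ 2) ^ 2) ^ 2 ∈ V1 4 := by simpa [w1] using e4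
                exact mem_of_add (Hit_V1 _ e2) (mem_of_add (Hit_V1 _ e3) e5)
              by_cases hia : i = a
              · subst hia
                obtain ⟨b, c, e, hd⟩ := dist1 i
                have h1 := F1 i (R2 hd.1 1)
                rw [add_sq', mul_add, mul_one, mul_one] at h1
                exact mem_of_add (Hit_V1 _ h1) (main b hd.1)
              · exact main a hia
            · obtain ⟨p, q, hd⟩ := dist2 hab
              have h1 := F1 i (R1 hd.sw 1)
              rw [add_sq', mul_add, one_pow, mul_one] at h1
              refine mem_of_add (Hit_V1 _ h1) ?_
              simpa [w1] using w1_V1 [i, p, q, a]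
          have := this hy
          simp only [Submodule.mem_comap, LinearMap.comp_apply] at this ⊢
          exact this
      have := this hz
      simp only [Submodule.mem_comap, LinearMap.comp_apply, mulSq_apply] at this
      exact this
    intro i y hy
    refine par_odd_sq (n := 7) (by decide) _ (fun a d z hz' hd => ?_) (fun a d g hg hd => ?_) hy
    · obtain rfl : d = 3 := by omega
      exact hz i a z hz'
    · obtain rfl : d = 1 + 1 := by omega
      refine Ct_red (Hit_V1 _) (fun i a hia g hg => ?_) i a g hg
      obtain ⟨b, c, hd⟩ := dist2 hia
      exact mem_of_add (Hit_V1 _ (R1 hd.sw g)) (hz b c _ (mul_homog (x_homog i) hg))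
  | succ t ht ih =>
    intro i y hy
    have h2 : 8 ≤ 2 ^ t := le_trans (by norm_num) (Nat.pow_le_pow_right (by norm_num : 0 < 2) ht)
    have e : 2 ^ (t + 1) = 2 * 2 ^ t := by ring
    refine par_odd_sq (by rw [e]; exact ⟨2 ^ t - 1, by omega⟩) _ (fun a d z hz hd => ?_) (fun a d g hg hd => ?_) hy
    · obtain rfl : d = 2 ^ t - 1 := by omega
      exact V1_x i (ih a z hz)
    · obtain rfl : d = (2 ^ t - 3) + 1 := by omega
      refine Ct_red (Hit_V1 _) (fun i a hia g hg => ?_) i a g hg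
      obtain ⟨b, c, hd⟩ := dist2 hia
      refine mem_of_add (Hit_V1 _ (R1 hd.sw g)) (V1_x b (ih c _ ?_))
      have := mul_homog (x_homog i) hg
      rwa [show 1 + (2 ^ t - 3 + 1) = 2 ^ t - 1 by omega] at this

def Ok2 (D : List (Fin 4 × Fin 4)) : Prop := ∀ p ∈ D, p.1 ≠ p.2

def Sp2 (k : ℕ) : Submodule kk P4 :=
  Submodule.span kk {p | ∃ D : List (Fin 4 × Fin 4), Ok2 D ∧ D.length = k ∧ p = w2 D 1}
def V2 (k : ℕ) : Submodule kk P4 := Hit ⊔ Sp2 k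
theorem Hit_V2 (k) : Hit ≤ V2 k := le_sup_left
theorem w2_V2 (D : List (Fin 4 × Fin 4)) (h : Ok2 D) : w2 D 1 ∈ V2 D.length :=
  (le_sup_right : Sp2 _ ≤ _) (Submodule.subset_span ⟨D, h, rfl, rfl⟩)

theorem V2_x {i j : Fin 4} (hij : i ≠ j) {k : ℕ} {f : P4} (hf : f ∈ V2 k) : x i * x j * f ^ 2 ∈ V2 (k + 1) := by
  refine sup_span_map (φ := mulSq (x i * x j)) (fun f hf => Hit_V2 _ (F2 i j hf)) ?_ hf
  rintro _ ⟨D, hD, rfl, rfl⟩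
  refine w2_V2 ((i, j) :: D) ?_
  intro p hp
  rcases List.mem_cons.1 hp with rfl | hp
  · exact hij
  · exact hD p hp

theorem prod4 {i j k l : Fin 4} (hd : Dist i j k l) : x 0 * x 1 * x 2 * x 3 = x i * x j * x k * x l := by
  have h1 := hat_eq hd
  have h2 : x i * hat i = x 0 * x 1 * x 2 * x 3 := by
    rw [hat, Finset.mul_prod_erase _ _ (Finset.mem_univ i), Fin.prod_univ_four]
  rw [← h2, h1]; ring

theorem Et (t : ℕ) : ∀ k l, k ≠ l → ∀ g ∈ homog (2 ^ (t + 1) - 2), x k * x l * g ^ 2 ∈ V2 (t + 1) := by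
  induction t with
  | zero =>
    intro k l hkl g hg
    have : homog 0 ≤ (V2 (0 + 1)).comap (mulSq (x k * x l)) := by
      refine homog_zero ?_
      rw [Submodule.mem_comap, mulSq_apply]
      exact V2_x (k := 0) hkl (w2_V2 [] (by simp [Ok2]))
    have := this hg
    rwa [Submodule.mem_comap, mulSq_apply] at this
  | succ t ih =>
    intro k l hkl g hg
    have h2 : 1 ≤ 2 ^ t := Nat.one_le_two_pow
    have e : 2 ^ (t + 1) = 2 * 2 ^ t := by ring
    have e' : 2 ^ (t + 1 + 1) = 2 * 2 ^ (t + 1) := by ring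
    refine par_even_sq ⟨2 ^ (t + 1) - 1, by omega⟩ _ (fun d h hh hd => ?_) (fun a b hab d h hh hd => ?_) (fun d h hh hd => ?_) hg
    · exact Hit_V2 _ (F2 k l (sq_hit (by omega) hh))
    · obtain rfl : d = 2 ^ (t + 1) - 2 := by omega
      exact V2_x hkl (ih a b hab h hh)
    · obtain ⟨a, b, hd'⟩ := dist2 hkl
      rw [prod4 hd']
      have hh' : ∀ k, x k * h ∈ homog (2 ^ (t + 1) - 2) := fun k => by
        have := mul_homog (x_homog k) hh
        rwa [show 1 + d = 2 ^ (t + 1) - 2 by omega] at this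
      have h1 := V2_x hd'.2.2.2.1 (ih l b hd'.2.2.2.2.1 _ (hh' k))
      have h3 := V2_x hd'.2.1 (ih k b hd'.2.2.1 _ (hh' l))
      refine mem_congr (Hit_V2 _ (hit_xxx k l a (x k * x l * x b * h ^ 2))) ?_ (Submodule.add_mem _ h1 h3)
      ring

def NN (t : ℕ) : ℕ → ℕ
  | 0 => 2 ^ (t + 1) - 1
  | s + 1 => 2 * NN t s + 3

theorem NN_odd (t s : ℕ) : Odd (NN t s) := by
  rcases s with _ | s
  · exact ⟨2 ^ t - 1, by have : 1 ≤ 2 ^ t := Nat.one_le_two_pow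
                         simp only [NN, pow_succ]; omega⟩
  · exact ⟨NN t s + 1, by simp [NN]; ring⟩

theorem NN_eq (t s : ℕ) : NN t s = 3 * (2 ^ s - 1) + 2 ^ s * (2 ^ (t + 1) - 1) := by
  induction s with
  | zero => simp [NN]
  | succ s ih =>
    rw [NN, ih, pow_succ 2 s]
    have : 1 ≤ 2 ^ s := Nat.one_le_two_pow
    obtain ⟨a, ha⟩ : ∃ a, 2 ^ s = a + 1 := ⟨2 ^ s - 1, by omega⟩
    rw [ha, show a + 1 - 1 = a by omega, show (a + 1) * 2 - 1 = 2 * a + 1 by omega]; ring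

def V32 (a b : ℕ) : Submodule kk P4 := Low ⊔
  Submodule.span kk {p | ∃ L D, Ok2 D ∧ L.length = a ∧ D.length = b ∧ p = w3 L (w2 D 1)}

theorem V32_hat (i : Fin 4) {a b : ℕ} {f : P4} (hf : f ∈ V32 a b) : hat i * f ^ 2 ∈ V32 (a + 1) b := by
  refine sup_span_map (φ := mulSq (hat i)) (fun f hf => Submodule.mem_sup_left (hat_Low i hf)) ?_ hf
  rintro _ ⟨L, D, hD, rfl, rfl, rfl⟩
  exact Submodule.mem_sup_right (Submodule.subset_span ⟨i :: L, D, hD, rfl, rfl, rfl⟩)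

theorem V2_V32 {b : ℕ} {f : P4} (hf : f ∈ V2 b) : f ∈ V32 0 b := by
  refine sup_span_map (φ := LinearMap.id) (fun f hf => Submodule.mem_sup_left (Hit_Low hf)) ?_ hf
  rintro _ ⟨D, hD, rfl, rfl⟩
  exact Submodule.mem_sup_right (Submodule.subset_span ⟨[], D, hD, rfl, rfl, rfl⟩)

theorem homog_V32 (t s : ℕ) : homog (NN (t + 2) s) ≤ V32 (s + 1) (t + 1) := by
  induction s with
  | zero =>
    have h2 : 1 ≤ 2 ^ t := Nat.one_le_two_pow
    have e : 2 ^ (t + 1) = 2 * 2 ^ t := by ring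
    have e' : 2 ^ (t + 2) = 4 * 2 ^ t := by ring
    have e3 : 2 ^ (t + 2 + 1) = 8 * 2 ^ t := by ring
    refine par_odd (NN_odd _ _) (fun i d y _ _ => Submodule.mem_sup_left (x_Low i y)) (fun j d g hg hd => ?_)
    have hd' : d = 2 ^ (t + 2) - 2 := by simp only [NN] at hd; omega
    subst hd'
    refine par_even_sq ⟨2 ^ (t + 1) - 1, by omega⟩ _ (fun d h hh hd => ?_) (fun a b hab d h hh hd => ?_) (fun d h hh hd => ?_) hg
    · exact Submodule.mem_sup_left (hat_Low j (Hit_Low (sq_hit (by omega) hh)))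
    · obtain rfl : d = 2 ^ (t + 1) - 2 := by omega
      exact V32_hat j (V2_V32 (Et t a b hab h hh))
    · obtain ⟨a, b, c, hd'⟩ := dist1 j
      rw [prod4 hd']
      have hh' : ∀ k, x k * h ∈ homog (2 ^ (t + 1) - 2) := fun k => by
        have := mul_homog (x_homog k) hh
        rwa [show 1 + d = 2 ^ (t + 1) - 2 by omega] at this
      have h1 := V32_hat a (V2_V32 (Et t b c hd'.2.2.2.2.2 _ (hh' a)))
      have h2 := V32_hat b (V2_V32 (Et t a c hd'.2.2.2.2.1 _ (hh' b)))
      have h3 := V32_hat c (V2_V32 (Et t a b hd'.2.2.2.1 _ (hh' c)))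
      rw [hat_eq hd'.sw] at h1
      rw [hat_eq hd'.p3] at h2
      rw [hat_eq hd'.p4] at h3
      rw [hat_eq hd']
      refine mem_congr (Submodule.mem_sup_left (Hit_Low (hit_xxxx j a b c (x a * x b * x c * h ^ 2)))) ?_
        (Submodule.add_mem _ h1 (Submodule.add_mem _ h2 h3))
      ring
  | succ s ih =>
    refine par_odd (NN_odd _ _) (fun i d y _ _ => Submodule.mem_sup_left (x_Low i y)) (fun j d g hg hd => ?_)
    obtain rfl : d = NN (t + 2) s := by simp only [NN] at hd; omega
    exact V32_hat j (ih hg)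

def V31 (a b : ℕ) : Submodule kk P4 := HitO ⊔
  Submodule.span kk {p | ∃ L D, L.length = a ∧ D.length = b ∧ p = w3 L (w1 D 1)}

theorem V31_hat (i : Fin 4) {a b : ℕ} {f : P4} (hf : f ∈ V31 a b) : hat i * f ^ 2 ∈ V31 (a + 1) b := by
  refine sup_span_map (φ := mulSq (hat i)) (fun f hf => Submodule.mem_sup_left (F3b i hf)) ?_ hf
  rintro _ ⟨L, D, rfl, rfl, rfl⟩
  exact Submodule.mem_sup_right (Submodule.subset_span ⟨i :: L, D, rfl, rfl, rfl⟩)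

theorem homog_od {n : ℕ} (hn : Odd n) : homog n ≤ Od := fun f hf d hd => by
  rw [comp_homog hf, if_neg]
  rintro rfl
  exact Nat.not_odd_iff_even.2 hd hn

theorem w1_homog (D : List (Fin 4)) : w1 D 1 ∈ homog (2 ^ D.length - 1) := by
  induction D with
  | nil => simpa using one_homog
  | cons i D ih =>
    have := mul_homog (x_homog i) (sq_homog ih)
    have h2 : 1 ≤ 2 ^ D.length := Nat.one_le_two_pow
    rw [show 1 + 2 * (2 ^ D.length - 1) = 2 ^ (i :: D).length - 1 by simp [pow_succ]; omega] at this
    exact this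

/-- homogeneous elements of `V1` lie in `V31 0`. -/
theorem V1_V31 {t : ℕ} {f : P4} (hf : f ∈ V1 (t + 1)) (h : f ∈ homog (NN t 0)) : f ∈ V31 0 (t + 1) := by
  have : homogeneousComponent (NN t 0) f ∈ V31 0 (t + 1) := by
    refine sup_span_map (φ := homogeneousComponent (NN t 0)) (fun f hf => ?_) ?_ hf
    · exact Submodule.mem_sup_left ⟨comp_Hit _ hf, homog_od (NN_odd t 0) (comp_mem _ _)⟩
    · rintro _ ⟨D, hD, rfl⟩
      have := w1_homog D
      rw [hD] at this
      rw [comp_homog this, if_pos (by rfl)]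
      exact Submodule.mem_sup_right (Submodule.subset_span ⟨[], D, rfl, hD, rfl⟩)
  rwa [comp_homog h, if_pos rfl] at this

theorem NN_pos (t s : ℕ) : 0 < NN t s := (NN_odd t s).pos

theorem Low_V31 {t : ℕ} (ht : 3 ≤ t) {f : P4} (hf : f ∈ Low) :
    ∀ s, homogeneousComponent (NN t s) f ∈ V31 s (t + 1) := by
  have h2 : 8 ≤ 2 ^ t := le_trans (by norm_num) (Nat.pow_le_pow_right (by norm_num : 0 < 2) ht)
  have e : 2 ^ (t + 1) = 2 * 2 ^ t := by ring
  have e0 : NN t 0 = 2 * (2 ^ t - 1) + 1 := by simp only [NN]; omega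
  have e1 : NN t 0 = 2 * (2 ^ t - 2) + 3 := by simp only [NN]; omega
  have cx : ∀ p : Fin 4, ∀ y ∈ homog (2 ^ t - 1), x p * y ^ 2 ∈ V31 0 (t + 1) := fun p y hy => by
    refine V1_V31 (Ct t ht p y hy) ?_
    rw [e0, add_comm]; exact mul_homog (x_homog p) (sq_homog hy)
  induction hf with
  | @hit f h => exact fun s => Submodule.mem_sup_left ⟨comp_Hit _ h, homog_od (NN_odd t s) (comp_mem _ _)⟩
  | xs p y =>
    rintro (_ | s)
    · rw [e0, comp_mulSq (x_homog p)]
      exact cx p _ (comp_mem _ _)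
    · have : NN t (s + 1) = 2 * (NN t s + 1) + 1 := by simp [NN]; ring
      rw [this, comp_mulSq (x_homog p)]
      exact Submodule.mem_sup_left ⟨F4 p (comp_mem _ _) (by omega) (NN_odd t s).add_one, od_x _ _⟩
  | add _ _ h1 h2 => intro s; rw [map_add]; exact Submodule.add_mem _ (h1 s) (h2 s)
  | @hat i f hf ih =>
    rintro (_ | s)
    · rw [e1, comp_mulSq (hat_homog i)]
      have h := Low_even (n := 2 ^ t - 2) (by
        obtain ⟨u, rfl⟩ : ∃ u, t = u + 1 := ⟨t - 1, by omega⟩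
        exact ⟨2 ^ u - 1, by rw [pow_succ] at *; omega⟩) hf
      set g := homogeneousComponent (2 ^ t - 2) f with hg
      have hgg : g = homogeneousComponent (2 ^ t - 2) g := by
        rw [comp_homog (comp_mem (2 ^ t - 2) f), if_pos rfl]
      rw [hgg]
      have h31 : ∀ f ∈ Hit, (mulSq (hat i)).comp (homogeneousComponent (2 ^ t - 2)) f ∈ V31 0 (t + 1) := fun f hf => by
        refine Hit_map (φ := (mulSq (hat i)).comp (homogeneousComponent (2 ^ t - 2))) (fun k d hk g hg => ?_) hf
        simp only [LinearMap.comp_apply, mulSq_apply]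
        rw [comp_homog (Sq_homog k hg)]
        split_ifs with hdk
        · have : homogeneousComponent (NN t 0) (hat i * (Sq k g) ^ 2) ∈ V31 0 (t + 1) := by
            have := F3a (W := (V31 0 (t + 1)).comap (homogeneousComponent (NN t 0))) i hk g
              (fun f hf => Submodule.mem_sup_left ⟨comp_Hit _ hf, homog_od (NN_odd t 0) (comp_mem _ _)⟩)
              (fun p q r => by
                have hy : x q * x r * Sq (k - 1) g ∈ homog (2 ^ t - 1) := by
                  have := mul_homog (mul_homog (x_homog q) (x_homog r)) (Sq_homog (k-1) hg)
                  rwa [show 1 + 1 + (d + (k - 1)) = 2 ^ t - 1 by omega] at this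
                rw [Submodule.mem_comap, e0, comp_mulSq (x_homog p), comp_homog hy, if_pos rfl]
                exact cx p _ hy)
            exact this
          rwa [e1, comp_mulSq (hat_homog i), comp_homog (Sq_homog k hg), if_pos hdk] at this
        · simp
      exact h31 g h
    · rw [NN, comp_mulSq (hat_homog i)]
      exact V31_hat i (ih s)

end Pf

namespace Pf

/-! support lemma for lists -/
theorem supp_norm {α : Type*} [DecidableEq α] (R : List α → List α → Prop)
    (htr : ∀ L M N, R L M → R M N → R L N)
    (hp : ∀ L M, L.Perm M → R L M)
    (h : ∀ i j L, i ≠ j → R (i :: i :: j :: L) (i :: j :: j :: L)) (a : α) :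
    ∀ k L, a ∈ L → L.length - L.count a ≤ k → ∃ M, R L M ∧ L.length = M.length ∧ (∀ b, b ∈ L ↔ b ∈ M) ∧
      (∀ b, b ≠ a → M.count b ≤ 1) := by
  intro k
  induction k with
  | zero =>
    intro L ha hk
    have hc : L.count a = L.length := le_antisymm List.count_le_length (by omega)
    refine ⟨L, hp _ _ (List.Perm.refl _), rfl, fun _ => Iff.rfl, fun b hb => ?_⟩
    rw [List.count_eq_length] at hc
    rw [List.count_eq_zero_of_not_mem (fun hm => hb (hc b hm).symm)]
    omega
  | succ k ih =>
    intro L ha hk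
    by_cases hgood : ∀ b, b ≠ a → L.count b ≤ 1
    · exact ⟨L, hp _ _ (List.Perm.refl _), rfl, fun _ => Iff.rfl, hgood⟩
    push Not at hgood
    obtain ⟨b, hba, hb⟩ := hgood
    have m1 : b ∈ L := List.count_pos_iff.1 (by omega)
    have p1 := List.perm_cons_erase m1
    have m2 : b ∈ L.erase b := List.count_pos_iff.1 (by rw [List.count_erase_self]; omega)
    have p2 := List.perm_cons_erase m2
    have m3 : a ∈ (L.erase b).erase b := by
      rw [List.mem_erase_of_ne hba.symm, List.mem_erase_of_ne hba.symm]; exact ha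
    have p3 := List.perm_cons_erase m3
    set L' := ((L.erase b).erase b).erase a
    have p : L.Perm (b :: b :: a :: L') := p1.trans ((p2.trans (p3.cons b)).cons b)
    have hl := p.length_eq
    have hcnt := p.count_eq a
    simp only [List.length_cons] at hl
    rw [List.count_cons_of_ne hba, List.count_cons_of_ne hba, List.count_cons_self] at hcnt
    obtain ⟨M, hR, hlen, hs, hM⟩ := ih (b :: a :: a :: L') (by simp) (by
      simp only [List.length_cons]
      rw [List.count_cons_of_ne hba, List.count_cons_self, List.count_cons_self]; omega)
    refine ⟨M, htr _ _ _ (hp _ _ p) (htr _ _ _ (h b a L' hba) hR), ?_, fun c => ?_, hM⟩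
    · rw [← hlen]; simp only [List.length_cons]; omega
    · rw [p.mem_iff, ← hs]; simp

theorem supp_lemma {α : Type*} [DecidableEq α] (R : List α → List α → Prop)
    (hsy : ∀ L M, R L M → R M L)
    (htr : ∀ L M N, R L M → R M N → R L N)
    (hp : ∀ L M, L.Perm M → R L M)
    (h : ∀ i j L, i ≠ j → R (i :: i :: j :: L) (i :: j :: j :: L))
    {L M : List α} (hl : L.length = M.length) (hs : ∀ a, a ∈ L ↔ a ∈ M) : R L M := by
  rcases L with _ | ⟨a, L⟩
  · obtain rfl : M = [] := List.length_eq_zero_iff.1 (by simpa using hl.symm)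
    exact hp _ _ (List.Perm.refl _)
  obtain ⟨M1, r1, l1, s1, c1⟩ := supp_norm R htr hp h a _ (a :: L) (by simp) le_rfl
  obtain ⟨M2, r2, l2, s2, c2⟩ := supp_norm R htr hp h a _ M ((hs a).1 (by simp)) le_rfl
  refine htr _ _ _ r1 (htr _ _ _ (hp _ _ ?_) (hsy _ _ r2))
  have key : ∀ M : List α, (∀ b, b ≠ a → M.count b ≤ 1) →
      (M.filter (fun b => b ≠ a)).Nodup ∧ M.Perm (List.replicate (M.count a) a ++ M.filter (fun b => b ≠ a)) := by
    intro M hM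
    constructor
    · rw [List.nodup_iff_count_le_one]
      intro b
      by_cases hb : b = a
      · subst hb
        rw [List.count_eq_zero_of_not_mem (by simp)]; omega
      · rw [List.count_filter (by simpa using hb)]; exact hM b hb
    · rw [← List.filter_beq]
      exact (List.filter_append_perm (fun b => b == a) M).symm.trans (by
        apply List.Perm.append_left
        apply List.Perm.of_eq
        congr 1
        ext b
        by_cases hb : b = a <;> simp [hb])
  obtain ⟨n1, q1⟩ := key M1 c1
  obtain ⟨n2, q2⟩ := key M2 c2
  have hf : (M1.filter (fun b => b ≠ a)).Perm (M2.filter (fun b => b ≠ a)) := by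
    rw [List.perm_ext_iff_of_nodup n1 n2]
    intro b
    simp only [List.mem_filter, ← s1, ← s2, hs]
  have e1 := q1.length_eq
  have e2 := q2.length_eq
  have e3 := hf.length_eq
  rw [List.length_append, List.length_replicate] at e1 e2
  have : M1.count a = M2.count a := by omega
  rw [this] at q1
  exact q1.trans ((hf.append_left _).trans q2.symm)

theorem mem_of_eq {W : Submodule kk P4} {a b : P4} (h : a ∈ W) (e : b = a) : b ∈ W := e ▸ h

/-- congruence modulo W -/
def Eqv (W : Submodule kk P4) (f g : P4) : Prop := f + g ∈ W
theorem Eqv.rfl' {W : Submodule kk P4} {f : P4} : Eqv W f f := by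
  rw [Eqv, add_self0]; exact W.zero_mem
theorem Eqv.symm {W : Submodule kk P4} {f g : P4} (h : Eqv W f g) : Eqv W g f := by
  rw [Eqv, add_comm]; exact h
theorem Eqv.trans {W : Submodule kk P4} {f g k : P4} (h : Eqv W f g) (h2 : Eqv W g k) : Eqv W f k := by
  have := W.add_mem h h2
  rw [Eqv]
  convert this using 1
  linear_combination (-g) * two0 (ι := Fin 4)
theorem Eqv.mem {W : Submodule kk P4} {f g : P4} (h : Eqv W f g) (hg : g ∈ W) : f ∈ W := mem_of_add h hg
theorem Eqv.add {W : Submodule kk P4} {f g f' g' : P4} (h : Eqv W f g) (h' : Eqv W f' g') : Eqv W (f + f') (g + g') := by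
  have := W.add_mem h h'
  rw [Eqv]; convert this using 1; ring
theorem Eqv.mono {W W' : Submodule kk P4} (hW : W ≤ W') {f g : P4} (h : Eqv W f g) : Eqv W' f g := hW h

/-! 1-words -/
theorem w1_perm {L M : List (Fin 4)} (h : L.Perm M) : ∀ g, Eqv HitO (w1 L g) (w1 M g) := by
  induction h with
  | nil => exact fun g => .rfl'
  | cons i _ ih =>
    intro g
    have := F1o i (ih g)
    rwa [add_sq', mul_add] at this
  | swap i j L =>
    intro g
    refine ⟨?_, Submodule.add_mem _ (od_x _ _) (od_x _ _)⟩
    refine mem_of_eq (hit_xx i j (w1 L g ^ 2)) ?_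
    simp only [w1_cons]
    ring
  | trans _ _ h1 h2 => exact fun g => (h1 g).trans (h2 g)

theorem w1_supp {L M : List (Fin 4)} (hl : L.length = M.length) (hs : ∀ a, a ∈ L ↔ a ∈ M) (g : P4) :
    Eqv HitO (w1 L g) (w1 M g) := by
  refine supp_lemma (fun L M => Eqv HitO (w1 L g) (w1 M g)) (fun _ _ h => h.symm) (fun _ _ _ h h' => h.trans h')
    (fun L M h => w1_perm h g) (fun i j L _ => ?_) hl hs
  refine Eqv.trans (g := w1 (j :: j :: i :: L) g) ?_ (w1_perm (by
    exact (List.Perm.cons j (List.Perm.swap i j L)).trans (List.Perm.swap i j _)) g)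
  refine ⟨?_, Submodule.add_mem _ (od_x _ _) (od_x _ _)⟩
  refine mem_of_eq (hit_xx i j (x i * x j * w1 L g ^ 4)) ?_
  simp only [w1_cons]
  ring

/-! 3-words -/
structure Good (W Tl : Submodule kk P4) : Prop where
  hat : ∀ i, ∀ f ∈ W, hat i * f ^ 2 ∈ W
  hit : HitO ≤ W
  left : ∀ i j, ∀ z ∈ Tl, x j * (x i * z) ^ 2 ∈ W
  tl : ∀ i, ∀ z ∈ Tl, Pf.hat i * z ^ 2 ∈ Tl

theorem goodLow : Good Low ⊤ := ⟨fun i _ h => hat_Low i h, fun _ h => Hit_Low h.1, fun _ _ _ _ => x_Low _ _, fun _ _ _ => trivial⟩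
theorem goodO : Good HitO Od := ⟨fun i _ h => F3b i h, le_rfl, fun i j _ h => ⟨F4' i j h, od_x _ _⟩, fun _ _ _ => od_hat _ _⟩

theorem Good.w3 {W Tl : Submodule kk P4} (G : Good W Tl) (L) {f g} (h : Eqv W f g) : Eqv W (w3 L f) (w3 L g) := by
  induction L with
  | nil => exact h
  | cons i L ih =>
    have := G.hat i _ ih
    rwa [add_sq', mul_add] at this

theorem Good.w3_mem {W Tl : Submodule kk P4} (G : Good W Tl) (L) {f} (h : f ∈ W) : Pf.w3 L f ∈ W := by
  induction L with
  | nil => exact h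
  | cons i L ih => exact G.hat i _ ih

theorem Good.w3_tl {W Tl : Submodule kk P4} (G : Good W Tl) (L) {f} (h : f ∈ Tl) : Pf.w3 L f ∈ Tl := by
  induction L with
  | nil => exact h
  | cons i L ih => exact G.tl i _ ih

theorem Good.swap {W Tl : Submodule kk P4} (G : Good W Tl) (k l : Fin 4) {z : P4} (hz : z ∈ Tl) :
    Eqv W (Pf.hat k * (Pf.hat l * z ^ 2) ^ 2) (Pf.hat l * (Pf.hat k * z ^ 2) ^ 2) := by
  by_cases hkl : k = l
  · subst hkl; exact .rfl'
  obtain ⟨i, j, hd⟩ := dist2 hkl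
  have h1 := G.hat i _ (G.left i j z hz)
  have h2 := G.hat j _ (G.left j i z hz)
  have h3 : Pf.hat k * (Pf.hat l * z ^ 2) ^ 2 + Pf.hat l * (Pf.hat k * z ^ 2) ^ 2
      + (Pf.hat i * (x j * (x i * z) ^ 2) ^ 2 + Pf.hat j * (x i * (x j * z) ^ 2) ^ 2) ∈ W := by
    refine G.hit ⟨?_, Submodule.add_mem _ (Submodule.add_mem _ (od_hat _ _) (od_hat _ _)) (Submodule.add_mem _ (od_hat _ _) (od_hat _ _))⟩
    refine mem_of_eq (hit_xxxx k l i j (x i * x j * z ^ 2)) ?_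
    rw [hat_eq hd, hat_eq hd.sw, hat_eq hd.p3, hat_eq hd.p4]
    ring
  exact mem_of_add h3 (W.add_mem h1 h2)

theorem Good.perm {W Tl : Submodule kk P4} (G : Good W Tl) {L M : List (Fin 4)} (h : L.Perm M) :
    ∀ g ∈ Tl, Eqv W (Pf.w3 L g) (Pf.w3 M g) := by
  induction h with
  | nil => exact fun g _ => .rfl'
  | cons i _ ih => exact fun g hg => G.w3 [i] (ih g hg)
  | swap i j L => exact fun g hg => G.swap j i (G.w3_tl L hg)
  | trans _ _ h1 h2 => exact fun g hg => (h1 g hg).trans (h2 g hg)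

theorem Good.supp {W Tl : Submodule kk P4} (G : Good W Tl) {L M : List (Fin 4)} (hl : L.length = M.length)
    (hs : ∀ a, a ∈ L ↔ a ∈ M) {g : P4} (hg : g ∈ Tl) : Eqv W (Pf.w3 L g) (Pf.w3 M g) := by
  refine supp_lemma (fun L M => Eqv W (Pf.w3 L g) (Pf.w3 M g)) (fun _ _ h => h.symm) (fun _ _ _ h h' => h.trans h')
    (fun L M h => G.perm h g hg) (fun k l L hkl => ?_) hl hs
  refine Eqv.trans (g := Pf.w3 (l :: l :: k :: L) g) ?_ (G.perm (by
    exact (List.Perm.cons l (List.Perm.swap k l L)).trans (List.Perm.swap k l _)) g hg)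
  obtain ⟨i, j, hd⟩ := dist2 hkl
  set z := Pf.w3 L g
  have hz : z ∈ Tl := G.w3_tl L hg
  have h1 := G.hat i _ (G.hat i _ (G.left i j z hz))
  have h2 := G.hat j _ (G.hat j _ (G.left j i z hz))
  have h3 : Pf.hat k * (Pf.hat k * (Pf.hat l * z ^ 2) ^ 2) ^ 2 + Pf.hat l * (Pf.hat l * (Pf.hat k * z ^ 2) ^ 2) ^ 2
      + (Pf.hat i * (Pf.hat i * (x j * (x i * z) ^ 2) ^ 2) ^ 2 + Pf.hat j * (Pf.hat j * (x i * (x j * z) ^ 2) ^ 2) ^ 2) ∈ W := by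
    refine G.hit ⟨?_, Submodule.add_mem _ (Submodule.add_mem _ (od_hat _ _) (od_hat _ _)) (Submodule.add_mem _ (od_hat _ _) (od_hat _ _))⟩
    refine mem_of_eq (hit_xxxx k l i j (x k * x l * x i ^ 3 * x j ^ 3 * z ^ 4)) ?_
    rw [hat_eq hd, hat_eq hd.sw, hat_eq hd.p3, hat_eq hd.p4]
    ring
  exact mem_of_add h3 (W.add_mem h1 h2)

/-! 2-words -/
def pr : Fin 6 → Fin 4 × Fin 4 := ![(0, 1), (0, 2), (0, 3), (1, 2), (1, 3), (2, 3)]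
def pp (d : Fin 6) : P4 := x (pr d).1 * x (pr d).2
def w6 (L : List (Fin 6)) (g : P4) : P4 := L.foldr (fun i f => pp i * f ^ 2) g
@[simp] theorem w6_nil (g) : w6 [] g = g := rfl
theorem w6_cons (i L g) : w6 (i :: L) g = pp i * (w6 L g) ^ 2 := rfl
theorem w6_append (L M g) : w6 (L ++ M) g = w6 L (w6 M g) := by simp [w6]
theorem w6_add (L f g) : w6 L (f + g) = w6 L f + w6 L g := by
  induction L with
  | nil => rfl
  | cons i L ih => simp only [w6_cons, ih, add_sq', mul_add]

def idx (i j : Fin 4) : Fin 6 :=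
  (![![0, 0, 1, 2], ![0, 0, 3, 4], ![1, 3, 0, 5], ![2, 4, 5, 0]] : Fin 4 → Fin 4 → Fin 6) i j

theorem pr_idx {i j : Fin 4} (h : i ≠ j) : pr (idx i j) = (i, j) ∨ pr (idx i j) = (j, i) := by
  revert i j; decide

theorem pp_idx {i j : Fin 4} (h : i ≠ j) : pp (idx i j) = x i * x j := by
  rcases pr_idx h with e | e
  · rw [pp, e]
  · rw [pp, e]; ring

theorem idx_comm (i j : Fin 4) : idx i j = idx j i := by revert i j; decide

theorem pp_hit (d : Fin 6) {f : P4} (h : f ∈ Hit) : pp d * f ^ 2 ∈ Hit := F2 _ _ h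

theorem w6_eqv (L : List (Fin 6)) {f g : P4} (h : Eqv Hit f g) : Eqv Hit (w6 L f) (w6 L g) := by
  induction L with
  | nil => exact h
  | cons i L ih =>
    have := pp_hit i ih
    rwa [add_sq', mul_add] at this

theorem w6_hit (L) {g} (h : g ∈ Hit) : w6 L g ∈ Hit := by
  induction L with
  | nil => exact h
  | cons i L ih => exact pp_hit i ih

theorem w2_w6 (D : List (Fin 4 × Fin 4)) (h : Ok2 D) (g : P4) :
    ∃ D' : List (Fin 6), D'.length = D.length ∧ w2 D g = w6 D' g := by
  refine ⟨D.map (fun p => idx p.1 p.2), by simp, ?_⟩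
  induction D with
  | nil => rfl
  | cons p D ih =>
    rw [w2_cons, List.map_cons, w6_cons, ih (fun q hq => h q (List.mem_cons_of_mem _ hq)), pp_idx (h p (by simp))]

theorem pair_cases (d e : Fin 6) (h : d ≠ e) :
    (∃ a b c, a ≠ b ∧ a ≠ c ∧ b ≠ c ∧ d = idx a b ∧ e = idx a c) ∨
    (d.val + e.val = 5 ∧ ∃ a b c f, Dist a b c f ∧ d = idx a b ∧ e = idx c f) := by
  revert d e; decide

/-- Plücker -/
theorem pluck {a b c d : Fin 4} (hd : Dist a b c d) (h : P4) :
    pp (idx c d) * (pp (idx a b) * h ^ 2) ^ 2 + pp (idx b d) * (pp (idx a c) * h ^ 2) ^ 2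
     + pp (idx b c) * (pp (idx a d) * h ^ 2) ^ 2 ∈ Hit := by
  obtain ⟨h1, h2, h3, h4, h5, h6⟩ := hd
  rw [pp_idx h1, pp_idx h2, pp_idx h3, pp_idx h4, pp_idx h5, pp_idx h6]
  convert hit_xxx b c d (x a * h ^ 2) using 1
  ring

theorem sw_dis {a b c d : Fin 4} (hd : Dist a b c d) (h : P4) :
    Eqv Hit (pp (idx a b) * (pp (idx c d) * h ^ 2) ^ 2) (pp (idx c d) * (pp (idx a b) * h ^ 2) ^ 2) := by
  have q1 : Sq 2 (x a * (x b * (x c * (x d * (h ^ 2) ^ 2)))) =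
    (x a ^ 2 * x b ^ 2 * x c * x d + x a ^ 2 * x b * x c ^ 2 * x d + x a ^ 2 * x b * x c * x d ^ 2
      + x a * x b ^ 2 * x c ^ 2 * x d + x a * x b ^ 2 * x c * x d ^ 2 + x a * x b * x c ^ 2 * x d ^ 2) * h ^ 4 := by
    have s2 : Sq 2 ((h ^ 2) ^ 2) = 0 := by
      have := Sq_sq_even 1 (h ^ 2)
      rw [D_sq] at this
      simpa using this
    have s1 : Sq 1 ((h ^ 2) ^ 2) = 0 := D_sq _
    have s2 : Sq (1 + 1) ((h ^ 2) ^ 2) = 0 := s2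
    rw [show Sq (ι := Fin 4) 2 = Sq (1 + 1) from rfl]
    simp only [Sq_X_mul 1, s2]
    simp only [show Sq (ι := Fin 4) 1 = Sq (0 + 1) from rfl, Sq_X_mul 0]
    simp only [show Sq (ι := Fin 4) (0 + 1) = Sq 1 from rfl, s1, Sq_zero]
    ring
  have q2 := q1 ▸ Sq_mem_Hit 2 (by norm_num) _
  have p1 := hit_xxx b c d (x a * h ^ 2)
  have p2 := hit_xxx a c d (x b * h ^ 2)
  obtain ⟨h1, h2, h3, h4, h5, h6⟩ := hd
  rw [pp_idx h1, pp_idx h6, Eqv]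
  refine mem_of_eq (Submodule.add_mem _ (Submodule.add_mem _ p1 p2) q2) ?_
  linear_combination (-(x a ^ 2 * x b ^ 2 * x c * x d + x a ^ 2 * x b * x c ^ 2 * x d + x a ^ 2 * x b * x c * x d ^ 2
      + x a * x b ^ 2 * x c ^ 2 * x d + x a * x b ^ 2 * x c * x d ^ 2) * h ^ 4) * two0 (ι := Fin 4)

end Pf

namespace Pf

theorem sw_ov {a b c : Fin 4} (hab : a ≠ b) (hac : a ≠ c) (h : P4) :
    Eqv Hit (pp (idx a b) * (pp (idx a c) * h ^ 2) ^ 2) (pp (idx a c) * (pp (idx a b) * h ^ 2) ^ 2) := by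
  rw [pp_idx hab, pp_idx hac, Eqv]
  refine mem_of_eq (Submodule.add_mem _ (hit_xxx a b c (x a * h ^ 2)) (F2 b c (sqx_mem a h))) ?_
  linear_combination (-(x a ^ 4 * x b * x c * h ^ 4)) * two0 (ι := Fin 4)

theorem sw6 (d e : Fin 6) (h : P4) : Eqv Hit (pp d * (pp e * h ^ 2) ^ 2) (pp e * (pp d * h ^ 2) ^ 2) := by
  by_cases hde : d = e
  · subst hde; exact .rfl'
  rcases pair_cases d e hde with ⟨a, b, c, h1, h2, _, rfl, rfl⟩ | ⟨_, a, b, c, f, hd, rfl, rfl⟩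
  · exact sw_ov h1 h2 h
  · exact sw_dis hd h

theorem w6_perm {L M : List (Fin 6)} (h : L.Perm M) : ∀ g, Eqv Hit (w6 L g) (w6 M g) := by
  induction h with
  | nil => exact fun g => .rfl'
  | cons i _ ih => exact fun g => w6_eqv [i] (ih g)
  | swap i j L => exact fun g => sw6 j i (w6 L g)
  | trans _ _ h1 h2 => exact fun g => (h1 g).trans (h2 g)

theorem ov6 {d e : Fin 6} (hde : d ≠ e) (h5 : d.val + e.val ≠ 5) (g : P4) :
    Eqv Hit (w6 [d, d, e] g) (w6 [d, e, e] g) := by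
  rcases pair_cases d e hde with ⟨a, b, c, hab, hac, hbc, rfl, rfl⟩ | ⟨h, _⟩
  · refine Eqv.trans (g := w6 [idx a c, idx a c, idx a b] g) ?_ (w6_perm (by
      exact (List.Perm.cons _ (List.Perm.swap _ _ _)).trans (List.Perm.swap _ _ _)) g)
    have h2 := w6_hit [idx b c, idx b c] (sqx_mem a g)
    simp only [w6_cons, w6_nil, pp_idx hab, pp_idx hac, pp_idx hbc] at h2 ⊢
    refine mem_of_eq (Submodule.add_mem _ (hit_xxx a b c (x a ^ 3 * x b * x c * g ^ 4)) h2) ?_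
    linear_combination (-(x a ^ 8 * x b ^ 3 * x c ^ 3 * g ^ 8)) * two0 (ι := Fin 4)
  · exact absurd h h5

def ne3 (j : Fin 4) : List (Fin 4) := (![[1, 2, 3], [0, 2, 3], [0, 1, 3], [0, 1, 2]] : Fin 4 → List (Fin 4)) j
theorem ne3_perm {j a b c : Fin 4} (h : Dist j a b c) : (ne3 j).Perm [a, b, c] := by
  revert j a b c; decide
theorem ne3_sum {j a b c : Fin 4} (h : Dist j a b c) (F : Fin 4 → P4) : ((ne3 j).map F).sum = F a + (F b + F c) := by
  rw [((ne3_perm h).map F).sum_eq]; simp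
theorem mem_ne3 {j l : Fin 4} : l ∈ ne3 j ↔ l ≠ j := by revert j l; decide

theorem sum_mem_eqv {W : Submodule kk P4} {ι : Type*} (l : List ι) (F G : ι → P4) (h : ∀ i ∈ l, Eqv W (F i) (G i)) :
    Eqv W (l.map F).sum (l.map G).sum := by
  induction l with
  | nil => exact .rfl'
  | cons a l ih =>
    simp only [List.map_cons, List.sum_cons]
    exact (h a (by simp)).add (ih fun i hi => h i (List.mem_cons_of_mem _ hi))

/-- incidence relation on the last 3-letter -/
theorem incI (j : Fin 4) (y : P4) : ((ne3 j).map fun l => hat l * (pp (idx l j) * y ^ 2) ^ 2).sum ∈ Low := by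
  obtain ⟨a, b, c, hd⟩ := dist1 j
  rw [ne3_sum hd]
  have h1 := hat_Low j (Hit_Low (sqx_mem j y))
  rw [hat_eq hd] at h1
  rw [hat_eq hd.sw, hat_eq hd.p3, hat_eq hd.p4]
  obtain ⟨h2, h3, h4, -, -, -⟩ := hd
  rw [pp_idx h2.symm, pp_idx h3.symm, pp_idx h4.symm]
  refine mem_of_eq (Submodule.add_mem _ (Hit_Low (hit_xxxx j a b c (x j * y ^ 2))) h1) ?_
  linear_combination (-(x j ^ 4 * x a * x b * x c * y ^ 4)) * two0 (ι := Fin 4)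

theorem w3_rep (l : Fin 4) (a : ℕ) (g : P4) :
    w3 (List.replicate a l) (x l * g) = x l * ((x 0 * x 1 * x 2 * x 3) ^ (2 ^ a - 1) * g ^ 2 ^ a) := by
  induction a with
  | zero => simp
  | succ a ih =>
    obtain ⟨i, j, k, hd⟩ := dist1 l
    rw [List.replicate_succ, w3_cons, ih, hat_eq hd, prod4 hd]
    have : 2 ^ (a + 1) - 1 = (2 ^ a - 1) * 2 + 1 := by have := Nat.one_le_two_pow (n := a); omega
    rw [this, pow_succ (2 : ℕ) a, pow_mul g, pow_succ _ ((2 ^ a - 1) * 2), pow_mul _ _ 2]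
    ring

theorem incF (a : ℕ) (j : Fin 4) (y : P4) :
    ((ne3 j).map fun l => w3 (List.replicate (a + 1) l) (pp (idx l j) * y ^ 2)).sum ∈ Low := by
  obtain ⟨p, q, r, hd⟩ := dist1 j
  have h1 : w3 (List.replicate (a + 1) j) (x j * (x j * y ^ 2)) ∈ Low :=
    w3_low _ (mem_of_eq (Hit_Low (sqx_mem j y)) (by ring))
  have h2 : hat j * ((x j * ((x 0 * x 1 * x 2 * x 3) ^ (2 ^ a - 1) * (x j * y ^ 2) ^ 2 ^ a)) ) ^ 2 ∈ Low := by
    rw [← w3_rep, ← w3_cons, ← List.replicate_succ]; exact h1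
  have e : ∀ l ∈ ne3 j, w3 (List.replicate (a + 1) l) (pp (idx l j) * y ^ 2) =
      hat l * (x l * ((x 0 * x 1 * x 2 * x 3) ^ (2 ^ a - 1) * (x j * y ^ 2) ^ 2 ^ a)) ^ 2 := by
    intro l hl
    rw [pp_idx (mem_ne3.1 hl), mul_assoc, List.replicate_succ, w3_cons, w3_rep]
  rw [List.map_congr_left e]
  generalize (x 0 * x 1 * x 2 * x 3) ^ (2 ^ a - 1) * (x j * y ^ 2) ^ 2 ^ a = z at *
  rw [ne3_sum hd]
  rw [hat_eq hd] at h2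
  rw [hat_eq hd.sw, hat_eq hd.p3, hat_eq hd.p4]
  refine mem_of_eq (Submodule.add_mem _ (Hit_Low (hit_xxxx j p q r z)) h2) ?_
  linear_combination (-(x j ^ 2 * x p * x q * x r * z ^ 2)) * two0 (ι := Fin 4)

/-- incidence for 3/1 words -/
theorem inc1 (y : P4) : ((List.finRange 4).map fun l => hat l * (x l * y ^ 2) ^ 2).sum ∈ HitO := by
  rw [show List.finRange 4 = [0, 1, 2, 3] by decide]
  simp only [List.map_cons, List.map_nil, List.sum_cons, List.sum_nil, add_zero]
  refine ⟨mem_of_eq (hit_xxxx 0 1 2 3 (y ^ 2)) ?_, ?_⟩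
  · rw [hat0, hat1, hat2, hat3]; ring
  · exact Submodule.add_mem _ (od_hat _ _) (Submodule.add_mem _ (od_hat _ _) (Submodule.add_mem _ (od_hat _ _) (od_hat _ _)))

/-! W2 -/
def tri (y l m c : Fin 4) : List (List (Fin 6)) :=
  if l ≠ m then (if c = l then [] else [[(idx y l).rev, (idx m l).rev, idx l c]])
  else
    let k := (pr (idx y m).rev).1
    let n := (pr (idx y m).rev).2
    (if c = k then [] else [[idx n y, idx n m, idx k c]]) ++ (if c = n then [] else [[idx k y, idx k m, idx n c]])

theorem rev_idx {i j k l : Fin 4} (h : Dist i j k l) : (idx i j).rev = idx k l := by revert i j k l; decide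
theorem dist_pr {y m : Fin 4} (h : y ≠ m) : Dist y m (pr (idx y m).rev).1 (pr (idx y m).rev).2 := by revert y m; decide

theorem if_word (d e : Fin 6) (k c : Fin 4) (g : P4) :
    Eqv Hit (w6 [d, e] (x k * x c * g ^ 2)) (((if c = k then [] else [[d, e, idx k c]]).map fun D => w6 D g).sum) := by
  by_cases hc : c = k
  · subst hc
    rw [if_pos rfl, List.map_nil, List.sum_nil, Eqv, add_zero]
    exact w6_hit _ (mem_of_eq (sqx_mem c g) (by ring))
  · rw [if_neg hc, List.map_cons, List.map_nil, List.sum_cons, List.sum_nil, add_zero, ← pp_idx (Ne.symm hc)]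
    exact .rfl'

theorem tri_eqv {y l : Fin 4} (hyl : y ≠ l) (m c : Fin 4) (g : P4) :
    Eqv Hit (pp (idx y l).rev * (x l * (hat m * (x c * g ^ 2) ^ 2)) ^ 2) (((tri y l m c).map fun D => w6 D g).sum) := by
  by_cases hm : l = m
  · subst hm
    rw [tri, if_neg (by simp)]
    have hd := dist_pr hyl
    have hR := rev_idx hd
    dsimp only
    generalize (idx y l).rev = q at hd hR ⊢
    generalize (pr q).1 = k at hd hR ⊢
    generalize (pr q).2 = n at hd hR ⊢
    rw [hR]
    simp only [List.map_append, List.sum_append]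
    have e3 := (if_word (idx n y) (idx n l) k c g).add (if_word (idx k y) (idx k l) n c g)
    refine Eqv.trans ?_ e3
    clear e3
    rw [hat_eq hd.sw]
    obtain ⟨h1, h2, h3, h4, h5, h6⟩ := hd
    simp only [w6_cons, w6_nil, pp_idx h3.symm, pp_idx h5.symm, pp_idx h2.symm, pp_idx h4.symm, pp_idx h6]
    refine mem_of_eq (hit_xxx k n y (x k * x n * x l * (x c * g ^ 2) ^ 2)) ?_
    ring
  · rw [tri, if_pos hm]
    refine Eqv.trans (Eqv.symm ?_) (if_word _ _ l c g)
    obtain ⟨p, q, hd⟩ := dist2 (Ne.symm hm)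
    rw [rev_idx hd, hat_eq hd]
    simp only [w6_cons, w6_nil, pp_idx hd.2.2.2.2.2]
    rw [show (x p * x q * (x l * x c * g ^ 2) ^ 2) = x l * (x l * x p * x q * (x c * g ^ 2) ^ 2) by ring]
    exact .rfl'

theorem inc4 (j : Fin 4) (h : P4) :
    Eqv Hit (hat j * (x 0 * x 1 * x 2 * x 3 * h ^ 2) ^ 2)
      ((ne3 j).map fun l => hat l * (pp (idx j l).rev * (x l * h) ^ 2) ^ 2).sum := by
  obtain ⟨a, b, c, hd⟩ := dist1 j
  rw [ne3_sum hd, prod4 hd, rev_idx hd, rev_idx (k := a) (l := c) (i := j) (j := b) (by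
    obtain ⟨h1, h2, h3, h4, h5, h6⟩ := hd; exact ⟨h2, h1, h3, h4.symm, h6, h5⟩), rev_idx (k := a) (l := b) (i := j) (j := c) (by
    obtain ⟨h1, h2, h3, h4, h5, h6⟩ := hd; exact ⟨h3, h1, h2, h5.symm, h6.symm, h4⟩),
    hat_eq hd, hat_eq hd.sw, hat_eq hd.p3, hat_eq hd.p4, pp_idx hd.2.2.2.1, pp_idx hd.2.2.2.2.1, pp_idx hd.2.2.2.2.2]
  refine mem_of_eq (hit_xxxx j a b c (x a * x b * x c * h ^ 2)) ?_
  ring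

def SV (l : List (List (Fin 4) × List (Fin 6))) (g : P4) : P4 := (l.map fun s => w3 s.1 (w6 s.2 g)).sum
theorem SV_append (l m g) : SV (l ++ m) g = SV l g + SV m g := by simp [SV]
theorem SV_cons (a l g) : SV (a :: l) g = w3 a.1 (w6 a.2 g) + SV l g := by simp [SV]
theorem SV_nil (g) : SV [] g = 0 := by simp [SV]

theorem w3_sum {ι : Type*} (L) (l : List ι) (F : ι → P4) : w3 L (l.map F).sum = (l.map fun i => w3 L (F i)).sum := by
  induction l with
  | nil =>
    simp only [List.map_nil, List.sum_nil]
    have := w3_add L 0 0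
    simpa using this
  | cons a l ih => simp [w3_add, ih]

def half (i j m c : Fin 4) : List (List (Fin 4) × List (Fin 6)) :=
  (ne3 j).flatMap fun l => (tri j l m c).map fun D => ([i, l], D)

theorem w3_pair (i j : Fin 4) (y : P4) : w3 [i, j] y = w3 [i] (hat j * y ^ 2) := by
  rw [w3_cons, w3_cons, w3_nil, w3_cons, w3_nil]

theorem half_eqv (i j m c : Fin 4) (g : P4) :
    Eqv Low (w3 [i, j] (x 0 * x 1 * x 2 * x 3 * (hat m * (x c * g ^ 2) ^ 2) ^ 2)) (SV (half i j m c) g) := by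
  have h0 := goodLow.w3 [i] ((inc4 j (hat m * (x c * g ^ 2) ^ 2)).mono Hit_Low)
  rw [w3_pair]
  refine Eqv.trans h0 ?_
  clear h0
  rw [w3_sum, half, SV]
  have : ∀ n : List (Fin 4), (∀ l ∈ n, j ≠ l) → Eqv Low (n.map fun l => w3 [i] (hat l * (pp (idx j l).rev * (x l * (hat m * (x c * g ^ 2) ^ 2)) ^ 2) ^ 2)).sum
      (((n.flatMap fun l => (tri j l m c).map fun D => ([i, l], D)).map fun s => w3 s.1 (w6 s.2 g)).sum) := by
    intro n
    induction n with
    | nil => intro _; exact .rfl'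
    | cons l n ih =>
      intro hn
      simp only [List.map_cons, List.sum_cons, List.flatMap_cons, List.map_append, List.sum_append]
      refine Eqv.add ?_ (ih fun l hl => hn l (List.mem_cons_of_mem _ hl))
      have := goodLow.w3 [i, l] ((tri_eqv (hn l (by simp)) m c g).mono Hit_Low)
      rw [w3_sum] at this
      rw [w3_pair] at this
      rw [List.map_map, Function.comp_def]
      dsimp only
      exact this
  exact this _ fun l hl => (mem_ne3.1 hl).symm

theorem W2 (i j m c : Fin 4) (g : P4) : SV (half i j m c ++ half j i m c) g ∈ Low := by
  rw [SV_append]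
  have h1 := half_eqv i j m c g
  have h2 := half_eqv j i m c g
  simp only [w3_cons, w3_nil] at h1 h2
  generalize x 0 * x 1 * x 2 * x 3 * (hat m * (x c * g ^ 2) ^ 2) ^ 2 = z at h1 h2
  exact (h1.symm.trans (goodLow.swap i j trivial)).trans h2

end Pf

namespace Pf

abbrev Sy := List (Fin 4) × List (Fin 6)
def nf6' : List (Fin 6) → List (Fin 6)
  | [d, e, f] => if e = f ∧ d ≠ e ∧ d.val + e.val ≠ 5 then [d, d, e] else [d, e, f]
  | D => D
def nf (s : Sy) : Sy := (s.1.insertionSort (· ≤ ·), nf6' (s.2.insertionSort (· ≤ ·)))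

theorem nf6'_eqv (D g) : Eqv Hit (w6 D g) (w6 (nf6' D) g) := by
  unfold nf6'
  split
  · rename_i d e f
    split
    · rename_i h
      obtain ⟨rfl, h1, h2⟩ := h
      exact (ov6 h1 h2 g).symm
    · exact .rfl'
  · exact .rfl'

theorem nf_eqv (s : Sy) (g) : Eqv Low (w3 s.1 (w6 s.2 g)) (w3 (nf s).1 (w6 (nf s).2 g)) := by
  refine Eqv.trans (goodLow.perm (List.perm_insertionSort (· ≤ ·) s.1).symm _ trivial) (goodLow.w3 _ ?_)
  exact ((w6_perm (List.perm_insertionSort (· ≤ ·) s.2).symm g).trans (nf6'_eqv _ g)).mono Hit_Low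

def tog (s : Sy) (l : List Sy) : List Sy := if s ∈ l then l.erase s else s :: l
theorem SV_tog (s l g) : SV (tog s l) g = w3 s.1 (w6 s.2 g) + SV l g := by
  unfold tog
  split
  · rename_i h
    have : SV l g = SV (s :: l.erase s) g := ((List.perm_cons_erase h).map _).sum_eq
    rw [this, SV_cons, ← add_assoc, add_self0, zero_add]
  · rw [SV_cons]

def canc (l : List Sy) : List Sy := l.foldr (fun s m => tog (nf s) m) []
theorem canc_eqv (l g) : Eqv Low (SV l g) (SV (canc l) g) := by
  induction l with
  | nil => exact .rfl'
  | cons s l ih =>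
    rw [show canc (s :: l) = tog (nf s) (canc l) from rfl, SV_tog, SV_cons]
    exact (nf_eqv s g).add ih

inductive Rl where
  | P (a b : Fin 4) (t : Fin 6)
  | I (a j : Fin 4) (e f : Fin 6)
  | F (j : Fin 4) (e f : Fin 6)
  | W (i j m c : Fin 4)

def Rl.syms : Rl → List Sy
  | .P a b t => [([a, b], [t, 5, 0]), ([a, b], [t, 4, 1]), ([a, b], [t, 3, 2])]
  | .I a j e f => (ne3 j).map fun l => ([a, l], [idx l j, e, f])
  | .F j e f => (ne3 j).map fun l => ([l, l], [idx l j, e, f])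
  | .W i j m c => half i j m c ++ half j i m c

theorem Rl.low (r : Rl) (g : P4) : SV r.syms g ∈ Low := by
  cases r with
  | P a b t =>
    have h : Dist 0 1 2 3 := by decide
    have := pluck h g
    rw [show idx 2 3 = 5 by decide, show idx 0 1 = 0 by decide, show idx 1 3 = 4 by decide, show idx 0 2 = 1 by decide,
      show idx 1 2 = 3 by decide, show idx 0 3 = 2 by decide] at this
    have := w3_low [a, b] (Hit_Low (w6_hit [t] this))
    rw [w6_add, w6_add, w3_add, w3_add, add_assoc] at this
    simp only [Rl.syms, SV_cons, SV_nil, add_zero]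
    simp only [w6_cons, w6_nil] at this ⊢
    exact this
  | I a j e f =>
    have := w3_low [a] (incI j (w6 [e, f] g))
    rw [w3_sum] at this
    rw [Rl.syms, SV, List.map_map]
    refine mem_of_eq this ?_
    refine congrArg List.sum ?_
    refine List.map_congr_left fun l _ => ?_
    rw [Function.comp_apply, w6_cons, w3_cons, w3_cons, w3_cons, w3_nil, w3_nil]
  | F j e f =>
    have := incF 1 j (w6 [e, f] g)
    rw [Rl.syms, SV, List.map_map]
    refine mem_of_eq this ?_
    refine congrArg List.sum ?_
    refine List.map_congr_left fun l _ => ?_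
    rw [Function.comp_apply, w6_cons]
    rfl
  | W i j m c =>
    rw [Rl.syms]
    exact W2 i j m c g

theorem rls_low (l : List Rl) (g : P4) : SV (l.flatMap Rl.syms) g ∈ Low := by
  induction l with
  | nil => exact Submodule.zero_mem _
  | cons r l ih => rw [List.flatMap_cons, SV_append]; exact Submodule.add_mem _ (r.low g) ih

def act6 (π : Fin 4 → Fin 4) (d : Fin 6) : Fin 6 := idx (π (pr d).1) (π (pr d).2)
def Rl.act (π : Fin 4 → Fin 4) : Rl → Rl
  | .P a b t => .P (π a) (π b) (act6 π t)
  | .I a j e f => .I (π a) (π j) (act6 π e) (act6 π f)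
  | .F j e f => .F (π j) (act6 π e) (act6 π f)
  | .W i j m c => .W (π i) (π j) (π m) (π c)

open Rl in
def certs : List (Fin 4 × List Rl) := [
  (0, [I 0 1 0 5, I 2 1 3 5, I 3 1 4 5, F 1 5 5]),
  (2, [P 0 2 0, I 2 3 0 3, I 3 2 0 4, I 0 1 0 5, F 1 0 5, I 2 1 3 5, I 2 1 4 5, I 3 1 4 5, F 1 4 5, I 2 1 5 5,
    W 0 1 2 1]),
  (1, [P 0 1 2, I 0 0 0 5, I 0 3 1 1, F 3 1 3, I 1 2 1 4, I 2 1 1 5, I 0 3 1 5, I 0 2 2 2, I 0 2 2 3, I 0 2 2 4,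
    I 1 2 2 4, F 2 2 4, I 0 2 2 5, I 1 3 3 3, I 1 3 3 4, I 3 0 4 5, I 1 1 4 5, I 1 1 5 5, W 0 1 3 3, W 0 3 1 3,
    W 1 3 0 3])]

def perms : List (Fin 4 → Fin 4) :=
  ([[0, 1, 2, 3], [0, 1, 3, 2], [0, 2, 1, 3], [0, 2, 3, 1], [0, 3, 1, 2], [0, 3, 2, 1],
   [1, 0, 2, 3], [1, 0, 3, 2], [1, 2, 0, 3], [1, 2, 3, 0], [1, 3, 0, 2], [1, 3, 2, 0],
   [2, 0, 1, 3], [2, 0, 3, 1], [2, 1, 0, 3], [2, 1, 3, 0], [2, 3, 0, 1], [2, 3, 1, 0],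
   [3, 0, 1, 2], [3, 0, 2, 1], [3, 1, 0, 2], [3, 1, 2, 0], [3, 2, 0, 1], [3, 2, 1, 0]] : List (List (Fin 4))).map
   fun l i => l.getD i.val 0

def tgt (a b : Fin 4) (d : Fin 6) : List Sy := [([a, b], [d, d, d.rev]), ([a, b], [d, d.rev, d.rev])]

def chk (a b : Fin 4) (d : Fin 6) : Bool :=
  perms.any fun π => certs.any fun c => (decide (π 0 = a) && (decide (π c.1 = b) && decide (act6 π 0 = d))) &&
    (canc (tgt a b d ++ (c.2.map (Rl.act π)).flatMap Rl.syms)).isEmpty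

set_option maxRecDepth 100000 in
theorem chk_all : ∀ a b : Fin 4, a ≤ b → ∀ d : Fin 6, (chk a b d || chk a b d.rev || chk b a d || chk b a d.rev) = true := by
  decide +kernel

theorem dis_of_chk {a b d} (h : chk a b d = true) (g : P4) :
    Eqv Low (w3 [a, b] (w6 [d, d, d.rev] g)) (w3 [a, b] (w6 [d, d.rev, d.rev] g)) := by
  rw [chk, List.any_eq_true] at h
  obtain ⟨π, -, h⟩ := h
  rw [List.any_eq_true] at h
  obtain ⟨c, -, h⟩ := h
  rw [Bool.and_eq_true, List.isEmpty_iff] at h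
  have h1 := canc_eqv (tgt a b d ++ (c.2.map (Rl.act π)).flatMap Rl.syms) g
  rw [h.2, SV_append, SV_nil, Eqv, add_zero] at h1
  have h2 := mem_of_add h1 (rls_low _ g)
  rw [tgt, SV_cons, SV_cons, SV_nil, add_zero] at h2
  exact h2

theorem dis_rev {L d} {g : P4} (h : Eqv Low (w3 L (w6 [d.rev, d.rev, d.rev.rev] g)) (w3 L (w6 [d.rev, d.rev.rev, d.rev.rev] g))) :
    Eqv Low (w3 L (w6 [d, d, d.rev] g)) (w3 L (w6 [d, d.rev, d.rev] g)) := by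
  rw [Fin.rev_rev] at h
  have hp : ∀ {A B : List (Fin 6)}, A.Perm B → Eqv Low (w3 L (w6 A g)) (w3 L (w6 B g)) := fun p =>
    goodLow.w3 L ((w6_perm p g).mono Hit_Low)
  refine ((hp ?_).trans h.symm).trans (hp ?_)
  · exact (List.Perm.cons _ (List.Perm.swap _ _ _)).trans (List.Perm.swap _ _ _)
  · exact (List.Perm.cons _ (List.Perm.swap _ _ _)).trans (List.Perm.swap _ _ _)

theorem dis_sw {a b d} {g : P4} (h : Eqv Low (w3 [b, a] (w6 [d, d, d.rev] g)) (w3 [b, a] (w6 [d, d.rev, d.rev] g))) :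
    Eqv Low (w3 [a, b] (w6 [d, d, d.rev] g)) (w3 [a, b] (w6 [d, d.rev, d.rev] g)) :=
  ((goodLow.perm (List.Perm.swap _ _ _) _ trivial).trans h).trans (goodLow.perm (List.Perm.swap _ _ _) _ trivial)

theorem dis2 (a b : Fin 4) (d : Fin 6) (g : P4) :
    Eqv Low (w3 [a, b] (w6 [d, d, d.rev] g)) (w3 [a, b] (w6 [d, d.rev, d.rev] g)) := by
  have key : ∀ a b : Fin 4, a ≤ b → Eqv Low (w3 [a, b] (w6 [d, d, d.rev] g)) (w3 [a, b] (w6 [d, d.rev, d.rev] g)) := by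
    intro a b hab
    have := chk_all a b hab d
    simp only [Bool.or_eq_true] at this
    rcases this with ((h | h) | h) | h
    · exact dis_of_chk h g
    · exact dis_rev (dis_of_chk h g)
    · exact dis_sw (dis_of_chk h g)
    · exact dis_sw (dis_rev (dis_of_chk h g))
  rcases le_total a b with h | h
  · exact key a b h
  · exact dis_sw (key b a h)

theorem supp6 {L : List (Fin 4)} (hL : 2 ≤ L.length) {D E : List (Fin 6)} (hl : D.length = E.length)
    (hs : ∀ d, d ∈ D ↔ d ∈ E) (g : P4) : Eqv Low (w3 L (w6 D g)) (w3 L (w6 E g)) := by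
  obtain ⟨L0, a, b, rfl⟩ : ∃ L0 a b, L = L0 ++ [a, b] := by
    refine ⟨L.take (L.length - 2), L[L.length - 2], L[L.length - 1], ?_⟩
    conv_lhs => rw [← List.take_append_drop (L.length - 2) L]
    congr 1
    rw [List.drop_eq_getElem_cons (by omega), List.drop_eq_getElem_cons (by omega), List.drop_eq_nil_of_le (by omega)]
    congr 3
    omega
  refine supp_lemma (fun D E => Eqv Low (w3 (L0 ++ [a, b]) (w6 D g)) (w3 (L0 ++ [a, b]) (w6 E g)))
    (fun _ _ h => h.symm) (fun _ _ _ h h' => h.trans h')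
    (fun L M h => goodLow.w3 _ ((w6_perm h g).mono Hit_Low)) (fun i j L hij => ?_) hl hs
  by_cases h5 : i.val + j.val = 5
  · obtain rfl : j = i.rev := by ext; rw [Fin.val_rev]; omega
    rw [w3_append, w3_append]
    exact goodLow.w3 L0 (dis2 a b i (w6 L g))
  · exact goodLow.w3 _ ((ov6 hij h5 (w6 L g)).mono Hit_Low)

end Pf

namespace Pf

/-! supports as bit masks -/
def Sup {n : ℕ} (L : List (Fin n)) (S : ℕ) : Prop := ∀ i : Fin n, i ∈ L ↔ S.testBit i.val = true
def bits (n S : ℕ) : List (Fin n) := (List.finRange n).filter fun i => S.testBit i.val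
def pc (n S : ℕ) : ℕ := (bits n S).length
def mask {n : ℕ} (L : List (Fin n)) : ℕ := L.foldr (fun i m => m ||| 1 <<< i.val) 0

theorem mem_bits {n S : ℕ} (i : Fin n) : i ∈ bits n S ↔ S.testBit i.val = true := by simp [bits]

theorem tb_one (i j : ℕ) : (1 <<< i).testBit j = decide (i = j) := by
  rw [Nat.one_shiftLeft, Nat.testBit_two_pow]

theorem Sup.app {n : ℕ} {L : List (Fin n)} {S : ℕ} (h : Sup L S) (i : Fin n) : Sup (L ++ [i]) (S ||| 1 <<< i.val) := by
  intro j
  rw [List.mem_append, h j, List.mem_singleton, Nat.testBit_or, tb_one, Bool.or_eq_true, decide_eq_true_eq, Fin.ext_iff,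
    eq_comm (a := j.val)]
theorem Sup.cons {n : ℕ} {L : List (Fin n)} {S : ℕ} (h : Sup L S) (i : Fin n) : Sup (i :: L) (S ||| 1 <<< i.val) := by
  intro j
  rw [← h.app i j]; simp [or_comm]

theorem sup_nil {n : ℕ} : Sup ([] : List (Fin n)) 0 := by intro i; simp
theorem sup_rep {n : ℕ} (k : ℕ) (i : Fin n) : Sup (List.replicate (k + 1) i) (1 <<< i.val) := by
  intro j
  rw [tb_one, List.mem_replicate, decide_eq_true_eq, Fin.ext_iff, eq_comm (a := j.val)]; simp

theorem sup_mask {n : ℕ} (L : List (Fin n)) : Sup L (mask L) := by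
  induction L with
  | nil => exact sup_nil
  | cons i L ih => exact ih.cons i

theorem or_lt {n S : ℕ} (h : S < 2 ^ n) (i : Fin n) : S ||| 1 <<< i.val < 2 ^ n := by
  refine Nat.or_lt_two_pow h ?_
  rw [Nat.one_shiftLeft]; exact Nat.pow_lt_pow_right (by norm_num) i.2

theorem mask_lt {n : ℕ} (L : List (Fin n)) : mask L < 2 ^ n := by
  induction L with
  | nil => exact Nat.two_pow_pos n
  | cons i L ih => exact or_lt ih i

theorem pc_le {n : ℕ} {L : List (Fin n)} {S : ℕ} (h : Sup L S) : pc n S ≤ L.length := by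
  have hn : (bits n S).Nodup := (List.nodup_finRange n).filter _
  exact (hn.subperm fun i hi => (h i).2 ((mem_bits i).1 hi)).length_le

theorem pc_le_n (n S : ℕ) : pc n S ≤ n := (List.length_filter_le _ _).trans (by simp)

theorem ex_list {n S k : ℕ} (h : 1 ≤ pc n S) (hk : pc n S ≤ k) : ∃ L : List (Fin n), L.length = k ∧ Sup L S := by
  obtain ⟨i, hi⟩ : ∃ i, i ∈ bits n S := List.exists_mem_of_length_pos h
  refine ⟨List.replicate (k - pc n S) i ++ bits n S, ?_, fun j => ?_⟩
  · rw [List.length_append, List.length_replicate]; exact Nat.sub_add_cancel hk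
  · rw [List.mem_append, List.mem_replicate, mem_bits]
    constructor
    · rintro (⟨-, rfl⟩ | h)
      · exact (mem_bits j).1 hi
      · exact h
    · exact Or.inr

theorem pc_pos {n : ℕ} {L : List (Fin n)} {S : ℕ} (h : Sup L S) (hL : 1 ≤ L.length) : 1 ≤ pc n S := by
  obtain ⟨i, hi⟩ : ∃ i, i ∈ L := List.exists_mem_of_length_pos hL
  exact List.length_pos_of_mem ((mem_bits i).2 ((h i).1 hi))

/-! closure engine -/
def frc {α : Type} (v : ℕ) (f : ℕ → α) : α := Nat.rec (f 0) (fun n _ => f (Nat.add n 1)) v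
theorem frc_eq {α : Type} (v : ℕ) (f : ℕ → α) : frc v f = f v := by cases v <;> rfl

def ltog (k : ℕ) (l : List ℕ) : List ℕ := if k ∈ l then l.erase k else k :: l
def step (r : List ℕ) (K : ℕ) : ℕ :=
  match (r.foldr ltog []).filter fun k => !K.testBit k with
  | [k] => (K ||| 1 <<< k) ^^^ (k * 11400714819323198485 % 18446744073709551616)
  | _ => K
def pass (R : List (List ℕ)) : ℕ → ℕ :=
  R.foldr (fun r f K => frc (step r K) f) id
def passes (R : List (List ℕ)) (n K : ℕ) : ℕ := Nat.rec K (fun _ K' => frc K' (pass R)) n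

theorem sum_ltog (v : ℕ → P4) (k l) : ((ltog k l).map v).sum = v k + (l.map v).sum := by
  unfold ltog
  split
  · rename_i h
    have : (l.map v).sum = ((k :: l.erase k).map v).sum := ((List.perm_cons_erase h).map _).sum_eq
    rw [this, List.map_cons, List.sum_cons, ← add_assoc, add_self0, zero_add]
  · simp

theorem sum_red (v : ℕ → P4) (r : List ℕ) : ((r.foldr ltog []).map v).sum = (r.map v).sum := by
  induction r with
  | nil => rfl
  | cons k r ih => rw [List.foldr_cons, sum_ltog, ih, List.map_cons, List.sum_cons]

def KOk (v : ℕ → P4) (W : Submodule kk P4) (K : ℕ) : Prop := ∀ k, K.testBit k = true → v k ∈ W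

theorem step_ok {v : ℕ → P4} {W : Submodule kk P4} (h0 : ∀ k < 64, v k ∈ W) {r : List ℕ} (hr : (r.map v).sum ∈ W) {K : ℕ}
    (hK : KOk v W K) : KOk v W (step r K) := by
  unfold step
  split
  · rename_i k hk
    intro m hm
    by_cases hm64 : m < 64
    · exact h0 m hm64
    rw [Nat.testBit_xor, Nat.testBit_lt_two_pow ((Nat.mod_lt (k * 11400714819323198485)
      (show 18446744073709551616 > 0 by norm_num)).trans_le ((show 18446744073709551616 ≤ 2 ^ 64 by norm_num).trans
      (Nat.pow_le_pow_right (by norm_num) (not_lt.1 hm64)))), Bool.xor_false, Nat.testBit_or, tb_one, Bool.or_eq_true, decide_eq_true_eq] at hm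
    rcases hm with hm | rfl
    · exact hK m hm
    · rw [← sum_red] at hr
      generalize r.foldr ltog [] = l at hr hk
      have key : ∀ l : List ℕ, (l.map v).sum + ((l.filter fun k => !K.testBit k).map v).sum ∈ W := by
        intro l
        induction l with
        | nil => simp
        | cons a l ih =>
          by_cases ha : K.testBit a = true
          · rw [List.filter_cons_of_neg (by simp [ha]), List.map_cons, List.sum_cons, add_assoc]
            exact W.add_mem (hK a ha) ih
          · rw [List.filter_cons_of_pos (by simp [ha]), List.map_cons, List.map_cons, List.sum_cons, List.sum_cons]
            refine mem_of_eq ih ?_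
            linear_combination v a * two0 (ι := Fin 4)
      have h2 := key l
      rw [hk, List.map_singleton, List.sum_singleton, add_comm] at h2
      exact mem_of_add h2 hr
  · exact hK

theorem pass_ok {v : ℕ → P4} {W : Submodule kk P4} (h0 : ∀ k < 64, v k ∈ W) {R : List (List ℕ)} (hR : ∀ r ∈ R, (r.map v).sum ∈ W) {K : ℕ}
    (hK : KOk v W K) : KOk v W (pass R K) := by
  induction R generalizing K with
  | nil => exact hK
  | cons r R ih =>
    have : pass (r :: R) K = frc (step r K) (pass R) := rfl
    rw [this, frc_eq]
    exact ih (fun r hr => hR r (List.mem_cons_of_mem _ hr)) (step_ok h0 (hR r (by simp)) hK)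

theorem passes_ok {v : ℕ → P4} {W : Submodule kk P4} (h0 : ∀ k < 64, v k ∈ W) {R : List (List ℕ)} (hR : ∀ r ∈ R, (r.map v).sum ∈ W) {K : ℕ}
    (hK : KOk v W K) (n : ℕ) : KOk v W (passes R n K) := by
  induction n with
  | zero => exact hK
  | succ n ih =>
    have : passes R (n + 1) K = frc (passes R n K) (pass R) := rfl
    rw [this, frc_eq]
    exact pass_ok h0 hR ih

def ofList (l : List ℕ) : ℕ := l.foldr (fun k m => m ||| 1 <<< k) 0
theorem ofList_ok {v : ℕ → P4} {W : Submodule kk P4} {l : List ℕ} (h : ∀ k ∈ l, v k ∈ W) : KOk v W (ofList l) := by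
  induction l with
  | nil => intro k hk; simp [ofList] at hk
  | cons a l ih =>
    intro k hk
    have : ofList (a :: l) = ofList l ||| 1 <<< a := rfl
    rw [this, Nat.testBit_or, tb_one, Bool.or_eq_true, decide_eq_true_eq] at hk
    rcases hk with hk | rfl
    · exact ih (fun k hk => h k (List.mem_cons_of_mem _ hk)) k hk
    · exact h a (by simp)

/-! the 3/2 symbols -/
def IsW2 (a b k : ℕ) (p : P4) : Prop := ∃ (L : List (Fin 4)) (D : List (Fin 6)), L.length = a ∧ D.length = b ∧
  Sup L (k / 64) ∧ Sup D (k % 64) ∧ p = w3 L (w6 D 1)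
open Classical in
def v2 (a b k : ℕ) : P4 := if h : ∃ p, IsW2 a b k p then h.choose else 0

theorem v2_eqv {a b k : ℕ} (ha : 2 ≤ a) {p : P4} (h : IsW2 a b k p) : Eqv Low p (v2 a b k) := by
  have hex : ∃ p, IsW2 a b k p := ⟨p, h⟩
  rw [v2, dif_pos hex]
  obtain ⟨L, D, hL, hD, sL, sD, rfl⟩ := h
  obtain ⟨L', D', hL', hD', sL', sD', he⟩ := hex.choose_spec
  rw [he]
  refine Eqv.trans (goodLow.supp (hL.trans hL'.symm) (fun i => (sL i).trans (sL' i).symm) trivial) ?_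
  exact supp6 (by omega) (hD.trans hD'.symm) (fun i => (sD i).trans (sD' i).symm) 1

def lst (n m : ℕ) : List ℕ := (List.range (2 ^ n)).filter fun S => decide (1 ≤ pc n S) && decide (pc n S ≤ m)
theorem mem_lst {n m S : ℕ} : S ∈ lst n m ↔ S < 2 ^ n ∧ 1 ≤ pc n S ∧ pc n S ≤ m := by
  simp [lst]

def relI (S T : ℕ) (j : Fin 4) : List ℕ := (ne3 j).map fun i => (S ||| 1 <<< i.val) * 64 + (T ||| 1 <<< (idx i j).val)
def rels2 (A B : ℕ) : List (List ℕ) :=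
  ((lst 6 (B - 2)).flatMap fun T => (lst 4 A).map fun S => [S * 64 + (T ||| 33), S * 64 + (T ||| 18), S * 64 + (T ||| 12)]) ++
  (((lst 6 (B - 1)).flatMap fun T => (0 :: lst 4 (A - 1)).flatMap fun S => [relI S T 0, relI S T 1, relI S T 2, relI S T 3]))

theorem code_div {S T : ℕ} (h : T < 2 ^ 6) : (S * 64 + T) / 64 = S := by
  have : T < 64 := h
  omega
theorem code_mod {S T : ℕ} (h : T < 2 ^ 6) : (S * 64 + T) % 64 = T := by
  have : T < 64 := h
  omega

theorem IsW2.mk {a b S T : ℕ} {L : List (Fin 4)} {D : List (Fin 6)} (hL : L.length = a) (hD : D.length = b) (sL : Sup L S)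
    (sD : Sup D T) (hT : T < 2 ^ 6) : IsW2 a b (S * 64 + T) (w3 L (w6 D 1)) :=
  ⟨L, D, hL, hD, by rwa [code_div hT], by rwa [code_mod hT], rfl⟩

theorem relP_low {a b S T : ℕ} (ha : 2 ≤ a) (hb : 3 ≤ b) (hS : S ∈ lst 4 a) (hT : T ∈ lst 6 (b - 2)) :
    (([S * 64 + (T ||| 33), S * 64 + (T ||| 18), S * 64 + (T ||| 12)]).map (v2 a b)).sum ∈ Low := by
  rw [mem_lst] at hS hT
  obtain ⟨L, hL, sL⟩ := ex_list hS.2.1 hS.2.2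
  obtain ⟨D, hD, sD⟩ := ex_list hT.2.1 hT.2.2
  have key : ∀ (d e : Fin 6) (m : ℕ), (1 <<< d.val ||| 1 <<< e.val) = m →
      Eqv Low (w3 L (pp e * (pp d * (w6 D 1) ^ 2) ^ 2)) (v2 a b (S * 64 + (T ||| m))) := by
    intro d e m hm
    have := v2_eqv ha (IsW2.mk (b := b) hL (by simp [hD]; omega) sL ((sD.cons d).cons e) (or_lt (or_lt hT.1 d) e))
    rw [Nat.lor_assoc, hm] at this
    exact this
  have h0 := pluck (a := 0) (b := 1) (c := 2) (d := 3) (by decide) (w6 D 1)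
  rw [show idx 2 3 = 5 by decide, show idx 0 1 = 0 by decide, show idx 1 3 = 4 by decide, show idx 0 2 = 1 by decide,
      show idx 1 2 = 3 by decide, show idx 0 3 = 2 by decide] at h0
  have h1 := w3_low L (Hit_Low h0)
  rw [w3_add, w3_add, add_assoc] at h1
  have h2 := ((key 0 5 33 (by decide)).add ((key 1 4 18 (by decide)).add (key 2 3 12 (by decide)))).symm
  simp only [List.map_cons, List.map_nil, List.sum_cons, List.sum_nil, add_zero]
  exact h2.mem h1

theorem relI_low {a b S T : ℕ} (ha : 2 ≤ a) (hb : 3 ≤ b) (hS : S ∈ lst 4 (a - 1)) (hT : T ∈ lst 6 (b - 1)) (j : Fin 4) :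
    ((relI S T j).map (v2 a b)).sum ∈ Low := by
  rw [mem_lst] at hS hT
  obtain ⟨L, hL, sL⟩ := ex_list hS.2.1 hS.2.2
  obtain ⟨D, hD, sD⟩ := ex_list hT.2.1 hT.2.2
  have h1 := w3_low L (incI j (w6 D 1))
  rw [w3_sum] at h1
  refine Eqv.mem (Eqv.symm ?_) h1
  rw [relI, List.map_map]
  refine sum_mem_eqv _ _ _ fun l _ => ?_
  have h2 := v2_eqv ha (IsW2.mk (a := a) (b := b) (by simp [hL]; omega) (by simp [hD]; omega) (sL.app l) (sD.cons (idx l j))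
    (or_lt hT.1 _))
  rw [w3_append, w6_cons, w3_cons, w3_nil] at h2
  exact h2

theorem relF_low {a b T : ℕ} (ha : 2 ≤ a) (hb : 3 ≤ b) (hT : T ∈ lst 6 (b - 1)) (j : Fin 4) :
    ((relI 0 T j).map (v2 a b)).sum ∈ Low := by
  rw [mem_lst] at hT
  obtain ⟨D, hD, sD⟩ := ex_list hT.2.1 hT.2.2
  refine Eqv.mem (Eqv.symm ?_) (incF (a - 1) j (w6 D 1))
  rw [relI, List.map_map]
  refine sum_mem_eqv _ _ _ fun l _ => ?_
  have h2 := v2_eqv ha (IsW2.mk (a := a) (b := b) (L := List.replicate (a - 1 + 1) l) (by simp; omega) (by simp [hD]; omega)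
    (sup_rep _ _) (sD.cons (idx l j)) (or_lt hT.1 _))
  rw [w6_cons] at h2
  rw [Function.comp_apply, Nat.zero_or]
  exact h2

theorem lst_mono {n m m' S : ℕ} (h : m ≤ m') (hS : S ∈ lst n m) : S ∈ lst n m' := by
  rw [mem_lst] at *; exact ⟨hS.1, hS.2.1, hS.2.2.trans h⟩

theorem rels2_low {a b A B : ℕ} (ha : 2 ≤ a) (hb : 3 ≤ b) (hA : A ≤ a) (hB : B ≤ b) :
    ∀ r ∈ rels2 A B, (r.map (v2 a b)).sum ∈ Low := by
  intro r hr
  rw [rels2, List.mem_append, List.mem_flatMap, List.mem_flatMap] at hr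
  rcases hr with ⟨T, hT, hr⟩ | ⟨T, hT, hr⟩
  · rw [List.mem_map] at hr
    obtain ⟨S, hS, rfl⟩ := hr
    exact relP_low ha hb (lst_mono hA hS) (lst_mono (by omega) hT)
  · rw [List.mem_flatMap] at hr
    obtain ⟨S, hS, hr⟩ := hr
    have hT' := lst_mono (show B - 1 ≤ b - 1 by omega) hT
    obtain ⟨j, rfl⟩ : ∃ j, r = relI S T j := by
      simp only [List.mem_cons, List.not_mem_nil, or_false] at hr
      rcases hr with h | h | h | h
      exacts [⟨0, h⟩, ⟨1, h⟩, ⟨2, h⟩, ⟨3, h⟩]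
    rcases List.mem_cons.1 hS with rfl | hS
    · exact relF_low ha hb hT' j
    · exact relI_low ha hb (lst_mono (by omega) hS) hT' j

def seeds2 : List ℕ := ([(8,11),(1,48),(2,2),(6,4),(4,12),(8,3),(3,12),(1,7),(1,4),(4,4),(9,2),(3,32),(6,1),(3,41),(5,34),(12,1),(5,16),(12,8),(8,2),(8,22),(3,40),(2,32),(6,26),(3,42),(5,17),(6,5),(6,7),(12,37),(9,33),(6,38),(2,34),(9,24),(10,42),(3,28),(2,38),(1,10),(3,24),(12,2),(8,9),(9,40),(9,26),(8,10),(10,32),(9,13),(2,4),(6,32),(5,14),(6,33),(1,16),(4,50),(6,16),(6,6),(1,9),(4,3),(10,2),(8,28),(8,41),(8,1),(10,49),(4,1),(4,48),(4,20),(2,18),(3,34),(5,36),(4,10),(10,3),(4,17),(12,16),(10,14),(8,5),(1,8),(4,11),(6,17),(6,20),(6,52),(8,48),(4,26),(1,24),(12,35),(4,5),(8,8),(3,17),(2,33),(3,33),(9,16),(2,22),(9,11),(12,4),(2,36),(3,16),(9,17),(9,8),(4,9),(4,21),(10,8),(9,9),(1,32),(4,56),(1,56),(2,44),(2,6),(2,52),(4,16),(1,40)]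 :
  List (ℕ × ℕ)).map fun p => p.1 * 64 + p.2

def full2 (A B K : ℕ) : Bool := (lst 4 A).all fun S => (lst 6 B).all fun T => K.testBit (S * 64 + T)
def chk2 (A B K : ℕ) : Bool := frc (passes (rels2 A B) 2 K) (full2 A B)
def k23 : ℕ := passes (rels2 2 3) 8 (ofList seeds2)

set_option maxRecDepth 1000000 in
theorem chk2_all : (frc k23 fun K => [2, 3, 4].all fun A => [3, 4, 5, 6].all fun B => chk2 A B K) = true := by
  decide +kernel

theorem chk2_ex {A B : ℕ} (hA : 2 ≤ A) (hA' : A ≤ 4) (hB : 3 ≤ B) (hB' : B ≤ 6) : chk2 A B k23 = true := by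
  have h := chk2_all
  rw [frc_eq, List.all_eq_true] at h
  have h1 : A ∈ [2, 3, 4] := by simp; omega
  have h2 : B ∈ [3, 4, 5, 6] := by simp; omega
  exact List.all_eq_true.1 (h A h1) B h2

theorem k23_eq : k23 = passes (rels2 2 3) 8 (ofList seeds2) := by unfold k23; exact Eq.refl _

theorem chk2_K : ∃ K, K = passes (rels2 2 3) 8 (ofList seeds2) ∧
    ∀ A B, 2 ≤ A → A ≤ 4 → 3 ≤ B → B ≤ 6 → chk2 A B K = true :=
  ⟨k23, k23_eq, fun _ _ h1 h2 h3 h4 => chk2_ex h1 h2 h3 h4⟩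

theorem w2_seeds {a b : ℕ} (ha : 2 ≤ a) (hb : 3 ≤ b) {L : List (Fin 4)} {D : List (Fin 6)} (hL : L.length = a)
    (hD : D.length = b) : w3 L (w6 D 1) ∈ Low ⊔ Submodule.span kk {p | ∃ k ∈ seeds2, p = v2 a b k} := by
  obtain ⟨K, hK, hc⟩ := chk2_K
  have hn := hc (min a 4) (min b 6) (by omega) (by omega) (by omega) (by omega)
  rw [chk2, frc_eq, full2, List.all_eq_true] at hn
  have hS : mask L ∈ lst 4 (min a 4) := by
    rw [mem_lst]
    have := pc_le (sup_mask L)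
    have := pc_le_n 4 (mask L)
    exact ⟨mask_lt L, pc_pos (sup_mask L) (by omega), by omega⟩
  have hT : mask D ∈ lst 6 (min b 6) := by
    rw [mem_lst]
    have := pc_le (sup_mask D)
    have := pc_le_n 6 (mask D)
    exact ⟨mask_lt D, pc_pos (sup_mask D) (by omega), by omega⟩
  have h1 := List.all_eq_true.1 (hn _ hS) _ hT
  have hR : ∀ A B, A ≤ a → B ≤ b → ∀ r ∈ rels2 A B, (r.map (v2 a b)).sum ∈
      Low ⊔ Submodule.span kk {p | ∃ k ∈ seeds2, p = v2 a b k} := fun A B hA hB r hr =>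
    Submodule.mem_sup_left (rels2_low ha hb hA hB r hr)
  have h0 : ∀ k < 64, v2 a b k ∈ Low ⊔ Submodule.span kk {p | ∃ k ∈ seeds2, p = v2 a b k} := by
    intro k hk
    rw [v2, dif_neg]
    · exact zero_mem _
    · rintro ⟨p, L, D, hL, -, sL, -, -⟩
      rw [Nat.div_eq_of_lt hk] at sL
      obtain ⟨i, hi⟩ : ∃ i, i ∈ L := List.exists_mem_of_length_pos (by omega)
      have := (sL i).1 hi
      simp at this
  have h3 := passes_ok h0 (hR 2 3 ha hb) (ofList_ok (l := seeds2) fun k hk =>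
    Submodule.mem_sup_right (Submodule.subset_span ⟨k, hk, rfl⟩)) 8
  rw [← hK] at h3
  have h2 := passes_ok h0 (hR (min a 4) (min b 6) (by omega) (by omega)) h3 2 _ h1
  exact mem_of_add (Submodule.mem_sup_left (v2_eqv ha (IsW2.mk hL hD (sup_mask L) (sup_mask D) (mask_lt D)))) h2

theorem V32_seeds {a b : ℕ} (ha : 2 ≤ a) (hb : 3 ≤ b) :
    V32 a b ≤ Low ⊔ Submodule.span kk {p | ∃ k ∈ seeds2, p = v2 a b k} := by
  unfold V32
  refine sup_le le_sup_left (Submodule.span_le.2 ?_)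
  rintro _ ⟨L, D, hOk, hL, hD, rfl⟩
  obtain ⟨D', hD', he⟩ := w2_w6 D hOk 1
  rw [he]
  exact w2_seeds ha hb hL (hD'.trans hD)

end Pf

namespace Pf

/-! the 3/1 symbols -/
def IsW1 (a b k : ℕ) (p : P4) : Prop := ∃ L D : List (Fin 4), L.length = a ∧ D.length = b ∧
  Sup L (k / 64) ∧ Sup D (k % 64) ∧ p = w3 L (w1 D 1)
open Classical in
def v1 (a b k : ℕ) : P4 := if h : ∃ p, IsW1 a b k p then h.choose else 0

theorem w1_od {D : List (Fin 4)} (h : 1 ≤ D.length) : w1 D 1 ∈ Od := by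
  cases D with
  | nil => simp at h
  | cons i D => rw [w1_cons]; exact od_x i _

theorem v1_eqv {a b k : ℕ} (hb : 1 ≤ b) {p : P4} (h : IsW1 a b k p) : Eqv HitO p (v1 a b k) := by
  have hex : ∃ p, IsW1 a b k p := ⟨p, h⟩
  rw [v1, dif_pos hex]
  obtain ⟨L, D, hL, hD, sL, sD, rfl⟩ := h
  obtain ⟨L', D', hL', hD', sL', sD', he⟩ := hex.choose_spec
  rw [he]
  refine Eqv.trans (goodO.supp (hL.trans hL'.symm) (fun i => (sL i).trans (sL' i).symm) (w1_od (by omega))) ?_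
  exact goodO.w3 _ (w1_supp (hD.trans hD'.symm) (fun i => (sD i).trans (sD' i).symm) 1)

def lsA (A : ℕ) : List ℕ := if A = 1 then [0] else lst 4 (A - 1)
def relJ (S U : ℕ) : List ℕ := (List.finRange 4).map fun i => (S ||| 1 <<< i.val) * 64 + (U ||| 1 <<< i.val)
def rels1 (A : ℕ) : List (List ℕ) := (lst 4 4).flatMap fun U => (lsA A).map fun S => relJ S U

theorem lt6 {U : ℕ} (h : U < 2 ^ 4) : U < 2 ^ 6 := h.trans (by norm_num)

theorem IsW1.mk {a b S U : ℕ} {L D : List (Fin 4)} (hL : L.length = a) (hD : D.length = b) (sL : Sup L S)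
    (sD : Sup D U) (hU : U < 2 ^ 4) : IsW1 a b (S * 64 + U) (w3 L (w1 D 1)) :=
  ⟨L, D, hL, hD, by rwa [code_div (lt6 hU)], by rwa [code_mod (lt6 hU)], rfl⟩

theorem relJ_hit {a b S U : ℕ} (ha : 1 ≤ a) (hb : 5 ≤ b) (hS : ∃ L : List (Fin 4), L.length = a - 1 ∧ Sup L S)
    (hU : U ∈ lst 4 4) : ((relJ S U).map (v1 a b)).sum ∈ HitO := by
  rw [mem_lst] at hU
  obtain ⟨L, hL, sL⟩ := hS
  obtain ⟨D, hD, sD⟩ := ex_list (k := b - 1) hU.2.1 (by omega)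
  have h1 := w3_hitO L (inc1 (w1 D 1))
  rw [w3_sum] at h1
  refine Eqv.mem (Eqv.symm ?_) h1
  rw [relJ, List.map_map]
  refine sum_mem_eqv _ _ _ fun l _ => ?_
  have h2 := v1_eqv (by omega) (IsW1.mk (a := a) (b := b) (by simp [hL]; omega) (by simp [hD]; omega) (sL.app l) (sD.cons l)
    (or_lt hU.1 _))
  rw [w3_append, w1_cons, w3_cons, w3_nil] at h2
  exact h2

theorem rels1_hit {a b A : ℕ} (ha : 1 ≤ a) (hb : 5 ≤ b) (hA : A = min a 4) :
    ∀ r ∈ rels1 A, (r.map (v1 a b)).sum ∈ HitO := by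
  intro r hr
  rw [rels1, List.mem_flatMap] at hr
  obtain ⟨U, hU, hr⟩ := hr
  rw [List.mem_map] at hr
  obtain ⟨S, hS, rfl⟩ := hr
  refine relJ_hit ha hb ?_ hU
  unfold lsA at hS
  split at hS
  · rw [List.mem_singleton] at hS
    exact ⟨[], by simp; omega, by rw [hS]; exact sup_nil⟩
  · rw [mem_lst] at hS
    exact ex_list hS.2.1 (by omega)

def seeds1 (A : ℕ) : List ℕ := (match A with
  | 1 => [17, 18, 19, 20, 21, 22, 23, 24, 26, 27, 28, 30, 33, 34, 36, 37, 38, 39, 40, 41, 44, 45, 47, 65, 66, 67, 68, 71, 72, 73, 74, 75, 77, 78, 79, 129, 130, 131, 132, 133, 134, 135, 137, 138, 141]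
  | 2 => [18, 20, 21, 22, 24, 26, 28, 30, 31, 33, 35, 36, 37, 38, 39, 40, 41, 42, 44, 45, 50, 51, 52, 53, 56, 57, 60, 61, 65, 66, 67, 70, 71, 72, 73, 74, 75, 77, 82, 86, 87, 88, 89, 90, 92, 93, 95, 97, 99, 104, 105, 106, 107, 109, 111, 129, 130, 131, 132, 133, 134, 135, 139, 140, 142, 146, 148, 149, 150, 153, 156, 157, 158, 161, 162, 164, 165, 166, 167, 168, 170, 172, 173, 174, 193, 194, 195, 198, 202, 206]
  | _ => [18, 20, 22, 24, 25, 26, 28, 29, 30, 33, 34, 36, 37, 39, 40, 41, 44, 45, 47, 50, 52, 54, 55, 56, 57, 58, 60, 61, 65, 66, 67, 69, 70, 72, 73, 74, 75, 78, 82, 87, 88, 89, 90, 94, 95, 97, 98, 100, 104, 105, 113, 116, 117, 120, 121, 122, 129, 130, 131, 132, 133, 134, 135, 136, 139, 141, 143, 145, 146, 148, 150, 156, 157, 161, 164, 165, 166, 169, 170, 175, 179, 180, 181, 182, 183, 184, 186, 193, 194, 195, 198, 203, 209, 210, 211, 212, 214, 215, 219, 225, 227, 229, 230, 231, 238]).map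 fun k => k / 16 * 64 + k % 16

def full1 (A K : ℕ) : Bool := (lst 4 A).all fun S => (lst 4 4).all fun U => K.testBit (S * 64 + U)

set_option maxRecDepth 1000000 in
theorem chk1_all : ([1, 2, 3, 4].all fun A => frc (passes (rels1 A) 10 (ofList (seeds1 A))) (full1 A)) = true := by
  decide +kernel

theorem w1_seeds {a b : ℕ} (ha : 1 ≤ a) (hb : 5 ≤ b) {L D : List (Fin 4)} (hL : L.length = a)
    (hD : D.length = b) :
    w3 L (w1 D 1) ∈ HitO ⊔ Submodule.span kk {p | ∃ k ∈ seeds1 (min a 4), p = v1 a b k} := by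
  have h1 : min a 4 ∈ [1, 2, 3, 4] := by simp; omega
  have hn := List.all_eq_true.1 chk1_all _ h1
  rw [frc_eq, full1, List.all_eq_true] at hn
  have hS : mask L ∈ lst 4 (min a 4) := by
    rw [mem_lst]
    have := pc_le (sup_mask L)
    have := pc_le_n 4 (mask L)
    exact ⟨mask_lt L, pc_pos (sup_mask L) (by omega), by omega⟩
  have hU : mask D ∈ lst 4 4 := by
    rw [mem_lst]
    have := pc_le (sup_mask D)
    have := pc_le_n 4 (mask D)
    exact ⟨mask_lt D, pc_pos (sup_mask D) (by omega), by omega⟩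
  have h1 := List.all_eq_true.1 (hn _ hS) _ hU
  have h0 : ∀ k < 64, v1 a b k ∈ HitO ⊔ Submodule.span kk {p | ∃ k ∈ seeds1 (min a 4), p = v1 a b k} := by
    intro k hk
    rw [v1, dif_neg]
    · exact zero_mem _
    · rintro ⟨p, L, D, hL, -, sL, -, -⟩
      rw [Nat.div_eq_of_lt hk] at sL
      obtain ⟨i, hi⟩ : ∃ i, i ∈ L := List.exists_mem_of_length_pos (by omega)
      have := (sL i).1 hi
      simp at this
  have h2 := passes_ok h0 (fun r hr => Submodule.mem_sup_left (rels1_hit ha hb rfl r hr))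
    (ofList_ok (l := seeds1 (min a 4)) fun k hk => Submodule.mem_sup_right (Submodule.subset_span ⟨k, hk, rfl⟩)) 10 _ h1
  exact mem_of_add (Submodule.mem_sup_left (v1_eqv (by omega) (IsW1.mk hL hD (sup_mask L) (sup_mask D) (mask_lt D)))) h2

theorem V31_seeds {a b : ℕ} (ha : 1 ≤ a) (hb : 5 ≤ b) :
    V31 a b ≤ HitO ⊔ Submodule.span kk {p | ∃ k ∈ seeds1 (min a 4), p = v1 a b k} := by
  unfold V31
  refine sup_le le_sup_left (Submodule.span_le.2 ?_)
  rintro _ ⟨L, D, hL, hD, rfl⟩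
  exact w1_seeds ha hb hL hD

end Pf

namespace Pf

/-! evaluations in three variables -/
abbrev R3 : Type := MvPolynomial (Fin 3) kk
def ex3 (a b c : ℕ) : Fin 3 →₀ ℕ := Finsupp.equivFunOnFinite.symm ![a, b, c]
def cf (a b c : ℕ) : R3 →ₗ[kk] kk := lcoeff kk (ex3 a b c)
theorem cf_apply (a b c : ℕ) (g : R3) : cf a b c g = coeff (ex3 a b c) g := rfl

theorem ex3_0 (a b c : ℕ) : ex3 a b c 0 = a := rfl
theorem ex3_1 (a b c : ℕ) : ex3 a b c 1 = b := rfl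
theorem ex3_2 (a b c : ℕ) : ex3 a b c 2 = c := rfl
theorem ex3_eq (m : Fin 3 →₀ ℕ) (a b c : ℕ) : m = ex3 a b c ↔ m 0 = a ∧ m 1 = b ∧ m 2 = c := by
  rw [Finsupp.ext_iff]
  constructor
  · intro h; exact ⟨h 0, h 1, h 2⟩
  · rintro ⟨h0, h1, h2⟩ i
    fin_cases i
    exacts [h0, h1, h2]

theorem kk_sq (r : kk) : r ^ 2 = r := by revert r; decide

theorem cf_par {a b c p q r p' q' r' : ℕ} (hp : p < 2) (hq : q < 2) (hr : r < 2) (hp' : p' < 2) (hq' : q' < 2)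
    (hr' : r' < 2) (g : R3) : cf (2 * a + p) (2 * b + q) (2 * c + r) (monomial (ex3 p' q' r') 1 * g ^ 2) =
      if p = p' ∧ q = q' ∧ r = r' then cf a b c g else 0 := by
  induction g using MvPolynomial.induction_on' with
  | monomial m k =>
    rw [monomial_pow, monomial_mul, cf_apply, cf_apply, coeff_monomial, coeff_monomial, one_mul, kk_sq, ← ite_and]
    refine if_congr ?_ rfl rfl
    rw [ex3_eq, ex3_eq]
    simp only [Finsupp.add_apply, Finsupp.smul_apply, ex3_0, ex3_1, ex3_2, smul_eq_mul]
    omega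
  | add f g hf hg =>
    rw [CharTwo.add_sq, mul_add, map_add, hf, hg]
    split <;> simp

abbrev y (j : Fin 3) : R3 := X j
theorem m0 : (monomial (ex3 1 0 0) 1 : R3) = y 0 := by
  have : ex3 1 0 0 = Finsupp.single 0 1 := by ext i; fin_cases i <;> simp [ex3]
  rw [this]; rfl
theorem m1 : (monomial (ex3 0 1 0) 1 : R3) = y 1 := by
  have : ex3 0 1 0 = Finsupp.single 1 1 := by ext i; fin_cases i <;> simp [ex3]
  rw [this]; rfl
theorem m2 : (monomial (ex3 0 0 1) 1 : R3) = y 2 := by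
  have : ex3 0 0 1 = Finsupp.single 2 1 := by ext i; fin_cases i <;> simp [ex3]
  rw [this]; rfl
theorem mm (a b c : ℕ) : (monomial (ex3 a b c) 1 : R3) = y 0 ^ a * y 1 ^ b * y 2 ^ c := by
  rw [y, y, y, X_pow_eq_monomial, X_pow_eq_monomial, X_pow_eq_monomial, monomial_mul, monomial_mul, one_mul, one_mul]
  have : ex3 a b c = Finsupp.single 0 a + Finsupp.single 1 b + Finsupp.single 2 c := by
    ext i; fin_cases i <;> simp [ex3]
  rw [this]

theorem SqT_pow (j : Fin 3) (a : ℕ) : SqT (y j ^ a) =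
    ∑ i ∈ Finset.range (a + 1), Polynomial.monomial i ((a.choose i : R3) * y j ^ (a + i)) := by
  rw [map_pow, SqT_X, add_comm, add_pow]
  refine Finset.sum_congr rfl fun i hi => ?_
  rw [← Polynomial.C_mul_X_pow_eq_monomial, mul_pow, ← map_pow, ← map_pow, ← Polynomial.C_eq_natCast, map_mul]
  have : a + i = 2 * i + (a - i) := by rw [Finset.mem_range] at hi; omega
  rw [this, pow_add, pow_mul, map_mul]
  ring

theorem choose_even {m a j : ℕ} (h : a + j + 1 = 2 ^ m) (hj : 1 ≤ j) : (a.choose j : kk) = 0 := by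
  induction m generalizing a j with
  | zero => simp at h; omega
  | succ m ih =>
    have h2 : (a.choose j : kk) = ((a % 2).choose (j % 2) : kk) * ((a / 2).choose (j / 2) : kk) := by
      have := @Choose.choose_modEq_choose_mod_mul_choose_div_nat a j 2 _
      rw [← ZMod.natCast_eq_natCast_iff] at this
      rw [this]; push_cast; rfl
    rw [pow_succ] at h
    rw [h2]
    rcases Nat.mod_two_eq_zero_or_one j with h0 | h1
    · rw [ih (a := a / 2) (j := j / 2) (by omega) (by omega), mul_zero]
    · have : a % 2 = 0 := by omega
      rw [this, h1]; simp

theorem cf_Sq {l m n : ℕ} {a b c : ℕ} (ha : a + 1 = 2 ^ l) (hb : b + 1 = 2 ^ m) (hc : c + 1 = 2 ^ n) {k : ℕ} (hk : 1 ≤ k)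
    (g : R3) : cf a b c (Sq k g) = 0 := by
  induction g using MvPolynomial.induction_on' with
  | add f g hf hg => rw [map_add, map_add, hf, hg, add_zero]
  | monomial e r =>
    have he : e = ex3 (e 0) (e 1) (e 2) := (ex3_eq _ _ _ _).2 ⟨rfl, rfl, rfl⟩
    generalize e 0 = p, e 1 = q, e 2 = s at he
    subst he
    have : (monomial (ex3 p q s) r : R3) = r • monomial (ex3 p q s) 1 := by rw [smul_monomial, smul_eq_mul, mul_one]
    rw [this, map_smul, map_smul, mm, Sq_def, map_mul, map_mul, SqT_pow, SqT_pow, SqT_pow, Finset.sum_mul_sum, Finset.sum_mul_sum]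
    simp only [Finset.sum_mul, Polynomial.finsetSum_coeff, map_sum, Polynomial.monomial_mul_monomial]
    rw [Finset.sum_eq_zero, smul_zero]
    intro i1 h1
    refine Finset.sum_eq_zero fun i3 h3 => Finset.sum_eq_zero fun i2 h2 => ?_
    rw [Polynomial.coeff_monomial]
    split
    · rename_i hh
      have e1 : (p.choose i1 : R3) * y 0 ^ (p + i1) * ((q.choose i2 : R3) * y 1 ^ (q + i2)) * ((s.choose i3 : R3) * y 2 ^ (s + i3)) =
        monomial (ex3 (p + i1) (q + i2) (s + i3)) ((p.choose i1 : kk) * (q.choose i2 : kk) * (s.choose i3 : kk)) := by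
        have : ∀ z : kk, (monomial (ex3 (p + i1) (q + i2) (s + i3)) z : R3) = C z * monomial (ex3 (p + i1) (q + i2) (s + i3)) 1 := by
          intro z; rw [C_mul_monomial, mul_one]
        rw [this, mm, map_mul, map_mul, map_natCast, map_natCast, map_natCast]
        ring
      rw [e1, cf_apply, coeff_monomial]
      split
      · rename_i h4
        rw [ex3_eq, ex3_0, ex3_1, ex3_2] at h4
        by_cases k1 : 1 ≤ i1
        · rw [choose_even (a := p) (m := l) (by omega) k1]; ring
        by_cases k2 : 1 ≤ i2
        · rw [choose_even (a := q) (m := m) (by omega) k2]; ring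
        · rw [choose_even (a := s) (m := n) (by omega) (by omega)]; ring
      · rfl
    · exact map_zero _

def sg (B : Matrix (Fin 4) (Fin 3) kk) : P4 →ₐ[kk] R3 := aeval fun i => ∑ j, B i j • y j
theorem sg_x (B : Matrix (Fin 4) (Fin 3) kk) (i : Fin 4) : sg B (x i) = ∑ j, B i j • y j := by simp [sg]

theorem sg_subst (B : Matrix (Fin 4) (Fin 3) kk) (M : Matrix (Fin 4) (Fin 4) kk) (f : P4) :
    sg B (substM M f) = sg (M * B) f := by
  have : (sg B).comp (substM M) = sg (M * B) := by
    ext1 i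
    simp only [AlgHom.comp_apply, substM, sg, aeval_X, map_sum, map_smul, Matrix.mul_apply, Finset.smul_sum, Finset.sum_smul, smul_smul]
    rw [Finset.sum_comm]
  rw [← this]; rfl

theorem SqT_sg (B : Matrix (Fin 4) (Fin 3) kk) (f : P4) :
    SqT (sg B f) = (SqT f).map (sg B).toRingHom := by
  have : (SqT (ι := Fin 3)).comp (sg B) = (Polynomial.mapAlgHom (sg B)).comp (SqT (ι := Fin 4)) := by
    ext1 i
    simp only [AlgHom.comp_apply, SqT_X, map_add, map_mul]
    rw [sg_x]
    simp only [Polynomial.coe_mapAlgHom, Polynomial.map_C, Polynomial.map_X, map_sum, map_smul, SqT_X, RingHom.coe_coe, map_pow, sg_x]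
    rw [← map_sum, ← map_pow, CharTwo.sum_sq, map_sum, map_sum, Finset.mul_sum, ← Finset.sum_add_distrib]
    refine Finset.sum_congr rfl fun j _ => ?_
    rw [smul_pow, kk_sq, smul_add]
    congr 1
    · rw [Polynomial.smul_C]
    · rw [← mul_smul_comm, ← map_pow, Polynomial.smul_C]
  have h2 := congrArg (fun φ => φ f) this
  exact h2

theorem Sq_sg (B : Matrix (Fin 4) (Fin 3) kk) (k : ℕ) (f : P4) : Sq k (sg B f) = sg B (Sq k f) := by
  rw [Sq_def, SqT_sg, Polynomial.coeff_map]; rfl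

def ev (B : Matrix (Fin 4) (Fin 3) kk) (a b c : ℕ) : P4 →ₗ[kk] kk := (cf a b c).comp (sg B).toLinearMap
theorem ev_apply (B a b c f) : ev B a b c f = cf a b c (sg B f) := rfl

theorem ev_hit (B) {l m n a b c : ℕ} (ha : a + 1 = 2 ^ l) (hb : b + 1 = 2 ^ m) (hc : c + 1 = 2 ^ n) {f : P4} (hf : f ∈ Hit) :
    ev B a b c f = 0 := by
  have : Hit ≤ LinearMap.ker (ev B a b c) := Hit_le fun k d hk g _ => by
    rw [LinearMap.mem_ker, ev_apply, ← Sq_sg, cf_Sq ha hb hc hk]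
  exact this hf

end Pf

namespace Pf

def lf (a : Fin 3 → kk) : R3 := ∑ j, a j • y j
theorem lf_eq (a : Fin 3 → kk) : lf a = C (a 0) * y 0 + C (a 1) * y 1 + C (a 2) * y 2 := by
  rw [lf, Fin.sum_univ_three]; simp only [smul_eq_C_mul]
def per (a b c : Fin 3 → kk) : kk := a 0 * (b 1 * c 2 + b 2 * c 1) + a 1 * (b 0 * c 2 + b 2 * c 0) + a 2 * (b 0 * c 1 + b 1 * c 0)
def pm2 (a b : Fin 3 → kk) : kk := a 0 * b 1 + a 1 * b 0

theorem C_sq (r : kk) : (C r : R3) ^ 2 = C r := by rw [← map_pow, kk_sq]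
theorem lf_sq (a : Fin 3 → kk) : lf a ^ 2 = C (a 0) * y 0 ^ 2 + C (a 1) * y 1 ^ 2 + C (a 2) * y 2 ^ 2 := by
  rw [lf_eq, CharTwo.add_sq, CharTwo.add_sq, mul_pow, mul_pow, mul_pow, C_sq, C_sq, C_sq]

theorem lf2 (a b : Fin 3 → kk) : ∃ q, lf a * lf b = C (pm2 a b) * (y 0 * y 1) + C (a 0 * b 2 + a 2 * b 0) * (y 0 * y 2) +
    C (a 1 * b 2 + a 2 * b 1) * (y 1 * y 2) + q ^ 2 := by
  refine ⟨lf fun j => a j * b j, ?_⟩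
  rw [lf_sq, lf_eq, lf_eq, pm2]
  simp only [map_add, map_mul]
  ring

theorem lf3 (a b c : Fin 3 → kk) : ∃ q0 q1 q2, lf a * lf b * lf c = C (per a b c) * (y 0 * y 1 * y 2) + y 0 * q0 ^ 2 +
    y 1 * q1 ^ 2 + y 2 * q2 ^ 2 := by
  let d (i j k : Fin 3) : kk := a i * b j * c k + a j * b i * c k + a j * b k * c i
  refine ⟨lf ![a 0 * b 0 * c 0, d 0 1 1, d 0 2 2], lf ![d 1 0 0, a 1 * b 1 * c 1, d 1 2 2],
    lf ![d 2 0 0, d 2 1 1, a 2 * b 2 * c 2], ?_⟩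
  rw [lf_sq, lf_sq, lf_sq, lf_eq, lf_eq, lf_eq, per]
  simp only [map_add, map_mul, Matrix.cons_val_zero, Matrix.cons_val_one, Matrix.cons_val, d]
  ring

theorem mul_sq_C (r : kk) (z h : R3) : C r * z * h ^ 2 = r • (z * h ^ 2) := by
  rw [smul_eq_C_mul]; ring

section
variable (a b c : ℕ) (g : R3)
theorem y0_par : (y 0 * g ^ 2) = monomial (ex3 1 0 0) 1 * g ^ 2 := by rw [m0]
theorem y1_par : (y 1 * g ^ 2) = monomial (ex3 0 1 0) 1 * g ^ 2 := by rw [m1]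
theorem y2_par : (y 2 * g ^ 2) = monomial (ex3 0 0 1) 1 * g ^ 2 := by rw [m2]
theorem y01_par : (y 0 * y 1 * g ^ 2) = monomial (ex3 1 1 0) 1 * g ^ 2 := by rw [mm]; ring
theorem y02_par : (y 0 * y 2 * g ^ 2) = monomial (ex3 1 0 1) 1 * g ^ 2 := by rw [mm]; ring
theorem y12_par : (y 1 * y 2 * g ^ 2) = monomial (ex3 0 1 1) 1 * g ^ 2 := by rw [mm]; ring
theorem y012_par : (y 0 * y 1 * y 2 * g ^ 2) = monomial (ex3 1 1 1) 1 * g ^ 2 := by rw [mm]; ring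
theorem y_par : g ^ 2 = monomial (ex3 0 0 0) 1 * g ^ 2 := by rw [mm]; ring

theorem cf1 (d : Fin 3 → kk) : cf (2 * a + 1) (2 * b) (2 * c) (lf d * g ^ 2) = d 0 * cf a b c g ∧
    cf (2 * a + 1) (2 * b + 1) (2 * c) (lf d * g ^ 2) = 0 ∧
    cf (2 * a + 1) (2 * b + 1) (2 * c + 1) (lf d * g ^ 2) = 0 := by
  have e : lf d * g ^ 2 = d 0 • (y 0 * g ^ 2) + d 1 • (y 1 * g ^ 2) + d 2 • (y 2 * g ^ 2) := by
    rw [lf_eq]; simp only [smul_eq_C_mul]; ring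
  rw [e]
  simp only [map_add, map_smul, y0_par, y1_par, y2_par]
  refine ⟨?_, ?_, ?_⟩
  · have h := fun p q r hp hq hr => cf_par (a := a) (b := b) (c := c) (p := 1) (q := 0) (r := 0) (p' := p) (q' := q) (r' := r)
      (by omega) (by omega) (by omega) hp hq hr g
    simp only [add_zero] at h
    rw [h _ _ _ (by omega) (by omega) (by omega), h _ _ _ (by omega) (by omega) (by omega),
      h _ _ _ (by omega) (by omega) (by omega)]
    simp
  · have h := fun p q r hp hq hr => cf_par (a := a) (b := b) (c := c) (p := 1) (q := 1) (r := 0) (p' := p) (q' := q) (r' := r)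
      (by omega) (by omega) (by omega) hp hq hr g
    simp only [add_zero] at h
    rw [h _ _ _ (by omega) (by omega) (by omega), h _ _ _ (by omega) (by omega) (by omega),
      h _ _ _ (by omega) (by omega) (by omega)]
    simp
  · have h := fun p q r hp hq hr => cf_par (a := a) (b := b) (c := c) (p := 1) (q := 1) (r := 1) (p' := p) (q' := q) (r' := r)
      (by omega) (by omega) (by omega) hp hq hr g
    rw [h _ _ _ (by omega) (by omega) (by omega), h _ _ _ (by omega) (by omega) (by omega),
      h _ _ _ (by omega) (by omega) (by omega)]
    simp

theorem cf2 (d e : Fin 3 → kk) : cf (2 * a + 1) (2 * b + 1) (2 * c) (lf d * lf e * g ^ 2) = pm2 d e * cf a b c g := by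
  obtain ⟨q, hq⟩ := lf2 d e
  have h1 : lf d * lf e * g ^ 2 = pm2 d e • (y 0 * y 1 * g ^ 2) + (d 0 * e 2 + d 2 * e 0) • (y 0 * y 2 * g ^ 2) +
      (d 1 * e 2 + d 2 * e 1) • (y 1 * y 2 * g ^ 2) + (q * g) ^ 2 := by
    rw [hq]; simp only [smul_eq_C_mul]; ring
  have h := fun p q r hp hq hr g => cf_par (a := a) (b := b) (c := c) (p := 1) (q := 1) (r := 0) (p' := p) (q' := q) (r' := r)
      (by omega) (by omega) (by omega) hp hq hr g
  simp only [add_zero] at h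
  rw [h1, y01_par, y02_par, y12_par, y_par (q * g), map_add, map_add, map_add, map_smul, map_smul, map_smul,
    h _ _ _ (by omega) (by omega) (by omega), h _ _ _ (by omega) (by omega) (by omega),
    h _ _ _ (by omega) (by omega) (by omega), h _ _ _ (by omega) (by omega) (by omega)]
  simp

theorem cf3 (d e f : Fin 3 → kk) :
    cf (2 * a + 1) (2 * b + 1) (2 * c + 1) (lf d * lf e * lf f * g ^ 2) = per d e f * cf a b c g ∧
    cf (2 * a + 1) (2 * b + 1) (2 * c) (lf d * lf e * lf f * g ^ 2) = 0 := by
  obtain ⟨q0, q1, q2, hq⟩ := lf3 d e f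
  have h1 : lf d * lf e * lf f * g ^ 2 = per d e f • (y 0 * y 1 * y 2 * g ^ 2) + (y 0 * (q0 * g) ^ 2) +
      (y 1 * (q1 * g) ^ 2) + y 2 * (q2 * g) ^ 2 := by
    rw [hq]; simp only [smul_eq_C_mul]; ring
  rw [h1, y012_par, y0_par, y1_par, y2_par, map_add, map_add, map_add, map_smul, map_add, map_add, map_add, map_smul]
  constructor
  · have h := fun p q r hp hq hr g => cf_par (a := a) (b := b) (c := c) (p := 1) (q := 1) (r := 1) (p' := p) (q' := q) (r' := r)
      (by omega) (by omega) (by omega) hp hq hr g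
    rw [h _ _ _ (by omega) (by omega) (by omega), h _ _ _ (by omega) (by omega) (by omega),
      h _ _ _ (by omega) (by omega) (by omega), h _ _ _ (by omega) (by omega) (by omega)]
    simp
  · have h := fun p q r hp hq hr g => cf_par (a := a) (b := b) (c := c) (p := 1) (q := 1) (r := 0) (p' := p) (q' := q) (r' := r)
      (by omega) (by omega) (by omega) hp hq hr g
    simp only [add_zero] at h
    rw [h _ _ _ (by omega) (by omega) (by omega), h _ _ _ (by omega) (by omega) (by omega),
      h _ _ _ (by omega) (by omega) (by omega), h _ _ _ (by omega) (by omega) (by omega)]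
    simp
end

abbrev M43 := Matrix (Fin 4) (Fin 3) kk
def ell (B : M43) : Fin 4 → kk := ![per (B 1) (B 2) (B 3), per (B 0) (B 2) (B 3), per (B 0) (B 1) (B 3), per (B 0) (B 1) (B 2)]
def ppv (B : M43) (d : Fin 6) : kk := pm2 (B (pr d).1) (B (pr d).2)

theorem sg_lf (B : M43) (i : Fin 4) : sg B (x i) = lf (B i) := sg_x B i
theorem sg_hat (B : M43) (i : Fin 4) : ∃ d e f, sg B (hat i) = lf d * lf e * lf f ∧ ell B i = per d e f := by
  fin_cases i
  · exact ⟨B 1, B 2, B 3, by simp [hat0, sg_lf], rfl⟩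
  · exact ⟨B 0, B 2, B 3, by simp [hat1, sg_lf], rfl⟩
  · exact ⟨B 0, B 1, B 3, by simp [hat2, sg_lf], rfl⟩
  · exact ⟨B 0, B 1, B 2, by simp [hat3, sg_lf], rfl⟩

theorem ev_hat (B : M43) (i a b c f) : ev B (2 * a + 1) (2 * b + 1) (2 * c + 1) (hat i * f ^ 2) = ell B i * ev B a b c f ∧
    ev B (2 * a + 1) (2 * b + 1) (2 * c) (hat i * f ^ 2) = 0 := by
  obtain ⟨d, e, g, h1, h2⟩ := sg_hat B i
  rw [ev_apply, ev_apply, ev_apply, map_mul, map_pow, h1, h2]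
  exact cf3 a b c _ d e g

theorem ev_x (B : M43) (i a b c f) : ev B (2 * a + 1) (2 * b) (2 * c) (x i * f ^ 2) = B i 0 * ev B a b c f ∧
    ev B (2 * a + 1) (2 * b + 1) (2 * c) (x i * f ^ 2) = 0 ∧ ev B (2 * a + 1) (2 * b + 1) (2 * c + 1) (x i * f ^ 2) = 0 := by
  rw [ev_apply, ev_apply, ev_apply, ev_apply, map_mul, map_pow, sg_lf]
  exact cf1 a b c _ _

theorem ev_pp (B : M43) (d a b c f) : ev B (2 * a + 1) (2 * b + 1) (2 * c) (pp d * f ^ 2) = ppv B d * ev B a b c f := by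
  rw [ev_apply, ev_apply, map_mul, map_pow, pp, map_mul (sg B), sg_lf, sg_lf]
  exact cf2 a b c _ _ _

def lp (φ : Fin 4 → kk) (L : List (Fin 4)) : kk := (L.map φ).prod
def sp (s : ℕ) : ℕ := 2 ^ s - 1
theorem sp_add (s : ℕ) : sp s + 1 = 2 ^ s := Nat.sub_add_cancel (Nat.one_le_two_pow)
theorem sp_zero : sp 0 = 0 := rfl
theorem sp_succ (s : ℕ) : sp (s + 1) = 2 * sp s + 1 := by
  have h1 := sp_add s
  have h2 := sp_add (s + 1)
  rw [pow_succ] at h2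
  omega

theorem ev_one (B : M43) : ev B 0 0 0 1 = 1 := by
  rw [ev_apply, map_one, cf_apply]
  have : ex3 0 0 0 = 0 := by ext i; fin_cases i <;> rfl
  rw [this, coeff_zero_one]

theorem ev_w3 (B : M43) (L : List (Fin 4)) (a b c : ℕ) (g : P4) :
    ev B (sp (L.length + a)) (sp (L.length + b)) (sp (L.length + c)) (w3 L g) = lp (ell B) L * ev B (sp a) (sp b) (sp c) g := by
  induction L with
  | nil => simp [lp]
  | cons i L ih =>
    have e : ∀ d, (i :: L).length + d = L.length + d + 1 := fun d => by rw [List.length_cons]; omega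
    rw [e, e, e, sp_succ, sp_succ, sp_succ, w3_cons, (ev_hat B i _ _ _ _).1, ih, lp, lp, List.map_cons, List.prod_cons, mul_assoc]

theorem ev_w6 (B : M43) (D : List (Fin 6)) : ev B (sp D.length) (sp D.length) 0 (w6 D 1) = (D.map (ppv B)).prod := by
  induction D with
  | nil => rw [List.length_nil, sp_zero, w6_nil, ev_one]; rfl
  | cons i L ih =>
    have h := ev_pp B i (sp L.length) (sp L.length) 0 (w6 L 1)
    rw [mul_zero] at h
    rw [List.length_cons, sp_succ, w6_cons, h, ih, List.map_cons, List.prod_cons]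

theorem ev_w1 (B : M43) (D : List (Fin 4)) : ev B (sp D.length) 0 0 (w1 D 1) = lp (fun i => B i 0) D := by
  induction D with
  | nil => rw [List.length_nil, sp_zero, w1_nil, ev_one]; rfl
  | cons i L ih =>
    have h := (ev_x B i (sp L.length) 0 0 (w1 L 1)).1
    rw [mul_zero] at h
    rw [List.length_cons, sp_succ, w1_cons, h, ih, lp, lp, List.map_cons, List.prod_cons]

theorem ev_low (B : M43) {f : P4} (hf : f ∈ Low) (a m : ℕ) : ev B (sp (a + m + 1)) (sp (a + m + 1)) (sp a) f = 0 := by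
  change IsLow f at hf
  induction hf generalizing a m with
  | hit h => exact ev_hit B (sp_add _) (sp_add _) (sp_add _) h
  | add _ _ h1 h2 => rw [map_add, h1, h2, add_zero]
  | xs p y =>
    rw [sp_succ]
    cases a with
    | zero => exact (ev_x B p _ _ 0 y).2.1
    | succ a => rw [sp_succ a]; exact (ev_x B p _ _ _ y).2.2
  | @hat i f h ih =>
    cases a with
    | zero => rw [sp_succ]; exact (ev_hat B i _ _ 0 f).2
    | succ a =>
      rw [sp_succ, sp_succ, (ev_hat B i _ _ _ f).1]
      have := ih a m
      rw [show a + 1 + m = a + m + 1 by omega, this, mul_zero]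

theorem ev_pure (B : M43) {N : ℕ} {g : P4} (hg : g ∈ homog N) : ev B N 0 0 g = eval (fun i => B i 0) g := by
  have h1 : (eval ![1, 0, 0]) (sg B g) = eval (fun i => B i 0) g := by
    have : (aeval (R := kk) (![1, 0, 0] : Fin 3 → kk)).comp (sg B) = aeval (R := kk) (fun i => B i 0) := by
      ext1 i
      rw [AlgHom.comp_apply, sg_x, Fin.sum_univ_three]
      simp
    have h := congrArg (fun φ => φ g) this
    simpa [aeval_eq_eval] using h
  have h2 : (sg B g).IsHomogeneous N := by
    have : (sg B g) ∈ homogeneousSubmodule (Fin 3) kk N := by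
      have := IsHomogeneous.aeval (m := N) (n := 1) (φ := g) hg (fun i => ∑ j, B i j • y j) fun i =>
        IsHomogeneous.sum _ _ _ fun j _ => (homogeneousSubmodule (Fin 3) kk 1).smul_mem _ (isHomogeneous_X kk j)
      rw [one_mul] at this
      exact this
    exact this
  rw [← h1, eval_eq', ev_apply, cf_apply]
  rw [Finset.sum_eq_single (ex3 N 0 0)]
  · rw [Fin.prod_univ_three]; simp [ex3]
  · intro m hm hne
    have hd := h2 (mem_support_iff.1 hm)
    rw [Fin.prod_univ_three]
    by_cases h : m 1 = 0 ∧ m 2 = 0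
    · exfalso
      apply hne
      rw [ex3_eq]
      refine ⟨?_, h.1, h.2⟩
      rw [Finsupp.weight_apply, Finsupp.sum_fintype _ _ (by simp), Fin.sum_univ_three] at hd
      simp [h.1, h.2] at hd
      exact hd
    · rcases not_and_or.1 h with h | h
      · simp [zero_pow h]
      · simp [zero_pow h]
  · intro h
    rw [notMem_support_iff.1 h, zero_mul]

end Pf

namespace Pf

def E1 (s r : ℕ) (B : M43) : P4 →ₗ[kk] kk := ev B (sp (s + (r + 3))) (sp s) (sp s)
def E2 (s r : ℕ) (B : M43) : P4 →ₗ[kk] kk := ev B (sp (s + 1 + (r + 1))) (sp (s + 1 + (r + 1))) (sp (s + 1))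

theorem E1_hit (s r B) {f : P4} (h : f ∈ Hit) : E1 s r B f = 0 := ev_hit B (sp_add _) (sp_add _) (sp_add _) h
theorem E2_low (s r B) {f : P4} (h : f ∈ Low) : E2 s r B f = 0 := ev_low B h (s + 1) r
theorem E1_subst (s r B M) (f : P4) : E1 s r B (substM M f) = E1 s r (M * B) f := by
  rw [E1, E1, ev_apply, ev_apply, sg_subst]
theorem E2_subst (s r B M) (f : P4) : E2 s r B (substM M f) = E2 s r (M * B) f := by
  rw [E2, E2, ev_apply, ev_apply, sg_subst]

theorem E2_word {s r : ℕ} (B : M43) {L : List (Fin 4)} {D : List (Fin 6)} (hL : L.length = s + 1) (hD : D.length = r + 1) :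
    E2 s r B (w3 L (w6 D 1)) = lp (ell B) L * (D.map (ppv B)).prod := by
  have h := ev_w3 B L (r + 1) (r + 1) 0 (w6 D 1)
  rw [hL, add_zero, sp_zero] at h
  rw [E2, h, ← hD, ev_w6]

theorem E1_tail {s r : ℕ} (B : M43) {L : List (Fin 4)} (hL : L.length = s) (g : P4) :
    E1 s r B (w3 L g) = lp (ell B) L * ev B (sp (r + 3)) 0 0 g := by
  have h := ev_w3 B L (r + 3) 0 0 g
  rw [hL, add_zero, sp_zero] at h
  rw [E1, h]

theorem E1_word {s r : ℕ} (B : M43) {L D : List (Fin 4)} (hL : L.length = s) (hD : D.length = r + 3) :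
    E1 s r B (w3 L (w1 D 1)) = lp (ell B) L * lp (fun i => B i 0) D := by
  rw [E1_tail B hL, ← hD, ev_w1]

/-! bit masks -/
def tk (b : Bool) : kk := if b then 1 else 0
theorem tk_and (a b : Bool) : tk (a && b) = tk a * tk b := by revert a b; decide
theorem tk_xor (a b : Bool) : tk (a ^^ b) = tk a + tk b := by revert a b; decide
def mat (u v w : ℕ) : M43 := fun i j => tk ((![u, v, w] j).testBit i.val)

def mk4 (a b c d : Bool) : ℕ := a.toNat + 2 * b.toNat + 4 * c.toNat + 8 * d.toNat
theorem mk4_tb : ∀ (a b c d : Bool) (i : Fin 4), (mk4 a b c d).testBit i.val = ![a, b, c, d] i := by decide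
def pB (u v i j : ℕ) : Bool := (u.testBit i && v.testBit j) ^^ (v.testBit i && u.testBit j)
def pmk (u v : ℕ) : ℕ := mk4 (pB u v 0 1) (pB u v 0 2) (pB u v 0 3) (pB u v 1 2) + 16 * mk4 (pB u v 1 3) (pB u v 2 3) false false
def lB (w p : ℕ) (i j k a b c : ℕ) : Bool := (w.testBit i && p.testBit a) ^^ ((w.testBit j && p.testBit b) ^^ (w.testBit k && p.testBit c))
def lmp (w p : ℕ) : ℕ := mk4 (lB w p 1 2 3 5 4 3) (lB w p 0 2 3 5 2 1) (lB w p 0 1 3 4 2 0) (lB w p 0 1 2 3 1 0)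
def lm (u v w : ℕ) : ℕ := lmp w (pmk u v)

theorem mk6_tb : ∀ (a b c d e f : Bool) (i : Fin 6), (mk4 a b c d + 16 * mk4 e f false false).testBit i.val = ![a, b, c, d, e, f] i := by
  decide

theorem pmk_tb (u v : ℕ) (d : Fin 6) : (pmk u v).testBit d.val = pB u v (pr d).1.val (pr d).2.val := by
  rw [pmk, mk6_tb]; fin_cases d <;> rfl

theorem ppv_mat (u v w : ℕ) (d : Fin 6) : ppv (mat u v w) d = tk ((pmk u v).testBit d.val) := by
  rw [pmk_tb, pB, tk_xor, tk_and, tk_and]; rfl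

theorem pmB (u v w : ℕ) (d : Fin 6) : tk ((pmk u v).testBit d.val) = pm2 (mat u v w (pr d).1) (mat u v w (pr d).2) := by
  rw [← ppv_mat u v w]; rfl

theorem per_mat (a b c : Fin 3 → kk) : per a b c = a 2 * pm2 b c + (b 2 * pm2 a c + c 2 * pm2 a b) := by
  rw [per, pm2, pm2, pm2]; ring

theorem ell_mat (u v w : ℕ) (i : Fin 4) : ell (mat u v w) i = tk ((lm u v w).testBit i.val) := by
  have hp := pmB u v w
  have hw : ∀ j : Fin 4, tk (w.testBit j.val) = mat u v w j 2 := fun j => rfl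
  rw [lm, lmp, mk4_tb]
  fin_cases i
  · exact (by rw [lB, tk_xor, tk_xor, tk_and, tk_and, tk_and, per_mat]; exact congrArg₂ _ (congrArg₂ _ rfl (hp 5).symm) (congrArg₂ _ (congrArg₂ _ rfl (hp 4).symm) (congrArg₂ _ rfl (hp 3).symm)) :
      per (mat u v w 1) (mat u v w 2) (mat u v w 3) = tk (lB w (pmk u v) 1 2 3 5 4 3))
  · exact (by rw [lB, tk_xor, tk_xor, tk_and, tk_and, tk_and, per_mat]; exact congrArg₂ _ (congrArg₂ _ rfl (hp 5).symm) (congrArg₂ _ (congrArg₂ _ rfl (hp 2).symm) (congrArg₂ _ rfl (hp 1).symm)) :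
      per (mat u v w 0) (mat u v w 2) (mat u v w 3) = tk (lB w (pmk u v) 0 2 3 5 2 1))
  · exact (by rw [lB, tk_xor, tk_xor, tk_and, tk_and, tk_and, per_mat]; exact congrArg₂ _ (congrArg₂ _ rfl (hp 4).symm) (congrArg₂ _ (congrArg₂ _ rfl (hp 2).symm) (congrArg₂ _ rfl (hp 0).symm)) :
      per (mat u v w 0) (mat u v w 1) (mat u v w 3) = tk (lB w (pmk u v) 0 1 3 4 2 0))
  · exact (by rw [lB, tk_xor, tk_xor, tk_and, tk_and, tk_and, per_mat]; exact congrArg₂ _ (congrArg₂ _ rfl (hp 3).symm) (congrArg₂ _ (congrArg₂ _ rfl (hp 1).symm) (congrArg₂ _ rfl (hp 0).symm)) :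
      per (mat u v w 0) (mat u v w 1) (mat u v w 2) = tk (lB w (pmk u v) 0 1 2 3 1 0))

theorem tk_prod {n : ℕ} (m : ℕ) {D : List (Fin n)} {S : ℕ} (h : Sup D S) (hS : S < 2 ^ n) :
    (D.map fun i => tk (m.testBit i.val)).prod = tk (S &&& m == S) := by
  have h1 : (D.map fun i => tk (m.testBit i.val)).prod = tk (D.all fun i => m.testBit i.val) := by
    clear h
    induction D with
    | nil => rfl
    | cons i D ih => rw [List.map_cons, List.prod_cons, ih, List.all_cons, tk_and]
  rw [h1]
  congr 1
  rw [Bool.eq_iff_iff, List.all_eq_true, beq_iff_eq]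
  constructor
  · intro h2
    refine Nat.eq_of_testBit_eq fun j => ?_
    rw [Nat.testBit_and]
    by_cases hj : j < n
    · cases h3 : S.testBit j with
      | false => rfl
      | true => rw [h2 ⟨j, hj⟩ ((h ⟨j, hj⟩).2 h3)]; rfl
    · rw [Nat.testBit_lt_two_pow (hS.trans_le (Nat.pow_le_pow_right (by norm_num) (not_lt.1 hj)))]; rfl
  · intro h2 i hi
    have := (h i).1 hi
    rw [← h2, Nat.testBit_and, Bool.and_eq_true] at this
    exact this.2

theorem sub_code {k l p : ℕ} (hp : p < 64) :
    (k &&& (l * 64 + p) == k) = ((k / 64 &&& l == k / 64) && (k % 64 &&& p == k % 64)) := by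
  have h1 : (k &&& (l * 64 + p)) / 64 = k / 64 &&& l := by
    have := Nat.and_div_two_pow (a := k) (b := l * 64 + p) (n := 6)
    rw [show (2 : ℕ) ^ 6 = 64 by norm_num] at this
    rw [this]; congr 1; omega
  have h2 : (k &&& (l * 64 + p)) % 64 = k % 64 &&& p := by
    have := Nat.and_mod_two_pow (a := k) (b := l * 64 + p) (n := 6)
    rw [show (2 : ℕ) ^ 6 = 64 by norm_num] at this
    rw [this]; congr 1; omega
  rw [Bool.eq_iff_iff, Bool.and_eq_true, beq_iff_eq, beq_iff_eq, beq_iff_eq, ← h1, ← h2]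
  constructor
  · intro h; rw [h]; exact ⟨rfl, rfl⟩
  · rintro ⟨h3, h4⟩
    omega

def F1c (u v w : ℕ) : ℕ := lm u v w * 64 + u
def F2c (u v w : ℕ) : ℕ := lm u v w * 64 + pmk u v

theorem pmk_lt (u v : ℕ) : pmk u v < 64 := by
  have : ∀ a b c d e f : Bool, mk4 a b c d + 16 * mk4 e f false false < 64 := by decide
  exact this _ _ _ _ _ _

theorem E2_code {s r k u v w : ℕ} (hk : k < 1024) {p : P4} (h : IsW2 (s + 1) (r + 1) k p) :
    E2 s r (mat u v w) p = tk (k &&& F2c u v w == k) := by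
  obtain ⟨L, D, hL, hD, sL, sD, rfl⟩ := h
  rw [E2_word _ hL hD, F2c, sub_code (pmk_lt u v), tk_and, ← tk_prod (lm u v w) sL (by omega), ← tk_prod (pmk u v) sD (by omega),
    funext (ppv_mat u v w), lp, funext (ell_mat u v w)]

theorem E1_code {s r k u v w : ℕ} (hu : u < 16) (hk : k < 1024) {p : P4} (h : IsW1 s (r + 3) k p) (hk2 : k % 64 < 16) :
    E1 s r (mat u v w) p = tk (k &&& F1c u v w == k) := by
  obtain ⟨L, D, hL, hD, sL, sD, rfl⟩ := h
  rw [E1_word _ hL hD, F1c, sub_code (by omega), tk_and, ← tk_prod (lm u v w) sL (by omega), ← tk_prod u sD (by omega),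
    lp, lp, funext (ell_mat u v w)]
  rfl

end Pf

namespace Pf

def reps1 : List ℕ := [292, 296, 300, 328, 330, 360, 362, 532, 536, 540, 584, 585, 600, 601, 788, 792, 796, 840, 841, 856, 857, 1042, 1048, 1050, 1064,
  1065, 1080, 1081, 1298, 1304, 1306, 1320, 1321, 1336, 1337, 1554, 1560, 1562, 1576, 1577, 1592, 1593, 1810, 1816, 1818, 1832, 1833, 1848, 1849, 2066,
  2068, 2070, 2084, 2085, 2100, 2101, 2322, 2324, 2326, 2340, 2341, 2356, 2357, 2578, 2580, 2582, 2596, 2597, 2612, 2613, 2834, 2836, 2838, 2852, 2853,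
  2868, 2869, 3090, 3092, 3094, 3108, 3109, 3124, 3125, 3346, 3348, 3350, 3364, 3365, 3380, 3381, 3602, 3604, 3606, 3620, 3621, 3636, 3637, 3858, 3860,
  3862, 3876, 3877, 3892, 3893]
def reps2 : List ℕ := [292, 296, 300, 322, 328, 330, 354, 360, 362, 386, 388, 390, 418, 420, 422, 450, 452, 454, 482, 484, 486, 577, 584, 585, 593,
  600, 601, 641, 644, 645, 657, 660, 661, 705, 708, 709, 721, 724, 725, 833, 840, 841, 849, 856, 857, 897, 900, 901, 913, 916,
  917, 961, 964, 965, 977, 980, 981, 1153, 1154, 1155, 1169, 1170, 1171, 1185, 1186, 1187, 1201, 1202, 1203, 1409, 1410, 1411, 1425, 1426, 1427,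
  1441, 1442, 1443, 1457, 1458, 1459, 1665, 1666, 1667, 1681, 1682, 1683, 1697, 1698, 1699, 1713, 1714, 1715, 1921, 1922, 1923, 1937, 1938, 1939, 1953,
  1954, 1955, 1969, 1970, 1971]
def cert2 : List ℕ := [4947821199433, 4835703566688893118971904, 16, 3584,
  76757190321081633739266, 73, 39930994196956752139552379065910, 28083336374286926545936901089572,
  16924962483481494392144896, 512, 2594073385365405704, 1008806316530991104,
  308956, 23177066767753458907512601912441, 10627918659842067169800, 7,
  939524096, 307264225285, 8, 11589948268186721991255968935783,
  196717233372814901272, 144115188075855872, 33697684594817917866058819792093, 505844313444801576960,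
  294108790786, 880469, 2097151, 17384923284987684747988847446814,
  1287963048617970138793499431499, 37197715309447235210808, 1297036692682702864, 486790922246,
  84307385574133596216, 4507202134144801220811462564358, 5313959329921033634832, 1099515822096,
  1100122561421723184580788224, 599430, 18874369, 168614771698029297688,
  24468958824695024913760605779917, 549757911048, 11961564458599317552, 144115188075855871,
  1024, 4133079478827470556672, 12479808266232362830369172025681, 17474076710177345845499200648417,
  268435456, 23536510485116657849885306995860, 19814297135539319904443304960, 233016,
  78573993989, 308814, 56, 15600670207410475777235758583694,
  24471091369967934692536294651515, 1, 16095860727865785785164052062835, 2,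
  19811877512724429193959440896, 35184506307072, 35632887867913681519015554488458, 15564444160495714312,
  16926142786871835651737088, 20597779653235421, 599161, 1207959554,
  298537975813, 345407356449815003735161, 9217, 4194304,
  20587884010836559, 2216623897345543, 19814297135539495825632657920, 69324645151748753486159808512,
  1287929198693003316541666628098, 6863564375657038227536826917438, 17452498944, 2072444138698890020313990,
  4610, 2097152, 633321113527297, 4149372292170184494563495253610,
  16095996634753837871497017433603, 547337797638, 89153475377056739304641040554, 34634748396031,
  632718, 590439925546781508608, 16924962483411125916401664, 549753716743,
  14680064, 78536245255, 316660556763650, 2594077233670783024,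
  307316654082, 288230376151711744, 1287772038327085927515566379522, 314320731834778052737368064,
  20322338011250325641717333689360, 66576, 39618917551715314357720056832, 134217728,
  18734974449865457664]
def cert1a : List ℕ := [2380356190948445667457, 1024, 4952215866232760613405345033, 16777216,
  153496084205729212285059, 274894685184, 2555264202034856085339703885825, 4503599627370496,
  73791479894465577984, 11879847298657027228680, 1208925824118228818853888, 19808249628177179196920955904,
  8, 4952213522772309612192334208, 4194304, 541065224,
  4952062407044294764866306176, 2560216417899926961438568088586, 1125899906842624, 145241087982698504,
  302231456029557204713472, 38987857827812879408037896, 3188972238705214599186641716232, 2,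
  256, 33026, 151115728014778602356736, 2560216417899926952710661899530,
  562949953421312, 72620543991349250, 9223934986808197376, 1189887613298257461506,
  175294243916178826534584322, 7427942476390557412266868992, 2879624140922827928838458213642, 1,
  128, 16513, 2097152, 270532609,
  34361835648, 4432676798593, 2379775226596514873472, 4952213504324439638575939840,
  156104926233528541087023234]
def cert1b : List ℕ := [1024, 16777216, 2164260866, 274894685184,
  4503599627370496, 73791479894465577984, 1208925824118228818853888, 19808249628177179196920955904,
  11129913629446475302471128045226, 8, 11898876132982574287896, 4194304,
  541065224, 319408027634132391033192420158, 319408027634132250012219578142, 1125899906842624,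
  145241087982698504, 9903852348268510602774823559, 302231456029557204713472, 38987857827812879408037896,
  387405269445944282240, 12101802702692354753680, 88080384, 11362369578,
  23643898043695104, 9903890053572149151963268751, 6346860576620701298982912, 968868881468790753191730467490,
  2, 256, 33026, 319408027634132390964468748862,
  319408034773457920936409927430, 562949953421312, 72620543991349250, 9223934986808197376,
  1189887613298257461506, 19493928913906439704018951, 5376, 387405270889141377408,
  12101802888864780030394, 14073748835532800, 1815513599783731207, 230598374670204933376,
  126276231098246067207444370688, 126604001112891086345739441410, 16181019684634979866379771659176, 42,
  693546, 3940649673949184, 508343807939444778, 29793310007390476813191,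
  8329213293087802742442, 958243567312500214535018910727, 2235856176780499101852452897664, 1,
  128, 16513, 2097152, 270532609,
  34361835648, 4432676798593, 9519100906386059447425, 151115728014778602356736,
  13702200848163208511138514568107, 3200, 52428800, 6763315207,
  859045891200, 580964351930793985, 126277591139807207414120322304, 126433391455381436956042859780,
  61900780327875995540798839168, 25, 412825, 14680064,
  1893728281, 110988729224990, 31028737590144, 9903890055142779522008729238,
  37874049012987133708296, 9904343402327949757722642070, 958224073383295825919349494791, 13372888427915910103995223792029,
  7, 896, 115591, 110816919666695,
  29747190332456435826695, 13385268848439654731520206311957]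
def cert1c : List ℕ := [1024, 16777216, 274894685184, 4503599627370496,
  11439747927375602511226706507102, 73791479894465577984, 1208925824118228818853888, 11439437195961239076784373401891,
  19808249628177179196920955904, 8, 11694778863716958165924134947423, 4194304,
  541065224, 8867517858088, 1125899906842624, 145241087982698504,
  302231456029557204713472, 38987857827812879408037896, 1277593109590518360914339594538, 11694778863716958165924134817367,
  88080384, 11694859861710928553723994705320, 11694859861710928403848896219272, 23643898043695104,
  2457607008232618791780653822, 11439844214106991317026429610920, 6346860576620701298982912, 877238698839994087325568001,
  2, 256, 33026, 2164260866,
  11694779317036470405368241096927, 562949953421312, 72620543991349250, 9223934986808197376,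
  1189887613298257461506, 9903822554965258611739066624, 5376, 11694779317036470440829621771741,
  14073748835532800, 115420768762442771610751, 230598374670204933376, 11568593301797890858842942210344,
  16669217261222794986007231632682, 42, 64567544907657380736, 1057810096103450216497152,
  3940649673949184, 508343807939444778, 64567544907658073770, 2474671226537559288498001663,
  2475728972066117842410406015, 71494644084506624, 73782472695211529941, 1171439743324641050496,
  1, 128, 16513, 2097152,
  270532609, 34361835648, 4432676798593, 151115728014778602356736,
  9519100906386059447425, 19493928913906441868279813, 2555264202034856086198749777025, 11439747776259293532096173356383,
  3200, 52428800, 859045891200, 11439749098823861579810726906144,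
  487348222847660992600473607, 25, 14680064, 1893728281,
  4952062407044294764880986240, 11898876132982574287896, 11694779014851134050676353698527, 4471614880347201493646016777247,
  11439747776259293532096173504966, 266338304, 136469400982995915107208216, 212914441874745359301301798920,
  217730034882106373520340469769, 2457595149264008007243175679, 314455962847312719751120174976, 7,
  896, 115591, 11702207108387909012843298720351, 2874672217770112185497687278471,
  115419098489930970578040, 16256, 2874672339138648741919946949631, 11439747738782301565504029100320,
  11630494081867496673859703815848, 2948590445860450510466155186319, 151115726888878695514111, 127,
  2874672223719550251988974305400, 136469400982995884537023591, 11697255045980864718044072675679, 2874769700503009771738582077408,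
  40564819207303340847894502572031]

def cert1 (A : ℕ) : List ℕ := match A with
  | 1 => cert1a
  | 2 => cert1b
  | _ => cert1c

/-! linear independence certificates -/
def mq (q : ℕ) : M43 := mat (q / 256) (q / 16 % 16) (q % 16)
def G1 (q : ℕ) : ℕ := F1c (q / 256) (q / 16 % 16) (q % 16)
def G2 (q : ℕ) : ℕ := F2c (q / 256) (q / 16 % 16) (q % 16)
def frcL {α : Type} : List ℕ → (List ℕ → α) → α
  | [], f => f []
  | a :: l, f => frc a fun a' => frcL l fun l' => f (a' :: l')
theorem frcL_eq {α : Type} (l : List ℕ) (f : List ℕ → α) : frcL l f = f l := by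
  induction l generalizing f with
  | nil => rfl
  | cons a l ih => rw [frcL, frc_eq, ih]

def rowOf (F : ℕ) : List ℕ → ℕ
  | [] => 0
  | k :: l => 2 * rowOf F l + (k &&& F == k).toNat
def combo : List ℕ → ℕ → ℕ
  | [], _ => 0
  | r :: rs, c => (r * (c % 2)) ^^^ combo rs (c / 2)
def chkC (l F cs : List ℕ) : Bool :=
  frcL (F.map fun f => rowOf f l) fun rows => (cs.map (combo rows)) == (List.range l.length).map fun i => 2 ^ i

set_option maxRecDepth 1000000 in
theorem chkC2 : chkC seeds2 (reps2.map G2) cert2 = true := by decide +kernel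
set_option maxRecDepth 1000000 in
theorem chkC1 : ([1, 2, 3, 4].all fun A => chkC (seeds1 A) (reps1.map G1) (cert1 A)) = true := by decide +kernel

def Ph {n : ℕ} (c : Fin n → kk) (m : ℕ) : kk := ∑ i, c i * tk (m.testBit i.val)
theorem Ph_xor {n : ℕ} (c : Fin n → kk) (m m' : ℕ) : Ph c (m ^^^ m') = Ph c m + Ph c m' := by
  rw [Ph, Ph, Ph, ← Finset.sum_add_distrib]
  refine Finset.sum_congr rfl fun i _ => ?_
  rw [Nat.testBit_xor, tk_xor, mul_add]
theorem Ph_zero {n : ℕ} (c : Fin n → kk) : Ph c 0 = 0 := by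
  rw [Ph]; refine Finset.sum_eq_zero fun i _ => ?_
  rw [Nat.zero_testBit]; exact mul_zero _
theorem Ph_pow {n : ℕ} (c : Fin n → kk) (i : Fin n) : Ph c (2 ^ i.val) = c i := by
  rw [Ph, Finset.sum_eq_single i]
  · rw [Nat.testBit_two_pow_self]; exact mul_one _
  · intro j _ hj
    rw [Nat.testBit_two_pow_of_ne (fun h => hj (Fin.ext h.symm))]; exact mul_zero _
  · intro h; exact absurd (Finset.mem_univ i) h

theorem Ph_combo {n : ℕ} (c : Fin n → kk) (rows : List ℕ) (h : ∀ r ∈ rows, Ph c r = 0) (m : ℕ) : Ph c (combo rows m) = 0 := by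
  induction rows generalizing m with
  | nil => exact Ph_zero c
  | cons r rs ih =>
    rw [combo, Ph_xor, ih fun r hr => h r (List.mem_cons_of_mem _ hr), add_zero]
    rcases Nat.mod_two_eq_zero_or_one m with e | e
    · rw [e, mul_zero]; exact Ph_zero c
    · rw [e, mul_one]; exact h r List.mem_cons_self

theorem rowOf_tb (F : ℕ) (l : List ℕ) (i : Fin l.length) : (rowOf F l).testBit i.val = (l[i] &&& F == l[i]) := by
  induction l with
  | nil => exact i.elim0
  | cons k l ih =>
    rw [rowOf]
    refine Fin.cases ?_ (fun j => ?_) i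
    · have : ∀ (m : ℕ) (b : Bool), (2 * m + b.toNat).testBit 0 = b := by
        intro m b; rw [Nat.testBit_zero]; cases b <;> simp
      exact this _ _
    · have : ∀ (m n : ℕ) (b : Bool), (2 * m + b.toNat).testBit (n + 1) = m.testBit n := by
        intro m n b; rw [Nat.testBit_add_one]; congr 1; cases b <;> (simp; try omega)
      exact (this _ _ _).trans (ih j)

theorem chkC_ok {l F cs : List ℕ} (h : chkC l F cs = true) (c : Fin l.length → kk)
    (hc : ∀ f ∈ F, ∑ i : Fin l.length, c i * tk (l[i] &&& f == l[i]) = 0) (i : Fin l.length) : c i = 0 := by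
  rw [chkC, frcL_eq, beq_iff_eq] at h
  have h1 : 2 ^ i.val ∈ cs.map (combo (F.map fun f => rowOf f l)) := by
    rw [h]; exact List.mem_map.2 ⟨i.val, List.mem_range.2 i.2, rfl⟩
  obtain ⟨m, -, hm⟩ := List.mem_map.1 h1
  rw [← Ph_pow c i, ← hm]
  refine Ph_combo c _ ?_ m
  intro r hr
  obtain ⟨f, hf, rfl⟩ := List.mem_map.1 hr
  rw [← hc f hf, Ph]
  exact Finset.sum_congr rfl fun i _ => by rw [rowOf_tb]

theorem sep_gen {W : Submodule kk P4} {v : ℕ → P4} {l cs : List ℕ} {F : List ℕ} {G : ℕ → ℕ} (E : ℕ → P4 →ₗ[kk] kk)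
    (hW : ∀ q ∈ F, ∀ f ∈ W, E q f = 0) (hv : ∀ q ∈ F, ∀ k ∈ l, E q (v k) = tk (k &&& G q == k))
    (h : chkC l (F.map G) cs = true) {f : P4} (hf : f ∈ W ⊔ Submodule.span kk {p | ∃ k ∈ l, p = v k})
    (h0 : ∀ q ∈ F, E q f = 0) : f ∈ W := by
  obtain ⟨g, hg, y, hy, rfl⟩ := Submodule.mem_sup.1 hf
  have e : {p | ∃ k ∈ l, p = v k} = Set.range fun i : Fin l.length => v l[i] := by
    ext p
    constructor
    · rintro ⟨k, hk, rfl⟩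
      obtain ⟨i, hi, rfl⟩ := List.mem_iff_getElem.1 hk
      exact ⟨⟨i, hi⟩, rfl⟩
    · rintro ⟨i, rfl⟩
      exact ⟨l[i], List.getElem_mem _, rfl⟩
  rw [e, Submodule.mem_span_range_iff_exists_fun] at hy
  obtain ⟨c, rfl⟩ := hy
  have hc := chkC_ok h c (by
    intro f hf
    obtain ⟨q, hq, rfl⟩ := List.mem_map.1 hf
    rw [← h0 q hq, map_add, hW q hq g hg, zero_add, map_sum]
    refine Finset.sum_congr rfl fun i _ => ?_
    rw [map_smul]; exact (congrArg (c i * ·) (hv q hq l[i] (List.getElem_mem _))).symm)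
  rw [Finset.sum_eq_zero fun i _ => by rw [hc i, zero_smul], add_zero]
  exact hg

theorem v2_spec {a b k : ℕ} (h1 : 1 ≤ pc 4 (k / 64)) (h2 : pc 4 (k / 64) ≤ a) (h3 : 1 ≤ pc 6 (k % 64)) (h4 : pc 6 (k % 64) ≤ b) :
    IsW2 a b k (v2 a b k) := by
  obtain ⟨L, hL, sL⟩ := ex_list h1 h2
  obtain ⟨D, hD, sD⟩ := ex_list h3 h4
  have hex : ∃ p, IsW2 a b k p := ⟨_, L, D, hL, hD, sL, sD, rfl⟩
  rw [v2, dif_pos hex]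
  exact hex.choose_spec
theorem v1_spec {a b k : ℕ} (h1 : 1 ≤ pc 4 (k / 64)) (h2 : pc 4 (k / 64) ≤ a) (h3 : 1 ≤ pc 4 (k % 64)) (h4 : pc 4 (k % 64) ≤ b) :
    IsW1 a b k (v1 a b k) := by
  obtain ⟨L, hL, sL⟩ := ex_list h1 h2
  obtain ⟨D, hD, sD⟩ := ex_list h3 h4
  have hex : ∃ p, IsW1 a b k p := ⟨_, L, D, hL, hD, sL, sD, rfl⟩
  rw [v1, dif_pos hex]
  exact hex.choose_spec

def ok2 (a b k : ℕ) : Bool := decide (k < 1024) && (decide (1 ≤ pc 4 (k / 64)) && (decide (pc 4 (k / 64) ≤ a) && (decide (1 ≤ pc 6 (k % 64)) && decide (pc 6 (k % 64) ≤ b))))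
def ok1 (a b k : ℕ) : Bool := decide (k < 1024) && (decide (1 ≤ pc 4 (k / 64)) && (decide (pc 4 (k / 64) ≤ a) && (decide (1 ≤ pc 4 (k % 64)) && (decide (pc 4 (k % 64) ≤ b) && decide (k % 64 < 16)))))
theorem ok2_w {a b A B k : ℕ} (h : ok2 A B k = true) (hA : A ≤ a) (hB : B ≤ b) : k < 1024 ∧ IsW2 a b k (v2 a b k) := by
  simp only [ok2, Bool.and_eq_true, decide_eq_true_eq] at h
  obtain ⟨h1, h2, h3, h4, h5⟩ := h
  exact ⟨h1, v2_spec h2 (h3.trans hA) h4 (h5.trans hB)⟩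
theorem ok1_w {a b A B k : ℕ} (h : ok1 A B k = true) (hA : A ≤ a) (hB : B ≤ b) : k < 1024 ∧ k % 64 < 16 ∧ IsW1 a b k (v1 a b k) := by
  simp only [ok1, Bool.and_eq_true, decide_eq_true_eq] at h
  obtain ⟨h1, h2, h3, h4, h5, h6⟩ := h
  exact ⟨h1, h6, v1_spec h2 (h3.trans hA) h4 (h5.trans hB)⟩

set_option maxRecDepth 1000000 in
theorem seeds2_ok : (seeds2.all (ok2 2 3)) = true := by decide +kernel
set_option maxRecDepth 1000000 in
theorem seeds1_ok : ([1, 2, 3, 4].all fun A => (seeds1 A).all (ok1 A 4)) = true := by decide +kernel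
set_option maxRecDepth 1000000 in
theorem reps1_lt : (reps1.all fun q => decide (q / 256 < 16)) = true := by decide +kernel

theorem sep2 {s r : ℕ} (hs : 1 ≤ s) (hr : 2 ≤ r) {f : P4} (hf : f ∈ homog (NN (r + 2) s))
    (h0 : ∀ q ∈ reps2, E2 s r (mq q) f = 0) : f ∈ Low := by
  have h1 := V32_seeds (by omega) (by omega) (homog_V32 r s hf)
  refine sep_gen (fun q => E2 s r (mq q)) (fun q _ f hf => E2_low s r _ hf) (fun q _ k hk => ?_) chkC2 h1 h0
  obtain ⟨h2, h3⟩ := ok2_w (a := s + 1) (b := r + 1) (List.all_eq_true.1 seeds2_ok k hk) (by omega) (by omega)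
  exact E2_code h2 h3

theorem low_V31 {s r : ℕ} (hr : 2 ≤ r) {f : P4} (hf : f ∈ homog (NN (r + 2) s)) (hl : f ∈ Low) : f ∈ V31 s (r + 3) := by
  have h1 := Low_V31 (t := r + 2) (by omega) hl s
  rw [comp_homog hf, if_pos rfl] at h1
  exact h1

theorem sep1 {s r : ℕ} (hs : 1 ≤ s) (hr : 2 ≤ r) {f : P4} (hf : f ∈ homog (NN (r + 2) s)) (hl : f ∈ Low)
    (h0 : ∀ q ∈ reps1, E1 s r (mq q) f = 0) : f ∈ Hit := by
  have hm : min s 4 ∈ [1, 2, 3, 4] := by simp; omega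
  have h1 := V31_seeds (by omega) (by omega) (low_V31 hr hf hl)
  refine HitO_hit (sep_gen (fun q => E1 s r (mq q)) (fun q _ f hf => E1_hit s r _ (HitO_hit hf)) (fun q hq k hk => ?_)
    (List.all_eq_true.1 chkC1 _ hm) h1 h0)
  obtain ⟨h2, h3, h4⟩ := ok1_w (a := s) (b := r + 3) (List.all_eq_true.1 (List.all_eq_true.1 seeds1_ok _ hm) k hk) (by omega) (by omega)
  exact E1_code (of_decide_eq_true (List.all_eq_true.1 reps1_lt q hq)) h2 h4 h3

end Pf

namespace Pf

/-! frames -/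
def B0 : M43 := mat 1 2 4
def Ind (B : M43) : Prop := ∃ M : Matrix (Fin 4) (Fin 4) kk, IsUnit M ∧ M * B0 = B
theorem Ind.mul {B : M43} (h : Ind B) {M : Matrix (Fin 4) (Fin 4) kk} (hM : IsUnit M) : Ind (M * B) := by
  obtain ⟨N, hN, rfl⟩ := h
  exact ⟨M * N, hM.mul hN, by rw [Matrix.mul_assoc]⟩

def ext4 (B : M43) (c : Fin 4 → kk) : Matrix (Fin 4) (Fin 4) kk :=
  Matrix.of fun i j => ![B i 0, B i 1, B i 2, c i] j

theorem ext4_B0 (B : M43) (c : Fin 4 → kk) : ext4 B c * B0 = B := by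
  ext i j
  rw [Matrix.mul_apply, Fin.sum_univ_four]
  fin_cases j <;> simp [ext4, B0, mat, tk, Nat.testBit]

theorem ext4_det (B : M43) (c : Fin 4 → kk) :
    (ext4 B c).det = c 0 * ell B 0 + c 1 * ell B 1 + c 2 * ell B 2 + c 3 * ell B 3 := by
  have h1 : (-1 : kk) = 1 := by decide
  rw [Matrix.det_succ_column _ 3, Fin.sum_univ_four]
  simp [Matrix.det_fin_three, ext4, Fin.succAbove, ell, per]
  simp [sub_eq_add_neg, CharTwo.neg_eq]
  ring_nf

theorem Ind_ell {B : M43} (i : Fin 4) (h : ell B i ≠ 0) : Ind B := by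
  refine ⟨ext4 B (Pi.single i 1), ?_, ext4_B0 B _⟩
  rw [Matrix.isUnit_iff_isUnit_det, isUnit_iff_ne_zero, ext4_det]
  fin_cases i <;> simpa using h

theorem Ind_mat {u v w : ℕ} (h : lm u v w ≠ 0) (hl : lm u v w < 16) : Ind (mat u v w) := by
  obtain ⟨i, hi⟩ := Nat.exists_testBit_of_ne_zero h
  have hi4 : i < 4 := by
    by_contra h4
    rw [Nat.testBit_lt_two_pow (hl.trans_le (Nat.pow_le_pow_right (by norm_num : 0 < 2) (not_lt.1 h4)))] at hi
    exact absurd hi (by decide)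
  refine Ind_ell ⟨i, hi4⟩ ?_
  rw [ell_mat]
  change tk ((lm u v w).testBit i) ≠ 0
  rw [hi]; decide

def okI (u v w : ℕ) : Bool := !(lm u v w == 0) && decide (lm u v w < 16)
theorem okI_ind {u v w : ℕ} (h : okI u v w = true) : Ind (mat u v w) := by
  rw [okI, Bool.and_eq_true, Bool.not_eq_true', beq_eq_false_iff_ne, decide_eq_true_eq] at h
  exact Ind_mat h.1 h.2

set_option maxRecDepth 1000000 in
theorem reps_okI : ((reps1 ++ reps2).all fun q => okI (q / 256) (q / 16 % 16) (q % 16)) = true := by decide +kernel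
theorem reps1_ind {q : ℕ} (h : q ∈ reps1) : Ind (mq q) :=
  okI_ind (List.all_eq_true.1 reps_okI q (List.mem_append_left _ h))
theorem reps2_ind {q : ℕ} (h : q ∈ reps2) : Ind (mq q) :=
  okI_ind (List.all_eq_true.1 reps_okI q (List.mem_append_right _ h))

theorem col_ex : ∀ c : Fin 4 → kk, ∃ m : Fin 16, ∀ i : Fin 4, c i = tk (m.val.testBit i.val) := by
  intro c
  have h : ∀ a b d e : kk, ∃ m : Fin 16, a = tk (m.val.testBit 0) ∧ b = tk (m.val.testBit 1) ∧ d = tk (m.val.testBit 2) ∧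
      e = tk (m.val.testBit 3) := by decide
  obtain ⟨m, h0, h1, h2, h3⟩ := h (c 0) (c 1) (c 2) (c 3)
  refine ⟨m, fun i => ?_⟩
  fin_cases i
  exacts [h0, h1, h2, h3]

theorem mat_ex (B : M43) : ∃ u v w : Fin 16, B = mat u.val v.val w.val := by
  obtain ⟨u, hu⟩ := col_ex fun i => B i 0
  obtain ⟨v, hv⟩ := col_ex fun i => B i 1
  obtain ⟨w, hw⟩ := col_ex fun i => B i 2
  refine ⟨u, v, w, ?_⟩
  ext i j
  fin_cases j
  exacts [hu i, hv i, hw i]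

theorem Ind_inj {B : M43} (h : Ind B) (a : Fin 3 → kk) (ha : ∀ i, B i 0 * a 0 + B i 1 * a 1 + B i 2 * a 2 = 0) : a = 0 := by
  obtain ⟨M, hM, rfl⟩ := h
  obtain ⟨N, hN⟩ := hM.exists_left_inv
  have h1 : (M * B0).mulVec a = 0 := by
    ext i
    rw [Matrix.mulVec, dotProduct, Fin.sum_univ_three]
    exact ha i
  have h2 : B0.mulVec a = 0 := by
    have := congrArg N.mulVec h1
    rw [Matrix.mulVec_mulVec, ← Matrix.mul_assoc, hN, Matrix.one_mul, Matrix.mulVec_zero] at this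
    exact this
  ext j
  have h3 := fun i => congrFun h2 i
  simp only [Matrix.mulVec, dotProduct, Fin.sum_univ_three] at h3
  fin_cases j
  · simpa [B0, mat, tk, Nat.testBit] using h3 0
  · simpa [B0, mat, tk, Nat.testBit] using h3 1
  · simpa [B0, mat, tk, Nat.testBit] using h3 2

def okP (u v w : ℕ) : Bool := !(u == 0) && (!(v == 0) && (!(u ^^^ v == 0) && (!(w == 0) && (!(u ^^^ w == 0) && (!(v ^^^ w == 0) && !(u ^^^ v ^^^ w == 0))))))
theorem okP_ind {u v w : ℕ} (h : Ind (mat u v w)) : okP u v w = true := by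
  have key : ∀ a b c : Bool, (∀ i : Fin 4, (((u.testBit i.val && a) ^^ (v.testBit i.val && b)) ^^ (w.testBit i.val && c)) = false) →
      a = false ∧ b = false ∧ c = false := by
    intro a b c hh
    have := Ind_inj h ![tk a, tk b, tk c] (fun i => by
      have := congrArg tk (hh i)
      rw [tk_xor, tk_xor, tk_and, tk_and, tk_and] at this
      exact this)
    have e : ∀ a, tk a = 0 → a = false := by decide
    exact ⟨e _ (congrFun this 0), e _ (congrFun this 1), e _ (congrFun this 2)⟩
  have z : ∀ i, (0 : ℕ).testBit i = false := Nat.zero_testBit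
  simp only [okP, Bool.and_eq_true, Bool.not_eq_true', beq_eq_false_iff_ne]
  refine ⟨?_, ?_, ?_, ?_, ?_, ?_, ?_⟩
  · intro e
    have := key true false false (fun i => by rw [e, z]; simp)
    simp at this
  · intro e
    have := key false true false (fun i => by rw [e, z]; simp)
    simp at this
  · intro e
    have := key true true false (fun i => by have := congrArg (Nat.testBit · i.val) e; simpa using this)
    simp at this
  · intro e
    have := key false false true (fun i => by rw [e, z]; simp)
    simp at this
  · intro e
    have := key true false true (fun i => by have := congrArg (Nat.testBit · i.val) e; simpa using this)
    simp at this
  · intro e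
    have := key false true true (fun i => by have := congrArg (Nat.testBit · i.val) e; simpa using this)
    simp at this
  · intro e
    have := key true true true (fun i => by have := congrArg (Nat.testBit · i.val) e; simpa using this)
    simp at this

theorem ofList_mem {l : List ℕ} {k : ℕ} (h : (ofList l).testBit k = true) : k ∈ l := by
  induction l with
  | nil => simp [ofList] at h
  | cons a l ih =>
    rw [ofList, List.foldr_cons, Nat.testBit_or, tb_one, Bool.or_eq_true, decide_eq_true_eq] at h
    rcases h with h | h
    · exact List.mem_cons_of_mem _ (ih h)
    · rw [h]; exact List.mem_cons_self

def r16 : List ℕ := [0, 1, 2, 3, 4, 5, 6, 7, 8, 9, 10, 11, 12, 13, 14, 15]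
def fl1 : ℕ := ofList (reps1.map G1)
def fl2 : ℕ := ofList (reps2.map G2)
def chkI (f1 f2 u v w p : ℕ) : Bool := !(okP u v w) || frc (lmp w p) fun l => f1.testBit (l * 64 + u) && f2.testBit (l * 64 + p)
set_option maxRecDepth 1000000 in
theorem chkI_all : (frc fl1 fun f1 => frc fl2 fun f2 => r16.all fun u => r16.all fun v => frc (pmk u v) fun p =>
    r16.all fun w => chkI f1 f2 u v w p) = true := by decide +kernel

theorem mem_r16 (u : Fin 16) : u.val ∈ r16 := by revert u; decide

theorem Ind_codes {B : M43} (h : Ind B) : ∃ u v w : ℕ, u < 16 ∧ B = mat u v w ∧ F1c u v w ∈ reps1.map G1 ∧ F2c u v w ∈ reps2.map G2 := by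
  obtain ⟨u, v, w, rfl⟩ := mat_ex B
  refine ⟨u, v, w, u.2, rfl, ?_⟩
  have hc := chkI_all
  rw [frc_eq, frc_eq] at hc
  have hc := List.all_eq_true.1 (List.all_eq_true.1 hc _ (mem_r16 u)) _ (mem_r16 v)
  rw [frc_eq] at hc
  have hc := List.all_eq_true.1 hc _ (mem_r16 w)
  rw [chkI, okP_ind h, frc_eq, Bool.not_true, Bool.false_or, Bool.and_eq_true] at hc
  exact ⟨ofList_mem hc.1, ofList_mem hc.2⟩

end Pf

namespace Pf

/-! the invariant classes -/
theorem w3_homog {t : ℕ} {g : P4} (hg : g ∈ homog (NN t 0)) (L : List (Fin 4)) : w3 L g ∈ homog (NN t L.length) := by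
  induction L with
  | nil => exact hg
  | cons i L ih =>
    rw [w3_cons, List.length_cons, NN, add_comm]
    exact mul_homog (hat_homog i) (sq_homog ih)

theorem w6_homog (D : List (Fin 6)) : w6 D 1 ∈ homog (2 * (2 ^ D.length - 1)) := by
  induction D with
  | nil => rw [w6_nil]; exact one_homog
  | cons i D ih =>
    have h1 : pp i ∈ homog 2 := mul_homog (x_homog _) (x_homog _)
    have h2 := mul_homog h1 (sq_homog ih)
    rw [w6_cons, List.length_cons, pow_succ]
    have := Nat.one_le_two_pow (n := D.length)
    rwa [show 2 * (2 ^ D.length * 2 - 1) = 2 + 2 * (2 * (2 ^ D.length - 1)) by omega]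

theorem tail_homog {r : ℕ} (i : Fin 4) {D : List (Fin 6)} (hD : D.length = r + 1) : hat i * (w6 D 1) ^ 2 ∈ homog (NN (r + 2) 0) := by
  have h2 := mul_homog (hat_homog i) (sq_homog (w6_homog D))
  rw [hD] at h2
  have := Nat.one_le_two_pow (n := r + 1)
  rw [NN, show 2 ^ (r + 2 + 1) - 1 = 3 + 2 * (2 * (2 ^ (r + 1) - 1)) by rw [pow_succ, pow_succ]; omega]
  exact h2

theorem IsW2.tail {s r k : ℕ} {p : P4} (h : IsW2 (s + 1) (r + 1) k p) :
    ∃ (L : List (Fin 4)) (i : Fin 4) (D : List (Fin 6)), L.length = s ∧ D.length = r + 1 ∧ p = w3 L (hat i * (w6 D 1) ^ 2) := by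
  obtain ⟨L, D, hL, hD, -, -, rfl⟩ := h
  rcases List.eq_nil_or_concat L with rfl | ⟨L', i, rfl⟩
  · simp at hL
  · refine ⟨L', i, D, ?_, hD, ?_⟩
    · simpa using hL
    · rw [List.concat_eq_append, w3_append, w3_cons, w3_nil]

theorem IsW2.homog {s r k : ℕ} {p : P4} (h : IsW2 (s + 1) (r + 1) k p) : p ∈ homog (NN (r + 2) s) := by
  obtain ⟨L, i, D, hL, hD, rfl⟩ := h.tail
  rw [← hL]
  exact w3_homog (tail_homog i hD) L

theorem lp_eq (b : Fin 4 → kk) (L : List (Fin 4)) : lp b L = tk (L.all fun i => decide (b i = 1)) := by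
  induction L with
  | nil => rfl
  | cons i L ih =>
    rw [List.all_cons, tk_and, ← ih, lp, lp, List.map_cons, List.prod_cons]
    congr 1
    have : ∀ c : kk, c = tk (decide (c = 1)) := by decide
    exact this _

theorem lp_sup (b : Fin 4 → kk) {L M : List (Fin 4)} {S : ℕ} (hL : Sup L S) (hM : Sup M S) : lp b L = lp b M := by
  rw [lp_eq, lp_eq]
  congr 1
  rw [Bool.eq_iff_iff, List.all_eq_true, List.all_eq_true]
  exact forall_congr' fun i => by rw [hL i, hM i]

theorem lp_app (b : Fin 4 → kk) (L M : List (Fin 4)) : lp b (L ++ M) = lp b L * lp b M := by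
  rw [lp, lp, lp, List.map_append, List.prod_append]

theorem ev_x0 (b : Fin 4 → kk) (i : Fin 4) : eval b (x i) = b i := eval_X i
theorem hat_lp (i : Fin 4) : ∃ L : List (Fin 4), 1 ≤ L.length ∧ ∀ b, eval b (hat i) = lp b L := by
  have h : ∀ j k l : Fin 4, ∀ b : Fin 4 → kk, eval b (x j * x k * x l) = lp b [j, k, l] := by
    intro j k l b
    rw [map_mul, map_mul, ev_x0, ev_x0, ev_x0, lp]
    simp [mul_assoc]
  fin_cases i
  · exact ⟨[1, 2, 3], by simp, fun b => by rw [← h, ← hat0]; rfl⟩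
  · exact ⟨[0, 2, 3], by simp, fun b => by rw [← h, ← hat1]; rfl⟩
  · exact ⟨[0, 1, 3], by simp, fun b => by rw [← h, ← hat2]; rfl⟩
  · exact ⟨[0, 1, 2], by simp, fun b => by rw [← h, ← hat3]; rfl⟩

theorem w6_lp (D : List (Fin 6)) : ∃ L : List (Fin 4), ∀ b, eval b (w6 D 1) = lp b L := by
  induction D with
  | nil => exact ⟨[], fun b => by rw [w6_nil, map_one]; rfl⟩
  | cons d D ih =>
    obtain ⟨L, hL⟩ := ih
    refine ⟨[(pr d).1, (pr d).2] ++ L, fun b => ?_⟩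
    rw [w6_cons, map_mul, map_pow, hL, kk_sq, lp_app, pp, map_mul, ev_x0, ev_x0]
    congr 1
    simp [lp]

theorem adj {s r k : ℕ} (hr : 1 ≤ r) {p : P4} (h : IsW2 (s + 1) (r + 1) k p) :
    ∃ q, q ∈ Low ∧ q ∈ homog (NN (r + 2) s) ∧ ∀ B, E1 s r B q = E1 s r B p := by
  obtain ⟨L, i, D, hL, hD, rfl⟩ := h.tail
  obtain ⟨M1, h1, e1⟩ := hat_lp i
  obtain ⟨M2, e2⟩ := w6_lp D
  have hs := sup_mask (M1 ++ M2)
  obtain ⟨D', hD', sD'⟩ := ex_list (k := r + 3) (pc_pos hs (by simp; omega)) ((pc_le_n _ _).trans (by omega))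
  have ht : hat i * (w6 D 1) ^ 2 ∈ homog (sp (r + 3)) := tail_homog i hD
  refine ⟨w3 L (w1 D' 1), w3_low L ?_, ?_, fun B => ?_⟩
  · cases D' with
    | nil => simp at hD'
    | cons j D' => rw [w1_cons]; exact x_Low _ _
  · rw [← hL]
    refine w3_homog ?_ L
    have := w1_homog D'
    rwa [hD'] at this
  · rw [E1_word B hL hD', E1_tail B hL, ev_pure B ht, map_mul, map_pow, e1, e2, kk_sq, ← lp_app]
    rw [lp_sup _ sD' hs]

def par (F : ℕ) : List ℕ → Bool
  | [] => false
  | k :: l => (k &&& F == k) ^^ par F l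

theorem f2_gen {s r : ℕ} (hs : 1 ≤ s) (hr : 2 ≤ r) (K : List ℕ) (hK : K.all (ok2 2 3) = true) :
    ∃ f ∈ homog (NN (r + 2) s), (∀ B, E1 s r B f = 0) ∧ ∀ u v w, E2 s r (mat u v w) f = tk (par (F2c u v w) K) := by
  induction K with
  | nil => exact ⟨0, zero_mem _, fun B => map_zero _, fun u v w => map_zero _⟩
  | cons k K ih =>
    rw [List.all_cons, Bool.and_eq_true] at hK
    obtain ⟨f, hf, h1, h2⟩ := ih hK.2
    obtain ⟨hk, hw⟩ := ok2_w (a := s + 1) (b := r + 1) hK.1 (by omega) (by omega)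
    obtain ⟨q, q1, q2, q3⟩ := adj (by omega) hw
    refine ⟨v2 (s + 1) (r + 1) k + q + f, add_mem (add_mem hw.homog q2) hf, fun B => ?_, fun u v w => ?_⟩
    · rw [map_add, map_add, h1, q3, add_zero, CharTwo.add_self_eq_zero]
    · rw [map_add, map_add, h2, E2_low s r _ q1, add_zero, E2_code hk hw, par, tk_xor]

theorem f1_gen {s r : ℕ} (hs : 3 ≤ s) (hr : 2 ≤ r) (K : List ℕ) (hK : K.all (ok1 3 4) = true) :
    ∃ f ∈ homog (NN (r + 2) s), f ∈ Low ∧ ∀ u v w, u < 16 → E1 s r (mat u v w) f = tk (par (F1c u v w) K) := by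
  induction K with
  | nil => exact ⟨0, zero_mem _, zero_mem _, fun u v w _ => map_zero _⟩
  | cons k K ih =>
    rw [List.all_cons, Bool.and_eq_true] at hK
    obtain ⟨f, hf, h1, h2⟩ := ih hK.2
    obtain ⟨hk, hk2, hw⟩ := ok1_w (a := s) (b := r + 3) hK.1 (by omega) (by omega)
    have hw2 := hw
    obtain ⟨L, D, hL, hD, -, -, e⟩ := hw
    refine ⟨v1 s (r + 3) k + f, add_mem ?_ hf, add_mem ?_ h1, fun u v w hu => ?_⟩
    · rw [e, ← hL]
      refine w3_homog ?_ L
      have := w1_homog D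
      rwa [hD] at this
    · rw [e]
      refine w3_low L ?_
      cases D with
      | nil => simp at hD
      | cons j D => rw [w1_cons]; exact x_Low _ _
    · rw [map_add, h2 u v w hu, E1_code hu hk hw2 hk2, par, tk_xor]

def K2 : List ℕ := [72, 80, 88, 96, 98, 104, 112, 114, 120, 130, 132, 134, 135, 149, 160, 162, 164, 166, 194, 196, 198, 203, 224, 240, 257, 260, 261, 272, 273, 275, 276, 277, 288, 297, 321, 336, 340, 341, 344, 386, 388, 425, 428, 436, 513, 514, 515, 520, 521, 522, 523, 524, 528, 580, 584, 585, 616, 632, 642, 645, 648, 651, 661, 682, 769, 771, 772, 793, 816]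
def K1 : List ℕ := [66, 68, 70, 72, 74, 76, 78, 79, 129, 132, 133, 136, 137, 139, 140, 141, 194, 196, 197, 200, 204, 257, 258, 259, 260, 263, 264, 265, 266, 267, 322, 328, 329, 330, 385, 392, 393, 398, 451, 456, 460, 513, 514, 515, 516, 517, 518, 519, 522, 525, 578, 580, 582, 583, 585, 590, 641, 644, 645, 654, 705, 708, 769, 770, 771, 834, 836, 842, 846, 897, 898, 903, 905, 908, 910]
set_option maxRecDepth 1000000 in
theorem K_ok : (K2.all (ok2 2 3) && K1.all (ok1 3 4)) = true := by decide +kernel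
set_option maxRecDepth 1000000 in
theorem K_par : (frcL (reps2.map G2) fun l => l.all fun F => par F K2) = true := by decide +kernel
set_option maxRecDepth 1000000 in
theorem K_par1 : (frcL (reps1.map G1) fun l => l.all fun F => par F K1) = true := by decide +kernel

theorem f2_ex {s r : ℕ} (hs : 1 ≤ s) (hr : 2 ≤ r) :
    ∃ f ∈ homog (NN (r + 2) s), (∀ B, E1 s r B f = 0) ∧ ∀ B, Ind B → E2 s r B f = 1 := by
  obtain ⟨f, h1, h2, h3⟩ := f2_gen hs hr K2 (Bool.and_eq_true _ _ ▸ K_ok).1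
  refine ⟨f, h1, h2, fun B hB => ?_⟩
  obtain ⟨u, v, w, -, rfl, -, hm⟩ := Ind_codes hB
  have := K_par
  rw [frcL_eq] at this
  rw [h3, List.all_eq_true.1 this _ hm]; rfl

theorem f1_ex {s r : ℕ} (hs : 3 ≤ s) (hr : 2 ≤ r) :
    ∃ f ∈ homog (NN (r + 2) s), (∀ B, E2 s r B f = 0) ∧ ∀ B, Ind B → E1 s r B f = 1 := by
  obtain ⟨f, h1, h2, h3⟩ := f1_gen hs hr K1 (Bool.and_eq_true _ _ ▸ K_ok).2
  refine ⟨f, h1, fun B => E2_low s r B h2, fun B hB => ?_⟩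
  obtain ⟨u, v, w, hu, rfl, hm, -⟩ := Ind_codes hB
  have := K_par1
  rw [frcL_eq] at this
  rw [h3 _ _ _ hu, List.all_eq_true.1 this _ hm]; rfl

end Pf

namespace Pf

/-! vanishing for small s -/
def vv : Fin 7 → ℕ := ![2, 2, 2, 4, 4, 6, 6]
def ww : Fin 7 → ℕ := ![4, 8, 12, 8, 10, 8, 10]
def T7 (s r : ℕ) : P4 →ₗ[kk] kk := ∑ a : Fin 7, E1 s r (mat 1 (vv a) (ww a))
theorem T7_ok : ∀ a : Fin 7, okI 1 (vv a) (ww a) = true := by decide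
theorem T7_lm : ∀ i j : Fin 4, ∑ a : Fin 7, tk ((lm 1 (vv a) (ww a)).testBit i.val) * tk ((lm 1 (vv a) (ww a)).testBit j.val) = 0 := by decide

theorem T7_lp {L : List (Fin 4)} (h1 : 1 ≤ L.length) (h2 : L.length ≤ 2) : ∑ a : Fin 7, lp (ell (mat 1 (vv a) (ww a))) L = 0 := by
  obtain ⟨i, j, h⟩ : ∃ i j, ∀ φ : Fin 4 → kk, lp φ L = φ i * φ j := by
    match L, h1, h2 with
    | [i], _, _ => exact ⟨i, i, fun φ => by rw [← sq, kk_sq]; simp [lp]⟩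
    | [i, j], _, _ => exact ⟨i, j, fun φ => by simp [lp]⟩
  rw [← T7_lm i j]
  refine Finset.sum_congr rfl fun a _ => ?_
  rw [h, ell_mat, ell_mat]

theorem T7_zero {s r : ℕ} (h1 : 1 ≤ s) (h2 : s ≤ 2) {f : P4} (hf : f ∈ V31 s (r + 3)) : T7 s r f = 0 := by
  have : V31 s (r + 3) ≤ LinearMap.ker (T7 s r) := by
    unfold V31
    refine sup_le ?_ (Submodule.span_le.2 ?_)
    · intro f hf
      rw [LinearMap.mem_ker, T7, LinearMap.sum_apply]
      exact Finset.sum_eq_zero fun a _ => E1_hit s r _ (HitO_hit hf)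
    · rintro _ ⟨L, D, hL, hD, rfl⟩
      rw [SetLike.mem_coe, LinearMap.mem_ker, T7, LinearMap.sum_apply]
      have e : ∀ a : Fin 7, E1 s r (mat 1 (vv a) (ww a)) (w3 L (w1 D 1)) =
          lp (ell (mat 1 (vv a) (ww a))) L * lp (fun i => tk (Nat.testBit 1 i.val)) D := fun a => E1_word _ hL hD
      rw [Finset.sum_congr rfl fun a _ => e a, ← Finset.sum_mul, T7_lp (by omega) (by omega), zero_mul]
  exact this hf

theorem T7_const {s r : ℕ} {f : P4} {c : kk} (h : ∀ B, Ind B → E1 s r B f = c) : T7 s r f = c := by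
  rw [T7, LinearMap.sum_apply, Finset.sum_congr rfl fun a _ => h _ (okI_ind (T7_ok a))]
  have : ∀ c : kk, ∑ _a : Fin 7, c = c := by decide
  exact this c

/-! invariants -/
theorem B0_ind : Ind B0 := ⟨1, isUnit_one, by rw [Matrix.one_mul]⟩

theorem subst_homog {n : ℕ} (M) {f : P4} (hf : f ∈ homog n) : substM M f ∈ homog n := by
  have := IsHomogeneous.aeval (m := n) (n := 1) (φ := f) hf (fun i => ∑ j, M i j • (X j : P4)) fun i =>
    IsHomogeneous.sum _ _ _ fun j _ => (homogeneousSubmodule (Fin 4) kk 1).smul_mem _ (isHomogeneous_X kk j)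
  rw [one_mul] at this
  exact this

theorem mem_invPre {n : ℕ} {f : P4} : f ∈ invPre n glSet ↔ f ∈ homog n ∧ ∀ M, IsUnit M → substM M f - f ∈ hitSub n := by
  rw [invPre, Submodule.mem_inf, Submodule.mem_iInf]
  refine and_congr_right fun _ => forall_congr' fun M => ?_
  rw [Submodule.mem_iInf]
  rfl

theorem hit_of {s r : ℕ} (hs : 1 ≤ s) (hr : 2 ≤ r) {f : P4} (hf : f ∈ homog (NN (r + 2) s))
    (h1 : ∀ B, Ind B → E1 s r B f = 0) (h2 : ∀ B, Ind B → E2 s r B f = 0) : f ∈ hitSub (NN (r + 2) s) := by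
  rw [hitSub_iff hf]
  exact sep1 hs hr hf (sep2 hs hr hf fun q hq => h2 _ (reps2_ind hq)) fun q hq => h1 _ (reps1_ind hq)

theorem hit_E {n s r : ℕ} {f : P4} (hf : f ∈ hitSub n) (B) : E1 s r B f = 0 ∧ E2 s r B f = 0 :=
  ⟨E1_hit s r B (hitSub_hit n hf), E2_low s r B (Hit_Low (hitSub_hit n hf))⟩

theorem inv_const {n s r : ℕ} {f : P4} (hf : f ∈ invPre n glSet) (B) (hB : Ind B) :
    E1 s r B f = E1 s r B0 f ∧ E2 s r B f = E2 s r B0 f := by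
  obtain ⟨M, hM, rfl⟩ := hB
  have h := hit_E (s := s) (r := r) ((mem_invPre.1 hf).2 M hM) B0
  rw [map_sub, map_sub, E1_subst, E2_subst, sub_eq_zero, sub_eq_zero] at h
  exact h

theorem inv_of {s r : ℕ} (hs : 1 ≤ s) (hr : 2 ≤ r) {f : P4} (hf : f ∈ homog (NN (r + 2) s)) {c1 c2 : kk}
    (h1 : ∀ B, Ind B → E1 s r B f = c1) (h2 : ∀ B, Ind B → E2 s r B f = c2) : f ∈ invPre (NN (r + 2) s) glSet := by
  refine mem_invPre.2 ⟨hf, fun M hM => hit_of hs hr (sub_mem (subst_homog M hf) hf) (fun B hB => ?_) fun B hB => ?_⟩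
  · rw [map_sub, E1_subst, h1 _ (hB.mul hM), h1 _ hB, sub_self]
  · rw [map_sub, E2_subst, h2 _ (hB.mul hM), h2 _ hB, sub_self]

theorem Qmk_zero {n : ℕ} {f : P4} (hf : f ∈ homog n) : Qmk n f = 0 ↔ f ∈ hitSub n := by
  rw [Qmk, LinearMap.comp_apply, Submodule.mkQ_apply, Submodule.Quotient.mk_eq_zero, Submodule.mem_comap]
  have : (homog n).subtype (toHomog n f) = f := by
    have := comp_homog (e := n) hf
    rw [if_pos rfl] at this
    exact this
  rw [this]

theorem fin_one {s r : ℕ} (hs : 1 ≤ s) (hs2 : s ≤ 2) (hr : 2 ≤ r) : Module.finrank kk ↥(QInv (NN (r + 2) s) glSet) = 1 := by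
  obtain ⟨f2, h2, e1, e2⟩ := f2_ex hs hr
  have hn : Qmk (NN (r + 2) s) f2 ≠ 0 := by
    intro h
    have := (hit_E (s := s) (r := r) ((Qmk_zero h2).1 h) B0).2
    rw [e2 _ B0_ind] at this
    exact one_ne_zero this
  have hi : f2 ∈ invPre (NN (r + 2) s) glSet := inv_of hs hr h2 (fun B _ => e1 B) e2
  have : QInv (NN (r + 2) s) glSet = Submodule.span kk {Qmk (NN (r + 2) s) f2} := by
    refine le_antisymm ?_ (Submodule.span_le.2 (by rintro _ rfl; exact ⟨f2, hi, rfl⟩))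
    rintro _ ⟨f, hf, rfl⟩
    have hc := inv_const (s := s) (r := r) hf
    have hg : f - E2 s r B0 f • f2 ∈ homog (NN (r + 2) s) := sub_mem (mem_invPre.1 hf).1 (Submodule.smul_mem _ _ h2)
    have g2 : ∀ B, Ind B → E2 s r B (f - E2 s r B0 f • f2) = 0 := fun B hB => by
      rw [map_sub, map_smul, e2 B hB, (hc B hB).2, smul_eq_mul, mul_one, sub_self]
    have g1 : ∀ B, Ind B → E1 s r B (f - E2 s r B0 f • f2) = E1 s r B0 f := fun B hB => by
      rw [map_sub, map_smul, e1 B, (hc B hB).1, smul_zero, sub_zero]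
    have hl := sep2 hs hr hg fun q hq => g2 _ (reps2_ind hq)
    have g0 : E1 s r B0 f = 0 := (T7_const g1).symm.trans (T7_zero hs hs2 (low_V31 hr hg hl))
    rw [g0] at g1
    have := (Qmk_zero hg).2 (hit_of hs hr hg g1 g2)
    rw [map_sub, map_smul, sub_eq_zero] at this
    rw [this]
    exact Submodule.smul_mem _ _ (Submodule.mem_span_singleton_self _)
  rw [this, finrank_span_singleton hn]

theorem fin_two {s r : ℕ} (hs : 3 ≤ s) (hr : 2 ≤ r) : Module.finrank kk ↥(QInv (NN (r + 2) s) glSet) = 2 := by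
  have hs1 : 1 ≤ s := by omega
  obtain ⟨f2, h2, e1, e2⟩ := f2_ex hs1 hr
  obtain ⟨f1, h1, d2, d1⟩ := f1_ex hs hr
  have i2 : f2 ∈ invPre (NN (r + 2) s) glSet := inv_of hs1 hr h2 (fun B _ => e1 B) e2
  have i1 : f1 ∈ invPre (NN (r + 2) s) glSet := inv_of hs1 hr h1 d1 (fun B _ => d2 B)
  have hli : LinearIndependent kk ![Qmk (NN (r + 2) s) f1, Qmk (NN (r + 2) s) f2] := by
    rw [LinearIndependent.pair_iff]
    intro a b hab
    rw [← map_smul, ← map_smul, ← map_add, Qmk_zero (add_mem (Submodule.smul_mem _ _ h1) (Submodule.smul_mem _ _ h2))] at hab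
    have := hit_E (s := s) (r := r) hab B0
    rw [map_add, map_add, map_smul, map_smul, map_smul, map_smul, e1, d2, e2 _ B0_ind, d1 _ B0_ind] at this
    simpa using this
  have : QInv (NN (r + 2) s) glSet = Submodule.span kk (Set.range ![Qmk (NN (r + 2) s) f1, Qmk (NN (r + 2) s) f2]) := by
    rw [Matrix.range_cons_cons_empty]
    refine le_antisymm ?_ (Submodule.span_le.2 (by
      rintro _ (rfl | rfl)
      · exact ⟨f1, i1, rfl⟩
      · exact ⟨f2, i2, rfl⟩))
    rintro _ ⟨f, hf, rfl⟩
    have hc := inv_const (s := s) (r := r) hf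
    have hg : f - (E1 s r B0 f • f1 + E2 s r B0 f • f2) ∈ homog (NN (r + 2) s) :=
      sub_mem (mem_invPre.1 hf).1 (add_mem (Submodule.smul_mem _ _ h1) (Submodule.smul_mem _ _ h2))
    have := (Qmk_zero hg).2 (hit_of hs1 hr hg (fun B hB => by
        rw [map_sub, map_add, map_smul, map_smul, e1 B, d1 B hB, (hc B hB).1]; simp)
      (fun B hB => by
        rw [map_sub, map_add, map_smul, map_smul, e2 B hB, d2 B, (hc B hB).2]; simp))
    rw [map_sub, map_add, map_smul, map_smul, sub_eq_zero] at this
    rw [this, Submodule.mem_span_pair]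
    exact ⟨_, _, rfl⟩
  rw [this, finrank_span_eq_card hli]; rfl

end Pf

/-- In degree `n = 3(2^s-1) + 2^s(2^{t+1}-1) = 2^{s+t+1} + 2^{s+1} - 3` (`s ≥ 1`, `t ≥ 4`),
the space of `GL_4(F_2)`-invariants of `Q_n` has dimension `1` if `s ∈ {1,2}` and `2` if
`s ≥ 3`. -/
theorem statement_2 (s t n : ℕ) (hs : 1 ≤ s) (ht : 4 ≤ t)
    (hn : n = 3 * (2 ^ s - 1) + 2 ^ s * (2 ^ (t + 1) - 1)) :
    (s = 1 ∨ s = 2 → Module.finrank kk ↥(QInv n glSet) = 1) ∧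
    (3 ≤ s → Module.finrank kk ↥(QInv n glSet) = 2) := by
  obtain ⟨r, rfl⟩ := Nat.exists_eq_add_of_le ht
  have e : n = Pf.NN (r + 2 + 2) s := by rw [hn, Pf.NN_eq, show 4 + r = r + 2 + 2 by omega]
  rw [e]
  exact ⟨fun h => Pf.fin_one hs (by omega) (by omega), fun h => Pf.fin_two h (by omega)⟩


end
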